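/- arXiv:2401.10615 — 2 statements merged into one kernel-verified Lean document; each statement's English description precedes it below -/
import Mathlib

section
/- A closed curve γ in the plane avoiding a point a must self-intersect at least |I(γ,a)| - 1 times (counted with multiplicity), where I(γ,a) is the winding number of γ about a. -/
open Set

lemma wn_exists_log (f : ℝ × ℝ → ℂ) (hf : Continuous f) (h0 : ∀ x, f x ≠ 0) :
    ∃ g : ℝ × ℝ → ℂ, Continuous g ∧ ∀ x, Complex.exp (g x) = f x := by
  obtain ⟨F, ⟨-, hF⟩, -⟩ := Complex.isCoveringMap_exp.existsUnique_continuousMap_lifts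
    (⟨fun x => ⟨f x, h0 x⟩, by fun_prop⟩ : C(ℝ × ℝ, {z : ℂ // z ≠ 0})) (0, 0)
    (Complex.log (f (0, 0))) (by simp [Complex.exp_log (h0 _)])
  refine ⟨F, F.continuous, fun x => ?_⟩
  have := congrFun hF x
  simpa using congrArg Subtype.val this

lemma wn_log_const (u v : ℝ → ℂ) (hu : Continuous u) (hv : Continuous v) (c : ℂ) (hc : c ≠ 0)
    (h : ∀ s, Complex.exp (u s) = v s) (hs : ∀ s, v s * c ∈ Complex.slitPlane) (s t : ℝ) :
    u s - Complex.log (v s * c) = u t - Complex.log (v t * c) := by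
  refine Complex.isCoveringMap_exp.const_of_comp
    (g := fun s => u s - Complex.log (v s * c)) ?_ ?_ s t
  · exact hu.sub ((hv.mul continuous_const).clog hs)
  · intro a b
    have key : ∀ s, Complex.exp (u s - Complex.log (v s * c)) = c⁻¹ := by
      intro s
      have h1 : v s ≠ 0 := by rw [← h]; exact Complex.exp_ne_zero _
      rw [Complex.exp_sub, Complex.exp_log (mul_ne_zero h1 hc), h]
      field_simp
    simp [key]

lemma wn_slit_up (z : ℂ) (h0 : z ≠ 0) (h : 0 ≤ z.im) : z * (-Complex.I) ∈ Complex.slitPlane := by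
  rw [Complex.mem_slitPlane_iff]
  simp
  by_contra hh
  push Not at hh
  exact h0 (Complex.ext hh.2 (le_antisymm hh.1 h))

lemma wn_slit_down (z : ℂ) (h0 : z ≠ 0) (h : z.im ≤ 0) : z * Complex.I ∈ Complex.slitPlane := by
  rw [Complex.mem_slitPlane_iff]
  simp
  by_contra hh
  push Not at hh
  exact h0 (Complex.ext hh.2 (le_antisymm h hh.1))

/-- Two crossing paths meet: boundary winding argument. -/
lemma wn_core (f : ℝ × ℝ → ℂ) (hf : Continuous f) (h0 : ∀ x, f x ≠ 0)
    (a b : ℝ) (ha : 0 < a) (hb : 0 < b)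
    (h01 : f (0, 1) = -(a : ℂ)) (h11 : f (1, 1) = (b : ℂ))
    (htop : ∀ s, (f (s, 1)).im ≤ 0) (hbot : ∀ s, 0 ≤ (f (s, 0)).im)
    (hl : ∀ t, 0 ≤ (f (0, t)).im) (hr : ∀ t, 0 ≤ (f (1, t)).im) : False := by
  obtain ⟨g, hg, hgf⟩ := wn_exists_log f hf h0
  have e1 := wn_log_const (fun s => g (s, 1)) (fun s => f (s, 1)) (by fun_prop) (by fun_prop)
    Complex.I Complex.I_ne_zero (fun s => hgf _) (fun s => wn_slit_down _ (h0 _) (htop s)) 0 1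
  have e2 := wn_log_const (fun s => g (s, 0)) (fun s => f (s, 0)) (by fun_prop) (by fun_prop)
    (-Complex.I) (by simp) (fun s => hgf _) (fun s => wn_slit_up _ (h0 _) (hbot s)) 0 1
  have e3 := wn_log_const (fun s => g (0, s)) (fun s => f (0, s)) (by fun_prop) (by fun_prop)
    (-Complex.I) (by simp) (fun s => hgf _) (fun s => wn_slit_up _ (h0 _) (hl s)) 0 1
  have e4 := wn_log_const (fun s => g (1, s)) (fun s => f (1, s)) (by fun_prop) (by fun_prop)
    (-Complex.I) (by simp) (fun s => hgf _) (fun s => wn_slit_up _ (h0 _) (hr s)) 0 1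
  have l1 : ∀ x : ℝ, 0 < x → (Complex.log ((x : ℂ) * Complex.I)).im = Real.pi / 2 := by
    intro x hx
    rw [Complex.log_ofReal_mul hx Complex.I_ne_zero]; simp [Complex.log_I]
  have l2 : ∀ x : ℝ, 0 < x → (Complex.log ((x : ℂ) * -Complex.I)).im = -(Real.pi / 2) := by
    intro x hx
    rw [Complex.log_ofReal_mul hx (by simp)]; simp [Complex.log_neg_I]
  have m1 := l1 a ha
  have m2 := l2 a ha
  have m3 := l1 b hb
  have m4 := l2 b hb
  have c1 : -(a : ℂ) * Complex.I = a * -Complex.I := by ring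
  have c2 : -(a : ℂ) * -Complex.I = a * Complex.I := by ring
  simp only [h01, h11, c1, c2] at e1 e2 e3 e4
  have d1 := congrArg Complex.im e1
  have d2 := congrArg Complex.im e2
  have d3 := congrArg Complex.im e3
  have d4 := congrArg Complex.im e4
  simp only [Complex.sub_im, m1, m2, m3, m4] at d1 d2 d3 d4
  have := Real.pi_pos
  linarith

/-- Hopf's additivity lemma. -/
lemma wn_hopf (K : Set ℂ) (hK : IsPathConnected K) (hc : IsCompact K) (a b : ℝ) (ha : 0 < a)
    (hb : 0 < b) (hKa : ∀ x ∈ K, x + a ∉ K) (hKb : ∀ x ∈ K, x + b ∉ K) :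
    ∀ x ∈ K, x + (a + b : ℝ) ∉ K := by
  intro x hx hx'
  obtain ⟨m, hm, hmin⟩ := hc.exists_isMinOn hK.nonempty Complex.continuous_im.continuousOn
  obtain ⟨M, hM, hmax⟩ := hc.exists_isMaxOn hK.nonempty Complex.continuous_im.continuousOn
  rw [isMinOn_iff] at hmin
  rw [isMaxOn_iff] at hmax
  have hT : ∀ c : ℂ, IsPathConnected ((fun z => z + c) '' K) := fun c =>
    hK.image (by fun_prop)
  have hU := hK.union (hT (a + b : ℝ)) ⟨x + (a + b : ℝ), hx', mem_image_of_mem _ hx⟩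
  obtain ⟨P, hP⟩ := hU.joinedIn M (Or.inl hM) (M + (a + b : ℝ))
    (Or.inr (mem_image_of_mem _ hM))
  obtain ⟨Q, hQ⟩ := (hT a).joinedIn (m + a) (mem_image_of_mem _ hm) (M + a) (mem_image_of_mem _ hM)
  have hP' : ∀ s : ℝ, P.extend s ∈ K ∪ (fun z => z + ((a + b : ℝ) : ℂ)) '' K := by
    intro s
    exact hP _
  have hQ' : ∀ s : ℝ, Q.extend s ∈ (fun z => z + (a : ℂ)) '' K := fun s => hQ _
  have iP : ∀ s : ℝ, m.im ≤ (P.extend s).im ∧ (P.extend s).im ≤ M.im := by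
    intro s
    rcases hP' s with h | ⟨y, hy, h⟩
    · exact ⟨hmin _ h, hmax _ h⟩
    · rw [← h]; simpa using ⟨hmin _ hy, hmax _ hy⟩
  have iQ : ∀ s : ℝ, m.im ≤ (Q.extend s).im ∧ (Q.extend s).im ≤ M.im := by
    intro s
    obtain ⟨y, hy, h⟩ := hQ' s
    rw [← h]; simpa using ⟨hmin _ hy, hmax _ hy⟩
  refine wn_core (fun p => P.extend p.1 - Q.extend p.2) (by fun_prop) ?_ a b ha hb
    (by simp) (by simp) ?_ ?_ ?_ ?_
  · rintro ⟨s, t⟩ h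
    have h := sub_eq_zero.1 h
    obtain ⟨y, hy, h2⟩ := hQ' t
    simp only at h h2
    rcases hP' s with h3 | ⟨w, hw, h3⟩
    · rw [h, ← h2] at h3; exact hKa _ hy h3
    · simp only at h3
      rw [h, ← h2] at h3
      apply hKb _ hw
      have : w + b = y := by push_cast at h3; linear_combination h3
      rwa [this]
  · intro s; have := iP s; simp; linarith
  · intro s; have := iP s; simp; linarith
  · intro s; have := iQ s; simp; linarith
  · intro s; have := iQ s; simp; linarith

lemma wn_chord (K : Set ℂ) (hK : IsPathConnected K) (hc : IsCompact K) (n : ℕ) (hn : 1 ≤ n)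
    (x : ℂ) (hx : x ∈ K) (hx' : x + n ∈ K) : ∃ y ∈ K, y + 1 ∈ K := by
  by_contra! h
  have key : ∀ n : ℕ, 1 ≤ n → ∀ x ∈ K, x + ((n : ℝ) : ℂ) ∉ K := by
    intro n hn
    induction n, hn using Nat.le_induction with
    | base => simpa using h
    | succ n hn ih =>
      have := wn_hopf K hK hc n 1 (by exact_mod_cast hn) one_pos ih (by simpa using h)
      simpa using this
  exact key n hn x hx (by simpa using hx')

lemma wn_chord' (η : ℝ → ℂ) (α β : ℝ) (hαβ : α ≤ β) (hη : ContinuousOn η (Icc α β)) (n : ℤ)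
    (hn : 2 ≤ n.natAbs) (h : η β = η α + n) :
    ∃ s t : ℝ, ∃ k : ℤ, α ≤ s ∧ s < t ∧ t ≤ β ∧ (s, t) ≠ (α, β) ∧ η t = η s + k ∧ k.natAbs = 1 := by
  have hK : IsPathConnected (η '' Icc α β) :=
    ((convex_Icc α β).isPathConnected (nonempty_Icc.2 hαβ)).image' hη
  have hc : IsCompact (η '' Icc α β) := isCompact_Icc.image_of_continuousOn hη
  have mα : η α ∈ η '' Icc α β := mem_image_of_mem _ (left_mem_Icc.2 hαβ)
  have mβ : η β ∈ η '' Icc α β := mem_image_of_mem _ (right_mem_Icc.2 hαβ)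
  have : ∃ y ∈ η '' Icc α β, y + 1 ∈ η '' Icc α β := by
    rcases Int.natAbs_eq n with hh | hh
    · refine wn_chord _ hK hc n.natAbs (by omega) _ mα ?_
      convert mβ
      rw [h]; congr 1; conv_rhs => rw [hh]
      simp
    · refine wn_chord _ hK hc n.natAbs (by omega) _ mβ ?_
      convert mα
      have : (n : ℂ) = -((n.natAbs : ℤ) : ℂ) := by rw [← Int.cast_neg, ← hh]
      rw [h, this]; simp
  obtain ⟨y, ⟨u, hu, rfl⟩, v, hv, huv⟩ := this
  have two : ∀ k : ℤ, k.natAbs = 1 → η β ≠ η α + k := by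
    intro k hk hh
    rw [h] at hh
    have : n = k := by exact_mod_cast add_left_cancel hh
    omega
  rcases lt_trichotomy u v with hlt | heq | hlt
  · have e : η v = η u + (1 : ℤ) := by simpa using huv
    refine ⟨u, v, 1, hu.1, hlt, hv.2, ?_, e, rfl⟩
    intro hp
    obtain ⟨rfl, rfl⟩ := Prod.mk.inj hp
    exact two 1 rfl e
  · subst heq; simp at huv
  · have e : η u = η v + (-1 : ℤ) := by rw [huv]; simp
    refine ⟨v, u, -1, hv.1, hlt, hu.2, ?_, e, rfl⟩
    intro hp
    obtain ⟨rfl, rfl⟩ := Prod.mk.inj hp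
    exact two _ rfl e

/-- Self-intersections of the projected curve. -/
def wnS (η : ℝ → ℂ) (α β : ℝ) : Set (ℝ × ℝ) :=
  {p | α ≤ p.1 ∧ p.1 < p.2 ∧ p.2 ≤ β ∧ (p.1, p.2) ≠ (α, β) ∧ ∃ k : ℤ, η p.2 = η p.1 + k}

lemma wn_main (N : ℕ) : ∀ (η : ℝ → ℂ) (α β : ℝ) (n : ℤ), α ≤ β → ContinuousOn η (Icc α β) →
    η β = η α + n → (wnS η α β).encard ≤ N → n.natAbs ≤ N + 1 := by
  induction N with
  | zero =>
    intro η α β n hαβ hη h hS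
    by_contra hn
    obtain ⟨s, t, k, h1, h2, h3, h4, h5, h6⟩ := wn_chord' η α β hαβ hη n (by omega) h
    have : wnS η α β = ∅ := by simpa using hS
    have h7 : (s, t) ∈ wnS η α β := ⟨h1, h2, h3, h4, k, h5⟩
    simp [this] at h7
  | succ N ih =>
    intro η α β n hαβ hη h hS
    by_cases hn : n.natAbs < 2
    · omega
    obtain ⟨s, t, k, h1, h2, h3, h4, h5, h6⟩ := wn_chord' η α β hαβ hη n (by omega) h
    have h7 : (s, t) ∈ wnS η α β := ⟨h1, h2, h3, h4, k, h5⟩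
    let φ : ℝ → ℝ := fun x => if x ≤ s then x else x + (t - s)
    let ζ : ℝ → ℂ := fun x => if x ≤ s then η x else η (x + (t - s)) - k
    have φ1 : ∀ x, x ≤ s → φ x = x := fun x hx => if_pos hx
    have φ2 : ∀ x, s < x → φ x = x + (t - s) := fun x hx => if_neg (not_le.2 hx)
    have hmono : StrictMono φ := by
      intro x y hxy
      rcases le_or_gt x s with hx | hx <;> rcases le_or_gt y s with hy | hy
      · rwa [φ1 x hx, φ1 y hy]
      · rw [φ1 x hx, φ2 y hy]; linarith
      · linarith
      · rw [φ2 x hx, φ2 y hy]; linarith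
    have hζφ : ∀ x, ∃ j : ℤ, ζ x = η (φ x) + j := by
      intro x
      rcases le_or_gt x s with hx | hx
      · exact ⟨0, by simp [ζ, φ, hx]⟩
      · exact ⟨-k, by simp [ζ, φ, not_le.2 hx]; ring⟩
    set β' := β - (t - s) with hβ'
    have hsβ' : s ≤ β' := by linarith
    have hζα : ζ α = η α := if_pos h1
    have hζβ : ζ β' = η β - k := by
      rcases eq_or_lt_of_le hsβ' with he | hlt
      · have : t = β := by linarith
        have e : ζ β' = η β' := if_pos he.ge
        rw [e, ← he, ← this, h5]; ring
      · have e : ζ β' = η (β' + (t - s)) - k := if_neg (not_le.2 hlt)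
        rw [e]; congr 2; ring
    have hφβ : s < β' → φ β' = β := fun hh => by rw [φ2 _ hh]; ring
    have hζc : ContinuousOn ζ (Icc α β') := by
      have hu : Icc α β' = Icc α s ∪ Icc s β' := (Icc_union_Icc_eq_Icc h1 hsβ').symm
      rw [hu]
      apply ContinuousOn.union_of_isClosed _ _ isClosed_Icc isClosed_Icc
      · refine (hη.mono (Icc_subset_Icc le_rfl (by linarith))).congr ?_
        intro x hx
        exact if_pos hx.2
      · have : ContinuousOn (fun x => η (x + (t - s)) - k) (Icc s β') := by
          refine ContinuousOn.sub (hη.comp (by fun_prop) ?_) continuousOn_const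
          intro x hx
          have h8 := hx.1
          have h9 := hx.2
          exact ⟨by linarith, by linarith⟩
        refine this.congr ?_
        intro x hx
        rcases eq_or_lt_of_le hx.1 with he | hlt
        · subst he
          have e : ζ s = η s := if_pos le_rfl
          rw [e]
          have : s + (t - s) = t := by ring
          simp only [this, h5]; ring
        · exact if_neg (not_le.2 hlt)
    have hsub : (fun p : ℝ × ℝ => (φ p.1, φ p.2)) '' (wnS ζ α β') ⊆ wnS η α β \ {(s, t)} := by
      rintro _ ⟨⟨x, y⟩, ⟨g1, g2, g3, g4, j, g5⟩, rfl⟩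
      simp only at g1 g2 g3 g4 g5
      have hne : ∀ x, φ x ≠ t := by
        intro x
        rcases le_or_gt x s with hx | hx
        · rw [φ1 x hx]; linarith
        · rw [φ2 x hx]; linarith
      have hle : φ y ≤ β := by
        rcases le_or_gt y s with hx | hx
        · rw [φ1 y hx]; linarith
        · rw [φ2 y hx]; linarith
      have hα : φ α = α := φ1 α h1
      refine ⟨⟨?_, hmono g2, hle, ?_, ?_⟩, ?_⟩
      · exact hα ▸ hmono.monotone g1
      · intro hp
        obtain ⟨p1, p2⟩ := Prod.mk.inj hp
        simp only at p1 p2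
        have hxα : x = α := hmono.injective (p1.trans hα.symm)
        rcases eq_or_lt_of_le hsβ' with he | hlt
        · have : t = β := by linarith
          exact hne y (p2.trans this.symm)
        · have : y = β' := hmono.injective (p2.trans (hφβ hlt).symm)
          exact g4 (by rw [hxα, this])
      · obtain ⟨j1, e1⟩ := hζφ x
        obtain ⟨j2, e2⟩ := hζφ y
        refine ⟨j + j1 - j2, ?_⟩
        rw [e1, e2] at g5
        push_cast
        linear_combination g5
      · intro hp
        exact hne y (Prod.mk.inj hp).2
    have hinj : Function.Injective (fun p : ℝ × ℝ => (φ p.1, φ p.2)) := by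
      rintro ⟨x, y⟩ ⟨x', y'⟩ hp
      obtain ⟨p1, p2⟩ := Prod.mk.inj hp
      exact Prod.ext (hmono.injective p1) (hmono.injective p2)
    have hcard : (wnS ζ α β').encard ≤ N := by
      rw [← hinj.encard_image]
      refine (encard_le_encard hsub).trans ?_
      have e := encard_sdiff_singleton_add_one h7
      rw [← e] at hS
      push_cast at hS
      exact (ENat.add_le_add_iff_right ENat.one_ne_top).1 hS
    have := ih ζ α β' (n - k) (by linarith) hζc (by rw [hζα, hζβ, h]; push_cast; ring) hcard
    omega

theorem winding_number_forces_self_intersections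
    (γ : ℝ → ℂ) (a : ℂ) (r θ : ℝ → ℝ)
    (hγ : ContinuousOn γ (Icc 0 1))
    (hclosed : γ 0 = γ 1)
    (ha : ∀ t ∈ Icc (0:ℝ) 1, γ t ≠ a)
    (hr : ContinuousOn r (Icc 0 1))
    (hrpos : ∀ t ∈ Icc (0:ℝ) 1, 0 < r t)
    (hθ : ContinuousOn θ (Icc 0 1))
    (hpolar : ∀ t ∈ Icc (0:ℝ) 1,
      γ t = a + (r t : ℂ) * Complex.exp (2 * Real.pi * Complex.I * (θ t : ℂ)))
    (z : ℤ) (hz : θ 1 - θ 0 = (z : ℝ)) :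
    ((z.natAbs - 1 : ℕ) : ℕ∞) ≤
      {p : ℝ × ℝ | p.1 ∈ Icc (0:ℝ) 1 ∧ p.2 ∈ Icc (0:ℝ) 1 ∧ p.1 < p.2 ∧
        (p.1, p.2) ≠ ((0 : ℝ), (1 : ℝ)) ∧ γ p.1 = γ p.2}.encard := by
  have hnorm : ∀ t ∈ Icc (0:ℝ) 1, ‖γ t - a‖ = r t := by
    intro t ht
    have e : (2 * Real.pi * Complex.I * (θ t : ℂ)) = ((2 * Real.pi * θ t : ℝ) : ℂ) * Complex.I := by
      push_cast; ring
    rw [hpolar t ht, add_sub_cancel_left, norm_mul, e, Complex.norm_exp_ofReal_mul_I, mul_one,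
      Complex.norm_real, Real.norm_of_nonneg (hrpos t ht).le]
  have hr01 : r 1 = r 0 := by
    rw [← hnorm 0 (by simp), ← hnorm 1 (by simp), hclosed]
  let η : ℝ → ℂ := fun t => (θ t : ℂ) + (r t : ℂ) * Complex.I
  have hη : ContinuousOn η (Icc 0 1) :=
    (Complex.continuous_ofReal.comp_continuousOn hθ).add
      ((Complex.continuous_ofReal.comp_continuousOn hr).mul continuousOn_const)
  have h1 : η 1 = η 0 + z := by
    have : (θ 1 : ℂ) = θ 0 + z := by
      have : θ 1 = θ 0 + z := by linarith
      rw [this]; push_cast; rfl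
    simp only [η, hr01, this]; ring
  set S := {p : ℝ × ℝ | p.1 ∈ Icc (0:ℝ) 1 ∧ p.2 ∈ Icc (0:ℝ) 1 ∧ p.1 < p.2 ∧
        (p.1, p.2) ≠ ((0 : ℝ), (1 : ℝ)) ∧ γ p.1 = γ p.2} with hS
  have hsub : wnS η 0 1 ⊆ S := by
    rintro ⟨x, y⟩ ⟨g1, g2, g3, g4, k, g5⟩
    simp only at g1 g2 g3 g4 g5
    have mx : x ∈ Icc (0:ℝ) 1 := ⟨g1, by linarith⟩
    have my : y ∈ Icc (0:ℝ) 1 := ⟨by linarith, g3⟩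
    refine ⟨mx, my, g2, g4, ?_⟩
    have er : r y = r x := by simpa [η] using congrArg Complex.im g5
    have eθ : θ y = θ x + k := by simpa [η] using congrArg Complex.re g5
    simp only
    rw [hpolar x mx, hpolar y my, er, eθ]
    congr 2
    rw [Complex.exp_eq_exp_iff_exists_int]
    exact ⟨-k, by push_cast; ring⟩
  rcases eq_or_ne S.encard ⊤ with htop | hne
  · rw [htop]; exact le_top
  · obtain ⟨N, hN⟩ := ENat.ne_top_iff_exists.1 hne
    rw [← hN]
    have := wn_main N η 0 1 z zero_le_one hη h1 (hN ▸ encard_le_encard hsub)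
    exact_mod_cast (by omega : z.natAbs - 1 ≤ N)
end

section
/- Every non-homotopic plane multigraph on n ≥ 2 vertices has at most 4n - 4 edges. -/
open Set

/-- Parallel edges drawn as curves `c₀, c₁` from `φ vw.1` to `φ vw.2` are *homotopic* if
`c₀` can be continuously deformed into `c₁` within the plane punctured at all vertices
other than the two endpoints, keeping the endpoints fixed. -/
def EdgeHomotopic {n : ℕ} (φ : Fin n → ℂ) (vw : Fin n × Fin n) (c₀ c₁ : ℝ → ℂ) : Prop :=
  ∃ H : ℝ → ℝ → ℂ,
    ContinuousOn (fun p : ℝ × ℝ => H p.1 p.2) (Icc 0 1 ×ˢ Icc 0 1) ∧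
    (∀ x ∈ Icc (0:ℝ) 1, H x 0 = c₀ x) ∧
    (∀ x ∈ Icc (0:ℝ) 1, H x 1 = c₁ x) ∧
    (∀ t ∈ Icc (0:ℝ) 1, H 0 t = φ vw.1 ∧ H 1 t = φ vw.2) ∧
    (∀ x ∈ Icc (0:ℝ) 1, ∀ t ∈ Icc (0:ℝ) 1, ∀ v : Fin n,
      v ≠ vw.1 → v ≠ vw.2 → H x t ≠ φ v)

section
open Set

namespace NH

abbrev Pt := ℤ × ℤ
abbrev Dart := Pt × Fin 4

def step : Fin 4 → Pt := ![(1,0),(0,1),(-1,0),(0,-1)]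
def hd (d : Dart) : Pt := d.1 + step d.2
def rev (d : Dart) : Dart := (hd d, d.2 + 2)
def nd (h : Fin 4 → Bool) (i : Fin 4) : Fin 4 :=
  if h (i+1) then i+1 else if h i then i else if h (i+3) then i+3 else i+2
def nxt (H : Finset Dart) (d : Dart) : Dart :=
  (hd d, nd (fun j => decide ((hd d, j) ∈ H)) d.2)

lemma step_add_two (i : Fin 4) : step (i + 2) = - step i := by
  fin_cases i <;> decide

lemma step_ne (i : Fin 4) : step i ≠ 0 := by
  fin_cases i <;> decide

lemma step_inj {i j : Fin 4} (h : step i = step j) : i = j := by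
  revert h; revert i j; decide

@[simp] lemma hd_rev (d : Dart) : hd (rev d) = d.1 := by
  simp [hd, rev, step_add_two]

@[simp] lemma rev_fst (d : Dart) : (rev d).1 = hd d := rfl

@[simp] lemma rev_rev (d : Dart) : rev (rev d) = d := by
  obtain ⟨p, i⟩ := d
  have : i + 2 + 2 = i := by fin_cases i <;> decide
  simp [rev, hd, step_add_two, this]

lemma hd_ne (d : Dart) : hd d ≠ d.1 := by
  simp [hd, step_ne]

lemma rev_ne (d : Dart) : rev d ≠ d := by
  intro h; exact hd_ne d (congrArg Prod.fst h)

lemma rev_inj {d d' : Dart} (h : rev d = rev d') : d = d' := by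
  rw [← rev_rev d, h, rev_rev]

@[simp] lemma nxt_fst (H : Finset Dart) (d : Dart) : (nxt H d).1 = hd d := rfl

lemma dart_ext {d d' : Dart} (h : d.1 = d'.1) (h' : hd d = hd d') : d = d' := by
  obtain ⟨p, i⟩ := d
  obtain ⟨q, j⟩ := d'
  simp only [hd] at h h'
  subst h
  have := step_inj (add_left_cancel h')
  subst this; rfl

def Sym (H : Finset Dart) : Prop := ∀ d ∈ H, rev d ∈ H

lemma nd_mem : ∀ (h : Fin 4 → Bool) (i : Fin 4), h (i+2) = true → h (nd h i) = true := by
  decide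

lemma nd_inj : ∀ (h : Fin 4 → Bool) (i j : Fin 4), h (i+2) = true → h (j+2) = true →
    nd h i = nd h j → i = j := by
  decide

lemma nd_upd : ∀ (h : Fin 4 → Bool) (i j : Fin 4), h (i+2) = true → i + 2 ≠ j → h j = true →
    nd (fun k => if k = j then false else h k) i = if nd h i = j then nd h (j+2) else nd h i := by
  decide

lemma nxt_mem {H : Finset Dart} (hH : Sym H) {d : Dart} (hd' : d ∈ H) : nxt H d ∈ H := by
  have h1 := hH d hd'
  have := nd_mem (fun j => decide ((hd d, j) ∈ H)) d.2 (by simpa [rev] using h1)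
  simpa [nxt] using this

lemma nxt_inj {H : Finset Dart} (hH : Sym H) {d d' : Dart} (h1 : d ∈ H) (h2 : d' ∈ H)
    (h : nxt H d = nxt H d') : d = d' := by
  have e1 : hd d = hd d' := congrArg Prod.fst h
  have e2 := congrArg Prod.snd h
  have r1 := hH d h1
  have r2 := hH d' h2
  simp only [nxt, ← e1] at e2
  have := nd_inj (fun j => decide ((hd d, j) ∈ H)) d.2 d'.2 (by simpa [rev] using r1)
    (by simpa [rev, ← e1] using r2) e2
  apply rev_inj
  simp [rev, e1, this]

/-- remove a dart and its reverse -/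
def rem (H : Finset Dart) (x : Dart) : Finset Dart := H.filter (fun d => d ≠ x ∧ d ≠ rev x)

lemma mem_rem {H : Finset Dart} {x d : Dart} : d ∈ rem H x ↔ d ∈ H ∧ d ≠ x ∧ d ≠ rev x := by
  simp [rem]

lemma sym_rem {H : Finset Dart} (hH : Sym H) (x : Dart) : Sym (rem H x) := by
  intro d h
  rw [mem_rem] at h ⊢
  refine ⟨hH d h.1, ?_, ?_⟩
  · intro h'; apply h.2.2; rw [← h', rev_rev]
  · intro h'; exact h.2.1 (rev_inj h')

lemma card_rem {H : Finset Dart} (hH : Sym H) {x : Dart} (hx : x ∈ H) :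
    (rem H x).card + 2 = H.card := by
  have : rem H x = (H.erase x).erase (rev x) := by
    ext d; simp [mem_rem]; tauto
  rw [this]
  have h1 : rev x ∈ H.erase x := by simp [rev_ne, hH x hx]
  have h2 := Finset.card_erase_add_one h1
  have h3 := Finset.card_erase_add_one hx
  omega

lemma nxt_rem1 {H : Finset Dart} (hH : Sym H) {x d : Dart} (hx : x ∈ H) (h : d ∈ rem H x)
   (hp : hd d = x.1) :
    nxt (rem H x) d = if nxt H d = x then nxt H (rev x) else nxt H d := by
  obtain ⟨h1, h2, h3⟩ := mem_rem.1 h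
  have r1 := hH d h1
  have key := nd_upd (fun j => decide ((hd d, j) ∈ H)) d.2 x.2 (by simpa [rev] using r1)
    (by intro h'; apply h3; apply rev_inj; rw [rev_rev]; exact Prod.ext hp h')
    (by simpa [hp] using hx)
  have e : (fun j => decide ((hd d, j) ∈ rem H x)) =
      (fun k => if k = x.2 then false else decide ((hd d, k) ∈ H)) := by
    funext k
    by_cases hk : k = x.2
    · subst hk
      simp [mem_rem, hp]
    · have a1 : (hd d, k) ≠ x := fun h' => hk (congrArg Prod.snd h')
      have a2 : (hd d, k) ≠ rev x := by
        intro h'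
        have := congrArg Prod.fst h'
        simp only [rev_fst, hp] at this
        exact hd_ne x this.symm
      simp [mem_rem, hk, a1, a2]
  have e2 : nxt H d = x ↔ nd (fun j => decide ((hd d, j) ∈ H)) d.2 = x.2 := by
    constructor
    · intro h'; exact congrArg Prod.snd h'
    · intro h'; exact Prod.ext hp h'
  unfold nxt at e2 ⊢
  rw [e, key]
  simp only [e2]
  split_ifs
  · ext1
    · simp [hp]
    · simp only [hd_rev, hp]; rfl
  · rfl

lemma rem_rev (H : Finset Dart) (x : Dart) : rem H (rev x) = rem H x := by
  ext d; simp [mem_rem]; tauto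

lemma nxt_rem {H : Finset Dart} (hH : Sym H) {x d : Dart} (hx : x ∈ H) (h : d ∈ rem H x) :
    nxt (rem H x) d = if nxt H d = x then nxt H (rev x) else if nxt H d = rev x then nxt H x
      else nxt H d := by
  obtain ⟨h1, h2, h3⟩ := mem_rem.1 h
  by_cases hp : hd d = x.1
  · rw [nxt_rem1 hH hx h hp]
    have : nxt H d ≠ rev x := by
      intro h'; have := congrArg Prod.fst h'
      simp only [rev_fst, nxt_fst, hp] at this
      exact hd_ne x this.symm
    simp [this]
  have a1 : nxt H d ≠ x := by
    intro h'; have := congrArg Prod.fst h'; exact hp this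
  by_cases hq : hd d = hd x
  · have := nxt_rem1 hH (x := rev x) (d := d) (hH x hx) (by rwa [rem_rev]) hq
    rw [rem_rev] at this
    rw [this]; simp [a1]
  · have a2 : nxt H d ≠ rev x := by
      intro h'; have := congrArg Prod.fst h'; exact hq this
    simp only [a1, a2, if_false]
    unfold nxt
    congr 2
    funext j
    have b1 : (hd d, j) ≠ x := fun h' => hp (congrArg Prod.fst h')
    have b2 : (hd d, j) ≠ rev x := fun h' => hq (congrArg Prod.fst h')
    simp [mem_rem, b1, b2]

end NH
end

section
open Set
namespace NH

section Faces
variable {ι : Type} {K : ι → Type} [∀ c, Group (K c)] (g : ∀ c, Dart → K c)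
  (Bad : ι → Pt → Prop) (ar : Dart → ℤ)

structure GoodFace (H : Finset Dart) (f : List Dart) : Prop where
  mem : ∀ d ∈ f, d ∈ H
  nx : f.map (nxt H) = f.rotate 1
  area : 0 < (f.map ar).sum
  hol : ∀ c, (∀ d ∈ f, ¬ Bad c d.1) → (f.map (g c)).prod = 1

structure Fam (H : Finset Dart) (fs : List (List Dart)) : Prop where
  nodup : fs.flatten.Nodup
  good : ∀ f ∈ fs, GoodFace g Bad ar H f

def Inv (H : Finset Dart) (V : ℤ) : Prop :=
  ∃ fs, Fam g Bad ar H fs ∧ 2 * V - H.card + 2 * (fs.length : ℤ) ≥ 2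

variable {g Bad ar}

lemma GoodFace.nx_mem {H f} (h : GoodFace g Bad ar H f) {d} (hd : d ∈ f) : nxt H d ∈ f := by
  have : nxt H d ∈ f.map (nxt H) := List.mem_map_of_mem hd
  rw [h.nx] at this
  simpa using this

lemma GoodFace.prev {H f} (h : GoodFace g Bad ar H f) {d} (hd : d ∈ f) :
    ∃ d' ∈ f, nxt H d' = d := by
  have : d ∈ f.rotate 1 := by simpa using hd
  rw [← h.nx] at this
  simpa using this

lemma GoodFace.rotate {H f} (h : GoodFace g Bad ar H f) (k : ℕ) :
    GoodFace g Bad ar H (f.rotate k) where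
  mem := by intro d hd; exact h.mem d (by simpa using hd)
  nx := by rw [List.map_rotate, h.nx, List.rotate_rotate, List.rotate_rotate, add_comm]
  area := by
    have := (List.rotate_perm f k).map ar
    rw [this.sum_eq]; exact h.area
  hol := by
    intro c hc
    have := h.hol c (by intro d hd; exact hc d (by simpa using hd))
    rw [List.map_rotate]
    exact List.prod_rotate_eq_one_of_prod_eq_one this k

lemma GoodFace.keep {H f} (hH : Sym H) {x} (hx : x ∈ H) (h : GoodFace g Bad ar H f)
    (h1 : x ∉ f) (h2 : rev x ∉ f) : GoodFace g Bad ar (rem H x) f where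
  mem := by
    intro d hd
    refine mem_rem.2 ⟨h.mem d hd, ?_, ?_⟩ <;> rintro rfl <;> contradiction
  nx := by
    rw [← h.nx]
    apply List.map_congr_left
    intro d hd
    have hm : d ∈ rem H x := by
      refine mem_rem.2 ⟨h.mem d hd, ?_, ?_⟩ <;> rintro rfl <;> contradiction
    rw [nxt_rem hH hx hm]
    have := h.nx_mem hd
    have a1 : nxt H d ≠ x := by rintro rfl; contradiction
    have a2 : nxt H d ≠ rev x := by intro e; rw [e] at this; contradiction
    simp [a1, a2]
  area := h.area
  hol := h.hol

lemma Fam.extract {H fs} (h : Fam g Bad ar H fs) {x} (hx : x ∈ fs.flatten) :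
    ∃ u rest, Fam g Bad ar H ((x :: u) :: rest) ∧ rest.length + 1 = fs.length ∧
      (∀ y, y ∈ fs.flatten ↔ y ∈ x :: u ∨ y ∈ rest.flatten) := by
  obtain ⟨f, hf, hxf⟩ := List.mem_flatten.1 hx
  obtain ⟨i, hi, rfl⟩ := List.getElem_of_mem hxf
  have hr : ∃ u, f.rotate i = f[i] :: u := by
    rw [List.rotate_eq_drop_append_take hi.le, List.drop_eq_getElem_cons hi]
    exact ⟨_, rfl⟩
  obtain ⟨u, hu⟩ := hr
  have p1 : fs.Perm (f :: fs.erase f) := List.perm_cons_erase hf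
  have p2 : fs.flatten.Perm ((f[i] :: u) ++ (fs.erase f).flatten) := by
    refine p1.flatten.trans ?_
    rw [List.flatten_cons, ← hu]
    exact ((List.rotate_perm f i).symm).append_right _
  refine ⟨u, fs.erase f, ⟨?_, ?_⟩, ?_, ?_⟩
  · rw [List.flatten_cons]; exact p2.nodup_iff.1 h.nodup
  · intro f' hf'
    rcases List.mem_cons.1 hf' with rfl | h'
    · rw [← hu]; exact (h.good f hf).rotate i
    · exact h.good f' (List.mem_of_mem_erase h')
  · have := p1.length_eq; simpa using this.symm
  · intro y; rw [p2.mem_iff, List.mem_append]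

lemma Fam.keep {H fs} (hH : Sym H) {x} (hx : x ∈ H) (h : Fam g Bad ar H fs)
    (h1 : x ∉ fs.flatten) (h2 : rev x ∉ fs.flatten) : Fam g Bad ar (rem H x) fs where
  nodup := h.nodup
  good := by
    intro f hf
    refine (h.good f hf).keep hH hx ?_ ?_
    · intro h'; exact h1 (List.mem_flatten.2 ⟨f, hf, h'⟩)
    · intro h'; exact h2 (List.mem_flatten.2 ⟨f, hf, h'⟩)

lemma GoodFace.next_cons {H x u} (h : GoodFace g Bad ar H (x :: u)) :
    ∃ a u', u = a :: u' ∧ nxt H x = a ∧ u.map (nxt H) = u' ++ [x] := by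
  have := h.nx
  rcases u with _ | ⟨a, u'⟩
  · simp at this
    exact absurd (congrArg Prod.fst this) (hd_ne x)
  · refine ⟨a, u', rfl, ?_⟩
    simp only [List.map_cons, List.rotate_cons_succ, List.rotate_zero, List.cons_append] at this
    simp only [List.cons.injEq] at this
    exact ⟨this.1, by simpa using this.2⟩

/-- merging two faces -/
lemma GoodFace.merge {H x u w} (hH : Sym H) (hx : x ∈ H)
    (hg : ∀ c d, g c (rev d) = (g c d)⁻¹) (har : ∀ d, ar (rev d) = - ar d)
    (h1 : GoodFace g Bad ar H (x :: u)) (h2 : GoodFace g Bad ar H (rev x :: w))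
    (hn : ((x :: u) ++ (rev x :: w)).Nodup) : GoodFace g Bad ar (rem H x) (u ++ w) := by
  obtain ⟨a, u', rfl, ha, hu⟩ := h1.next_cons
  obtain ⟨b, w', rfl, hb, hw⟩ := h2.next_cons
  have n1 : ∀ d ∈ a :: u' ++ b :: w', d ≠ x ∧ d ≠ rev x := by
    intro d hd
    have hn' : (x :: rev x :: (a :: u' ++ b :: w')).Nodup := by
      refine (List.Perm.nodup_iff ?_).1 hn
      simp only [List.cons_append]
      refine List.Perm.cons _ ?_
      exact List.perm_middle (l₁ := a :: u')
    simp only [List.nodup_cons] at hn'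
    constructor
    · rintro rfl; exact hn'.1 (List.mem_cons_of_mem _ hd)
    · rintro rfl; exact hn'.2.1 hd
  have hmem : ∀ d ∈ a :: u' ++ b :: w', d ∈ rem H x := by
    intro d hd
    refine mem_rem.2 ⟨?_, n1 d hd⟩
    rcases List.mem_append.1 hd with h | h
    · exact h1.mem d (List.mem_cons_of_mem _ h)
    · exact h2.mem d (List.mem_cons_of_mem _ h)
  let ψ : Dart → Dart := fun y => if y = x then b else if y = rev x then a else y
  have hψ : ∀ d ∈ a :: u' ++ b :: w', nxt (rem H x) d = ψ (nxt H d) := by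
    intro d hd
    rw [nxt_rem hH hx (hmem d hd), ha, hb]
  have hψ' : ∀ d ∈ a :: u' ++ b :: w', ψ d = d := by
    intro d hd
    simp [ψ, n1 d hd]
  refine ⟨hmem, ?_, ?_, ?_⟩
  · rw [List.map_congr_left hψ]
    have : (fun d => ψ (nxt H d)) = ψ ∘ nxt H := rfl
    rw [this, ← List.map_map, List.map_append, hu, hw]
    have e1 : u'.map ψ = u' := by
      conv_rhs => rw [← List.map_id u']
      apply List.map_congr_left
      intro d hd; exact hψ' d (by simp [hd])
    have e2 : w'.map ψ = w' := by
      conv_rhs => rw [← List.map_id w']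
      apply List.map_congr_left
      intro d hd; exact hψ' d (by simp [hd])
    simp only [List.map_append, e1, e2, List.map_cons, List.map_nil]
    have : ψ (rev x) = a := by simp [ψ, rev_ne]
    simp [this, ψ]
  · have a1 := h1.area
    have a2 := h2.area
    simp only [List.map_cons, List.sum_cons, har, List.map_append, List.sum_append] at a1 a2 ⊢
    linarith
  · intro c hc
    have b1 : ¬ Bad c x.1 := by
      have := hc b (by simp)
      rwa [← hb, nxt_fst, hd_rev] at this
    have b2 : ¬ Bad c (hd x) := by
      have := hc a (by simp)
      rwa [← ha, nxt_fst] at this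
    have p1 := h1.hol c (by
      intro d hd
      rcases List.mem_cons.1 hd with rfl | hd
      · exact b1
      · exact hc d (List.mem_append_left _ hd))
    have p2 := h2.hol c (by
      intro d hd
      rcases List.mem_cons.1 hd with rfl | hd
      · exact b2
      · exact hc d (List.mem_append_right _ hd))
    rw [List.map_cons, List.prod_cons] at p1 p2
    rw [List.map_append, List.prod_append, eq_inv_of_mul_eq_one_right p1,
      eq_inv_of_mul_eq_one_right p2, hg, inv_inv, inv_mul_cancel]

lemma Inv.stage1 {H x V} (hH : Sym H) (hx : x ∈ H)
    (hg : ∀ c d, g c (rev d) = (g c d)⁻¹) (har : ∀ d, ar (rev d) = - ar d)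
    (h : Inv g Bad ar H V) : Inv g Bad ar (rem H x) V := by
  obtain ⟨fs, hf, hV⟩ := h
  have hc := card_rem hH hx
  have drop : ∀ y, (y = x ∨ y = rev x) → y ∈ fs.flatten →
      (∀ u rest, Fam g Bad ar H ((y :: u) :: rest) → rest.length + 1 = fs.length →
        rev y ∉ rest.flatten → Inv g Bad ar (rem H x) V) := by
    intro y hy _ u rest hfam hl hr
    refine ⟨rest, ?_, by omega⟩
    have hfam' : Fam g Bad ar H rest :=
      ⟨(List.nodup_append.1 (by simpa using hfam.nodup : ((y::u) ++ rest.flatten).Nodup)).2.1,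
       fun f hf => hfam.good f (List.mem_cons_of_mem _ hf)⟩
    have hyr : y ∉ rest.flatten := by
      have := hfam.nodup
      simp only [List.flatten_cons, List.cons_append, List.nodup_cons] at this
      intro h; exact this.1 (List.mem_append_right _ h)
    rcases hy with rfl | rfl
    · exact hfam'.keep hH hx hyr hr
    · exact hfam'.keep hH hx (by simpa using hr) hyr
  by_cases h1 : x ∈ fs.flatten
  · obtain ⟨u, rest, hfam, hl, hmem⟩ := hf.extract h1
    by_cases h2 : rev x ∈ rest.flatten
    · have hrest : Fam g Bad ar H rest :=
        ⟨(List.nodup_append.1 (by simpa using hfam.nodup : ((x::u) ++ rest.flatten).Nodup)).2.1,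
         fun f hf => hfam.good f (List.mem_cons_of_mem _ hf)⟩
      obtain ⟨w, rest', hfam', hl', hmem'⟩ := hrest.extract h2
      have nod : (((x :: u) ++ (rev x :: w)) ++ rest'.flatten).Nodup := by
        have := hfam.nodup
        rw [List.flatten_cons, List.nodup_append'] at this
        have n2 := hfam'.nodup
        rw [List.flatten_cons] at n2
        rw [List.append_assoc, List.nodup_append']
        refine ⟨this.1, n2, ?_⟩
        intro y hy hy'
        exact this.2.2 hy ((hmem' y).2 (List.mem_append.1 hy'))
      have nod' : (x :: rev x :: (u ++ w ++ rest'.flatten)).Nodup := by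
        refine (List.Perm.nodup_iff ?_).1 nod
        simp only [List.cons_append, List.append_assoc]
        exact List.Perm.cons _ List.perm_middle
      have nr : x ∉ rest'.flatten ∧ rev x ∉ rest'.flatten := by
        simp only [List.nodup_cons] at nod'
        constructor
        · intro h; exact nod'.1 (by simp [-List.mem_flatten, h])
        · intro h; exact nod'.2.1 (by simp [-List.mem_flatten, h])
      refine ⟨(u ++ w) :: rest', ⟨?_, ?_⟩, ?_⟩
      · rw [List.flatten_cons]
        exact (List.nodup_cons.1 (List.nodup_cons.1 nod').2).2
      · intro f hf
        rcases List.mem_cons.1 hf with rfl | hf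
        · exact GoodFace.merge hH hx hg har (hfam.good _ (by simp)) (hfam'.good _ (by simp))
            (List.nodup_append'.1 nod).1
        · have hr' : Fam g Bad ar H rest' :=
            ⟨(List.nodup_append'.1 nod).2.1, fun f hf => hfam'.good f (List.mem_cons_of_mem _ hf)⟩
          exact (hr'.keep hH hx nr.1 nr.2).good f hf
      · simp only [List.length_cons]; push_cast; omega
    · exact drop x (Or.inl rfl) h1 u rest hfam hl h2
  · by_cases h2 : rev x ∈ fs.flatten
    · obtain ⟨u, rest, hfam, hl, hmem⟩ := hf.extract h2
      refine drop (rev x) (Or.inr rfl) h2 u rest hfam hl ?_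
      rw [rev_rev]; intro h; exact h1 ((hmem x).2 (Or.inr h))
    · exact ⟨fs, hf.keep hH hx h1 h2, by omega⟩

lemma Inv.stage2 {H x V} (hH : Sym H) (hx : x ∈ H)
    (hg : ∀ c d, g c (rev d) = (g c d)⁻¹) (har : ∀ d, ar (rev d) = - ar d)
    (hb : ∀ c, ¬ Bad c (hd x)) (hp : ∀ d ∈ H, d.1 = hd x → d = rev x)
    (h : Inv g Bad ar H V) : Inv g Bad ar (rem H x) (V - 1) := by
  obtain ⟨fs, hf, hV⟩ := h
  have hc := card_rem hH hx
  have hnx : nxt H x = rev x := hp _ (nxt_mem hH hx) rfl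
  by_cases h1 : x ∈ fs.flatten
  · obtain ⟨u, rest, hfam, hl, hmem⟩ := hf.extract h1
    have hgf := hfam.good _ List.mem_cons_self
    obtain ⟨a, u', rfl, ha, hu⟩ := hgf.next_cons
    rw [hnx] at ha
    subst ha
    have nod := hfam.nodup
    rcases u' with _ | ⟨b, w⟩
    · have := hgf.area
      simp [har] at this
    · simp only [List.map_cons, List.cons_append, List.cons.injEq] at hu
      obtain ⟨hb', hu⟩ := hu
      simp only [List.flatten_cons, List.cons_append, List.nodup_cons] at nod
      have n1 : ∀ d ∈ b :: w, d ≠ x ∧ d ≠ rev x := by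
        intro d hd
        constructor
        · rintro rfl; apply nod.1; right; exact List.mem_append_left rest.flatten hd
        · rintro rfl; apply nod.2.1; exact List.mem_append_left rest.flatten hd
      have hm : ∀ d ∈ b :: w, d ∈ rem H x := by
        intro d hd
        refine mem_rem.2 ⟨?_, n1 d hd⟩
        exact hgf.mem d (by simp only [List.mem_cons] at hd ⊢; tauto)
      refine ⟨(b :: w) :: rest, ⟨?_, ?_⟩, ?_⟩
      · simp only [List.flatten_cons, List.cons_append, List.nodup_cons]
        exact nod.2.2
      · intro f hf
        rcases List.mem_cons.1 hf with rfl | hf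
        · refine ⟨hm, ?_, ?_, ?_⟩
          · have hψ : ∀ d ∈ b :: w, nxt (rem H x) d =
              (fun y => if y = x then b else if y = rev x then rev x else y) (nxt H d) := by
              intro d hd
              rw [nxt_rem hH hx (hm d hd), hb', hnx]
            rw [List.map_congr_left hψ]
            have hu2 : (b :: w).map (nxt H) = w ++ [x] := hu
            have : ∀ F : Dart → Dart, (b::w).map (fun d => F (nxt H d)) = ((b::w).map (nxt H)).map F := by
              intro F; rw [List.map_map]; rfl
            rw [this (fun y => if y = x then b else if y = rev x then rev x else y), hu2]
            have e1 : w.map (fun y => if y = x then b else if y = rev x then rev x else y) = w := by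
              conv_rhs => rw [← List.map_id w]
              apply List.map_congr_left
              intro d hd
              have := n1 d (by simp [hd])
              simp [this]
            rw [List.map_append, e1]
            simp
          · have := hgf.area
            simp only [List.map_cons, List.sum_cons, har] at this ⊢
            linarith
          · intro c hc
            have b1 : ¬ Bad c x.1 := by
              have := hc b (by simp)
              rwa [← hb', nxt_fst, hd_rev] at this
            have p1 := hgf.hol c (by
              intro d hd
              simp only [List.mem_cons] at hd
              rcases hd with rfl | rfl | hd
              · exact b1
              · exact hb c
              · exact hc d (by simpa using hd))
            simpa [hg] using p1
        · refine (hfam.good f (List.mem_cons_of_mem _ hf)).keep hH hx ?_ ?_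
          · intro h; apply nod.1; right; right
            exact List.mem_append_right w (List.mem_flatten.2 ⟨f, hf, h⟩)
          · intro h; apply nod.2.1; right
            exact List.mem_append_right w (List.mem_flatten.2 ⟨f, hf, h⟩)
      · simp only [List.length_cons]; push_cast; omega
  · have h2 : rev x ∉ fs.flatten := by
      intro h2
      obtain ⟨f, hff, hxf⟩ := List.mem_flatten.1 h2
      obtain ⟨d, hd, hdn⟩ := (hf.good f hff).prev hxf
      have : rev d = rev x := by
        apply hp _ (hH d ((hf.good f hff).mem d hd))
        have := congrArg Prod.fst hdn
        simpa using this
      rw [rev_inj this] at hd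
      exact h1 (List.mem_flatten.2 ⟨f, hff, hd⟩)
    exact ⟨fs, hf.keep hH hx h1 h2, by omega⟩

end Faces
end NH
end

section
open Set
namespace NH

section Grid
variable {ι : Type} {K : ι → Type} [∀ c, Group (K c)] {g : ∀ c, Dart → K c}
  {Bad : ι → Pt → Prop} {ar : Dart → ℤ}

noncomputable def grid (N : ℤ) : Finset Pt := Finset.Icc (-N) N ×ˢ Finset.Icc (-N) N

lemma mem_grid {N : ℤ} {p : Pt} : p ∈ grid N ↔ (-N ≤ p.1 ∧ p.1 ≤ N) ∧ (-N ≤ p.2 ∧ p.2 ≤ N) := by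
  simp [grid]

noncomputable def fullH (N : ℤ) : Finset Dart :=
  (grid N ×ˢ (Finset.univ : Finset (Fin 4))).filter (fun d => hd d ∈ grid N)

lemma mem_fullH {N : ℤ} {d : Dart} : d ∈ fullH N ↔ d.1 ∈ grid N ∧ hd d ∈ grid N := by
  simp [fullH]

lemma sym_fullH (N : ℤ) : Sym (fullH N) := by
  intro d h
  rw [mem_fullH] at h ⊢
  simp [h]

def cell (p : Pt) : List Dart :=
  [(p, 0), (p + (1,0), 1), (p + (1,1), 2), (p + (0,1), 3)]

@[simp] lemma step0 : step 0 = (1,0) := rfl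
@[simp] lemma step1 : step 1 = (0,1) := rfl
@[simp] lemma step2 : step 2 = (-1,0) := rfl
@[simp] lemma step3 : step 3 = (0,-1) := rfl

def coff : Fin 4 → Pt := ![(0,0),(1,0),(1,1),(0,1)]

lemma mem_cell {p : Pt} {d : Dart} (h : d ∈ cell p) : p = d.1 - coff d.2 := by
  simp only [cell, List.mem_cons, List.not_mem_nil, or_false] at h
  rcases h with rfl | rfl | rfl | rfl <;> simp [coff]
  exact (sub_zero p).symm

lemma nodup_cell (p : Pt) : (cell p).Nodup := by
  simp [cell]

lemma nxt_left {H : Finset Dart} {d : Dart} (h : (hd d, d.2 + 1) ∈ H) :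
    nxt H d = (hd d, d.2 + 1) := by
  simp [nxt, nd, h]

lemma good_cell {N : ℤ} {p : Pt} (hp : (-N ≤ p.1 ∧ p.1 < N) ∧ (-N ≤ p.2 ∧ p.2 < N))
    (hac : ∀ p, 0 < ((cell p).map ar).sum)
    (hgc : ∀ c p, (∀ d ∈ cell p, ¬ Bad c d.1) → ((cell p).map (g c)).prod = 1) :
    GoodFace g Bad ar (fullH N) (cell p) := by
  have hm : ∀ d ∈ cell p, d ∈ fullH N := by
    intro d hd'
    simp only [cell, List.mem_cons, List.not_mem_nil, or_false] at hd'
    rw [mem_fullH, mem_grid, mem_grid]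
    rcases hd' with rfl | rfl | rfl | rfl <;> simp [hd] <;> omega
  refine ⟨hm, ?_, hac p, fun c => hgc c p⟩
  have e0 : ((hd (p, 0) : Pt), (1 : Fin 4)) = (p + (1,0), 1) := by simp [hd]
  have e1 : ((hd (p + (1,0), 1) : Pt), (2 : Fin 4)) = (p + (1,1), 2) := by
    simp [hd, add_assoc]
  have e2 : ((hd (p + (1,1), 2) : Pt), (3 : Fin 4)) = (p + (0,1), 3) := by
    simp [hd, add_assoc]
  have e3 : ((hd (p + (0,1), 3) : Pt), (0 : Fin 4)) = (p, 0) := by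
    simp [hd, add_assoc]
  have n0 : nxt (fullH N) (p, 0) = (p + (1,0), 1) := by
    rw [nxt_left, ← e0]; · rfl
    · show ((hd (p, 0) : Pt), (1 : Fin 4)) ∈ _
      rw [e0]; exact hm _ (by simp [cell])
  have n1 : nxt (fullH N) (p + (1,0), 1) = (p + (1,1), 2) := by
    rw [nxt_left, ← e1]; · rfl
    · show ((hd (p + (1,0), 1) : Pt), (2 : Fin 4)) ∈ _
      rw [e1]; exact hm _ (by simp [cell])
  have n2 : nxt (fullH N) (p + (1,1), 2) = (p + (0,1), 3) := by
    rw [nxt_left, ← e2]; · rfl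
    · show ((hd (p + (1,1), 2) : Pt), (3 : Fin 4)) ∈ _
      rw [e2]; exact hm _ (by simp [cell])
  have n3 : nxt (fullH N) (p + (0,1), 3) = (p, 0) := by
    rw [nxt_left, ← e3]; · rfl
    · show ((hd (p + (0,1), 3) : Pt), (0 : Fin 4)) ∈ _
      rw [e3]; exact hm _ (by simp [cell])
  simp [cell, n0, n1, n2, n3]

lemma card_fullH {N : ℤ} (hN : 0 ≤ N) : ((fullH N).card : ℤ) ≤ 4 * ((2*N+1) * (2*N)) := by
  have hsub : fullH N ⊆
      ((Finset.Icc (-N) (N-1) ×ˢ Finset.Icc (-N) N) ×ˢ {0}) ∪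
      ((Finset.Icc (-N) N ×ˢ Finset.Icc (-N) (N-1)) ×ˢ {1}) ∪
      ((Finset.Icc (-N+1) N ×ˢ Finset.Icc (-N) N) ×ˢ {2}) ∪
      ((Finset.Icc (-N) N ×ˢ Finset.Icc (-N+1) N) ×ˢ {3}) := by
    rintro ⟨⟨a, b⟩, i⟩ h
    rw [mem_fullH, mem_grid, mem_grid] at h
    fin_cases i <;> simp [hd] at h ⊢ <;> omega
  have h1 := Finset.card_le_card hsub
  have h2 : ((Finset.Icc (-N) N).card : ℤ) = 2*N+1 := by simp; omega
  have h3 : ((Finset.Icc (-N) (N-1)).card : ℤ) = 2*N := by simp; omega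
  have h4 : ((Finset.Icc (-N+1) N).card : ℤ) = 2*N := by simp; omega
  have h5 := h1.trans ((Finset.card_union_le _ _).trans (Nat.add_le_add_right
    ((Finset.card_union_le _ _).trans (Nat.add_le_add_right (Finset.card_union_le _ _) _)) _))
  simp only [Finset.card_product, Finset.card_singleton, mul_one] at h5
  zify at h5
  rw [h2, h3, h4] at h5
  linarith

lemma inv_full {N : ℤ} (hN : 0 ≤ N) (hac : ∀ p, 0 < ((cell p).map ar).sum)
    (hgc : ∀ c p, (∀ d ∈ cell p, ¬ Bad c d.1) → ((cell p).map (g c)).prod = 1) :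
    Inv g Bad ar (fullH N) (grid N).card := by
  let S : Finset Pt := Finset.Icc (-N) (N-1) ×ˢ Finset.Icc (-N) (N-1)
  refine ⟨S.toList.map cell, ⟨?_, ?_⟩, ?_⟩
  · rw [List.nodup_flatten]
    constructor
    · intro l hl
      obtain ⟨p, _, rfl⟩ := List.mem_map.1 hl
      exact nodup_cell p
    · rw [List.pairwise_map]
      refine S.nodup_toList.imp ?_
      intro p q hpq d hd hd'
      exact hpq ((mem_cell hd).trans (mem_cell hd').symm)
  · intro f hf
    obtain ⟨p, hp, rfl⟩ := List.mem_map.1 hf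
    refine good_cell ?_ hac hgc
    simp [S] at hp
    omega
  · have h1 := card_fullH hN
    have h2 : ((Finset.Icc (-N) N).card : ℤ) = 2*N+1 := by simp; omega
    have h3 : ((Finset.Icc (-N) (N-1)).card : ℤ) = 2*N := by simp; omega
    simp only [List.length_map, Finset.length_toList, S, grid, Finset.card_product]
    push_cast
    rw [h2, h3]
    nlinarith

lemma Inv.shrink (hg : ∀ c d, g c (rev d) = (g c d)⁻¹) (har : ∀ d, ar (rev d) = - ar d)
    {V : ℤ} {H1 : Finset Dart} (h1 : Sym H1) :
    ∀ (k : ℕ) (H : Finset Dart), (H \ H1).card ≤ k → H1 ⊆ H → Sym H → Inv g Bad ar H V →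
      Inv g Bad ar H1 V := by
  intro k
  induction k with
  | zero =>
    intro H hk hsub hS hI
    have : H = H1 := by
      have := Finset.card_eq_zero.1 (Nat.le_zero.1 hk)
      exact Finset.Subset.antisymm (Finset.sdiff_eq_empty_iff_subset.1 this) hsub
    rwa [← this]
  | succ k ih =>
    intro H hk hsub hS hI
    by_cases he : H \ H1 = ∅
    · have : H = H1 := Finset.Subset.antisymm (Finset.sdiff_eq_empty_iff_subset.1 he) hsub
      rwa [← this]
    · obtain ⟨x, hx⟩ := Finset.nonempty_iff_ne_empty.2 he
      rw [Finset.mem_sdiff] at hx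
      refine ih (rem H x) ?_ ?_ (sym_rem hS x) (hI.stage1 hS hx.1 hg har)
      · have : rem H x \ H1 ⊆ (H \ H1).erase x := by
          intro d hd
          simp only [Finset.mem_sdiff, mem_rem, Finset.mem_erase] at hd ⊢
          tauto
        have h2 := Finset.card_le_card this
        have h3 := Finset.card_erase_add_one (Finset.mem_sdiff.2 hx)
        omega
      · intro d hd
        refine mem_rem.2 ⟨hsub hd, ?_, ?_⟩
        · rintro rfl; exact hx.2 hd
        · rintro rfl; apply hx.2; have := h1 _ hd; rwa [rev_rev] at this

def pdir (o p : Pt) : Fin 4 :=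
  if p.1 < o.1 then 0 else if o.1 < p.1 then 2 else if p.2 < o.2 then 1 else 3

def rk (o p : Pt) : ℤ := (p.1 - o.1).natAbs + (p.2 - o.2).natAbs

lemma rk_par {o p : Pt} (h : p ≠ o) : rk o (hd (p, pdir o p)) = rk o p - 1 := by
  obtain ⟨a, b⟩ := p
  obtain ⟨a', b'⟩ := o
  have : a ≠ a' ∨ b ≠ b' := by
    by_contra h'; push Not at h'; exact h (by rw [h'.1, h'.2])
  simp only [rk, hd, pdir]
  split_ifs <;> simp only [step0, step1, step2, step3, Prod.mk_add_mk] <;> omega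

lemma par_grid {N : ℤ} {o p : Pt} (ho : o ∈ grid N) (hp : p ∈ grid N) (h : p ≠ o) :
    hd (p, pdir o p) ∈ grid N := by
  obtain ⟨a, b⟩ := p
  obtain ⟨a', b'⟩ := o
  have : a ≠ a' ∨ b ≠ b' := by
    by_contra h'; push Not at h'; exact h (by rw [h'.1, h'.2])
  rw [mem_grid] at *
  simp only [hd, pdir]
  split_ifs <;> simp at * <;> omega

def forest (G : Finset Dart) (o : Pt) (W : Finset Pt) : Finset Dart :=
  G ∪ W.image (fun p => (p, pdir o p)) ∪ W.image (fun p => rev (p, pdir o p))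

lemma mem_forest {G : Finset Dart} {o : Pt} {W : Finset Pt} {d : Dart} : d ∈ forest G o W ↔
    d ∈ G ∨ (∃ p ∈ W, d = (p, pdir o p)) ∨ (∃ p ∈ W, d = rev (p, pdir o p)) := by
  simp only [forest, Finset.mem_union, Finset.mem_image, or_assoc, eq_comm]

lemma sym_forest {G : Finset Dart} (hG : Sym G) (o : Pt) (W : Finset Pt) :
    Sym (forest G o W) := by
  intro d h
  rw [mem_forest] at h ⊢
  rcases h with h | ⟨p, hp, rfl⟩ | ⟨p, hp, rfl⟩
  · exact Or.inl (hG d h)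
  · exact Or.inr (Or.inr ⟨p, hp, rfl⟩)
  · exact Or.inr (Or.inl ⟨p, hp, by rw [rev_rev]⟩)

lemma Inv.prune (hg : ∀ c d, g c (rev d) = (g c d)⁻¹) (har : ∀ d, ar (rev d) = - ar d)
    {G : Finset Dart} (hG : Sym G) {VG : Finset Pt} (hV : ∀ d ∈ G, d.1 ∈ VG)
    {o : Pt} (ho : o ∈ VG) (hB : ∀ c p, p ∉ VG → ¬ Bad c p) :
    ∀ (k : ℕ) (W : Finset Pt), W.card = k → (∀ p ∈ W, p ∉ VG) →
      Inv g Bad ar (forest G o W) (VG.card + k) → Inv g Bad ar G VG.card := by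
  intro k
  induction k with
  | zero =>
    intro W hk hW hI
    rw [Finset.card_eq_zero] at hk
    subst hk
    simpa [forest] using hI
  | succ k ih =>
    intro W hk hW hI
    have hne : W.Nonempty := by rw [← Finset.card_pos]; omega
    obtain ⟨p, hp, hmax⟩ := W.exists_max_image (rk o) hne
    have hS := sym_forest hG o W
    have hx : rev (p, pdir o p) ∈ forest G o W := mem_forest.2 (Or.inr (Or.inr ⟨p, hp, rfl⟩))
    have hpo : ∀ q ∈ W, q ≠ o := by
      rintro q hq rfl; exact hW _ hq ho
    have hnh : ∀ q ∈ W, hd (q, pdir o q) ≠ p := by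
      intro q hq h
      have h1 := rk_par (hpo q hq)
      rw [h] at h1
      have := hmax q hq
      omega
    have I2 := hI.stage2 hS hx hg har (by intro c; rw [hd_rev]; exact hB c p (hW p hp)) (by
      intro d hd1 hd2
      rw [hd_rev] at hd2
      rw [rev_rev]
      rcases mem_forest.1 hd1 with h | ⟨q, hq, rfl⟩ | ⟨q, hq, rfl⟩
      · exact absurd (hV d h) (by rw [hd2]; exact hW p hp)
      · simp only at hd2; subst hd2; rfl
      · exact absurd hd2 (hnh q hq))
    refine ih (W.erase p) ?_ ?_ ?_
    · have := Finset.card_erase_add_one hp; omega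
    · intro q hq; exact hW q (Finset.mem_of_mem_erase hq)
    · have e : rem (forest G o W) (rev (p, pdir o p)) = forest G o (W.erase p) := by
        ext d
        rw [rem_rev, mem_rem, mem_forest, mem_forest]
        constructor
        · rintro ⟨h | ⟨q, hq, rfl⟩ | ⟨q, hq, rfl⟩, h2, h3⟩
          · exact Or.inl h
          · refine Or.inr (Or.inl ⟨q, ?_, rfl⟩)
            refine Finset.mem_erase.2 ⟨?_, hq⟩
            rintro rfl; exact h2 rfl
          · refine Or.inr (Or.inr ⟨q, ?_, rfl⟩)
            refine Finset.mem_erase.2 ⟨?_, hq⟩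
            rintro rfl; exact h3 rfl
        · rintro (h | ⟨q, hq, rfl⟩ | ⟨q, hq, rfl⟩)
          · refine ⟨Or.inl h, ?_, ?_⟩
            · rintro rfl; exact hW p hp (hV _ h)
            · rintro rfl; have := hV _ (hG _ h); rw [rev_rev] at this; exact hW p hp this
          · obtain ⟨hqp, hq⟩ := Finset.mem_erase.1 hq
            refine ⟨Or.inr (Or.inl ⟨q, hq, rfl⟩), ?_, ?_⟩
            · intro h; exact hqp (congrArg Prod.fst h)
            · intro h; apply hnh q hq
              rw [h, hd_rev]
          · obtain ⟨hqp, hq⟩ := Finset.mem_erase.1 hq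
            refine ⟨Or.inr (Or.inr ⟨q, hq, rfl⟩), ?_, ?_⟩
            · intro h; apply hnh q hq
              exact congrArg Prod.fst h
            · intro h; exact hqp (congrArg Prod.fst (rev_inj h))
      rw [e] at I2
      convert I2 using 1
      push_cast; ring

theorem euler_main (hg : ∀ c d, g c (rev d) = (g c d)⁻¹) (har : ∀ d, ar (rev d) = - ar d)
    (hac : ∀ p, 0 < ((cell p).map ar).sum)
    (hgc : ∀ c p, (∀ d ∈ cell p, ¬ Bad c d.1) → ((cell p).map (g c)).prod = 1)
    {G : Finset Dart} (hG : Sym G) {VG : Finset Pt} (hV : ∀ d ∈ G, d.1 ∈ VG)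
    (hne : VG.Nonempty) (hB : ∀ c p, p ∉ VG → ¬ Bad c p) : Inv g Bad ar G VG.card := by
  obtain ⟨o, ho⟩ := hne
  obtain ⟨N, hN0, hN⟩ : ∃ N : ℤ, 0 ≤ N ∧ ∀ p ∈ VG, p ∈ grid N := by
    refine ⟨∑ p ∈ VG, (|p.1| + |p.2|), Finset.sum_nonneg (fun p _ => by positivity), ?_⟩
    intro p hp
    have := Finset.single_le_sum (f := fun p : Pt => |p.1| + |p.2|)
      (fun p _ => by positivity) hp
    have h1 := abs_le.1 (le_trans (le_add_of_nonneg_right (abs_nonneg p.2)) this)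
    have h2 := abs_le.1 (le_trans (le_add_of_nonneg_left (abs_nonneg p.1)) this)
    rw [mem_grid]; exact ⟨h1, h2⟩
  let W := grid N \ VG
  have hW : ∀ p ∈ W, p ∉ VG := fun p hp => (Finset.mem_sdiff.1 hp).2
  refine Inv.prune hg har hG hV ho hB W.card W rfl hW ?_
  have hcard : (VG.card : ℤ) + W.card = (grid N).card := by
    have : W.card + VG.card = (grid N).card := Finset.card_sdiff_add_card_eq_card hN
    omega
  rw [hcard]
  refine Inv.shrink hg har (sym_forest hG o W) _ (fullH N) le_rfl ?_ (sym_fullH N)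
    (inv_full hN0 hac hgc)
  intro d hd
  have key : ∀ p ∈ W, (p, pdir o p) ∈ fullH N := by
    intro p hp
    refine mem_fullH.2 ⟨(Finset.mem_sdiff.1 hp).1, ?_⟩
    refine par_grid (hN o ho) (Finset.mem_sdiff.1 hp).1 ?_
    rintro rfl; exact hW _ hp ho
  rcases mem_forest.1 hd with h | ⟨p, hp, rfl⟩ | ⟨p, hp, rfl⟩
  · exact mem_fullH.2 ⟨hN _ (hV d h), by have := hN _ (hV _ (hG d h)); simpa using this⟩
  · exact key p hp
  · exact sym_fullH N _ (key p hp)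

end Grid
end NH
end

section
open Set
namespace NH

structure Draw (n m : ℕ) where
  l : Fin n → ℤ
  r : Fin n → ℤ
  b : Fin n → ℤ
  t : Fin n → ℤ
  s : Fin n → ℤ
  ends : Fin m → Fin n × Fin n
  k : Fin m → ℕ
  P : Fin m → ℕ → Pt
  D : Fin m → ℕ → Fin 4
  hls : ∀ v, l v ≤ s v
  hsr : ∀ v, s v ≤ r v
  hbt : ∀ v, b v ≤ t v
  disj : ∀ u v (p : Pt), (l u ≤ p.1 ∧ p.1 ≤ r u ∧ b u ≤ p.2 ∧ p.2 ≤ t u) →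
    (l v ≤ p.1 ∧ p.1 ≤ r v ∧ b v ≤ p.2 ∧ p.2 ≤ t v) → u = v
  hk : ∀ e, 3 ≤ k e
  hP : ∀ e i, i < k e → P e (i+1) = P e i + step (D e i)
  h0 : ∀ e, l (ends e).1 ≤ (P e 0).1 ∧ (P e 0).1 ≤ r (ends e).1 ∧
    b (ends e).1 ≤ (P e 0).2 ∧ (P e 0).2 ≤ t (ends e).1
  h1 : ∀ e, l (ends e).2 ≤ (P e (k e)).1 ∧ (P e (k e)).1 ≤ r (ends e).2 ∧
    b (ends e).2 ≤ (P e (k e)).2 ∧ (P e (k e)).2 ≤ t (ends e).2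
  hinter : ∀ e i v, 0 < i → i < k e → ¬ (l v ≤ (P e i).1 ∧ (P e i).1 ≤ r v ∧
    b v ≤ (P e i).2 ∧ (P e i).2 ≤ t v)
  hinj : ∀ e i e' i', 0 < i → i < k e → 0 < i' → i' < k e' → P e i = P e' i' → e = e' ∧ i = i'

namespace Draw
variable {n m : ℕ} (Δ : Draw n m)

def inBox (v : Fin n) (p : Pt) : Prop := Δ.l v ≤ p.1 ∧ p.1 ≤ Δ.r v ∧ Δ.b v ≤ p.2 ∧ p.2 ≤ Δ.t v

def isInt (p : Pt) : Prop := ∃ e i, 0 < i ∧ i < Δ.k e ∧ p = Δ.P e i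

def dt (e : Fin m) (i : ℕ) : Dart := (Δ.P e i, Δ.D e i)

def q (e : Fin m) (β : Bool) (i : ℕ) : Dart := if β then Δ.dt e i else rev (Δ.dt e i)

def boxDart (v : Fin n) (d : Dart) : Prop :=
  Δ.inBox v d.1 ∧ Δ.inBox v (hd d) ∧ (d.2 = 0 ∨ d.2 = 2 ∨ d.1.1 = Δ.s v)

def isG (d : Dart) : Prop := (∃ v, Δ.boxDart v d) ∨ ∃ e β i, i < Δ.k e ∧ d = Δ.q e β i

open Classical in
noncomputable def VB : Finset Pt :=
  Finset.univ.biUnion (fun v => Finset.Icc (Δ.l v) (Δ.r v) ×ˢ Finset.Icc (Δ.b v) (Δ.t v))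

open Classical in
noncomputable def VI : Finset Pt :=
  Finset.univ.biUnion (fun e => (Finset.Ioo 0 (Δ.k e)).image (Δ.P e))

open Classical in
noncomputable def VG : Finset Pt := Δ.VB ∪ Δ.VI

open Classical in
noncomputable def G : Finset Dart := (Δ.VG ×ˢ (Finset.univ : Finset (Fin 4))).filter Δ.isG

lemma mem_VG {p : Pt} : p ∈ Δ.VG ↔ (∃ v, Δ.inBox v p) ∨ Δ.isInt p := by
  classical
  simp only [VG, VB, VI, Finset.mem_union, Finset.mem_biUnion, Finset.mem_univ, true_and,
    Finset.mem_product, Finset.mem_Icc, Finset.mem_image, Finset.mem_Ioo, inBox, isInt, and_assoc,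
    eq_comm (a := p)]

variable {Δ}

lemma inBox_unique {u v p} (h : Δ.inBox u p) (h' : Δ.inBox v p) : u = v := Δ.disj u v p h h'

lemma hd_dt {e i} (h : i < Δ.k e) : hd (Δ.dt e i) = Δ.P e (i+1) := (Δ.hP e i h).symm

@[simp] lemma dt_fst {e i} : (Δ.dt e i).1 = Δ.P e i := rfl

lemma box0 (e) : Δ.inBox (Δ.ends e).1 (Δ.P e 0) := Δ.h0 e
lemma box1 (e) : Δ.inBox (Δ.ends e).2 (Δ.P e (Δ.k e)) := Δ.h1 e
lemma kge (e) : 3 ≤ Δ.k e := Δ.hk e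
lemma notBox {e i} (h : 0 < i) (h' : i < Δ.k e) (v) : ¬ Δ.inBox v (Δ.P e i) := Δ.hinter e i v h h'

lemma box_idx {e i v} (hi : i ≤ Δ.k e) (h : Δ.inBox v (Δ.P e i)) :
    (i = 0 ∧ v = (Δ.ends e).1) ∨ (i = Δ.k e ∧ v = (Δ.ends e).2) := by
  rcases Nat.eq_zero_or_pos i with rfl | h0
  · exact Or.inl ⟨rfl, inBox_unique h (box0 e)⟩
  · rcases hi.eq_or_lt with rfl | h1
    · exact Or.inr ⟨rfl, inBox_unique h (box1 e)⟩
    · exact absurd h (notBox h0 h1 v)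

lemma int_idx {e i e' i'} (hi : 0 < i) (hi' : i < Δ.k e) (h : i' ≤ Δ.k e')
    (hp : Δ.P e i = Δ.P e' i') : e = e' ∧ i = i' := by
  rcases Nat.eq_zero_or_pos i' with rfl | h0
  · exact absurd (hp ▸ box0 e') (notBox hi hi' _)
  · rcases h.eq_or_lt with rfl | h1
    · exact absurd (hp ▸ box1 e') (notBox hi hi' _)
    · exact Δ.hinj e i e' i' hi hi' h0 h1 hp

lemma q_tail {e i β} (h : i < Δ.k e) : (Δ.q e β i).1 = if β then Δ.P e i else Δ.P e (i+1) := by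
  cases β <;> simp [q, hd_dt h]

lemma q_head {e i β} (h : i < Δ.k e) : hd (Δ.q e β i) = if β then Δ.P e (i+1) else Δ.P e i := by
  cases β <;> simp [q, hd_dt h]

lemma rev_q (e i β) : rev (Δ.q e β i) = Δ.q e (!β) i := by
  cases β <;> simp [q]

lemma dt_eq_iff {e i e' i'} (h : i < Δ.k e) (h' : i' < Δ.k e') (hh : Δ.dt e i = Δ.dt e' i') :
    e = e' ∧ i = i' := by
  have h1 : Δ.P e i = Δ.P e' i' := congrArg Prod.fst hh
  have h2 : Δ.P e (i+1) = Δ.P e' (i'+1) := by rw [← hd_dt h, ← hd_dt h', hh]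
  rcases Nat.eq_zero_or_pos i with rfl | h0
  · have := int_idx (Nat.succ_pos 0) (by have := kge (Δ := Δ) e; omega) (by omega) h2
    exact ⟨this.1, by omega⟩
  · exact int_idx h0 h h'.le h1

lemma dt_ne_rev {e i e' i'} (h : i < Δ.k e) (h' : i' < Δ.k e') : Δ.dt e i ≠ rev (Δ.dt e' i') := by
  intro hh
  have h1 : Δ.P e i = Δ.P e' (i'+1) := by rw [← hd_dt h']; exact congrArg Prod.fst hh
  have h2 : Δ.P e (i+1) = Δ.P e' i' := by rw [← hd_dt h, hh, hd_rev]; rfl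
  have k1 := kge (Δ := Δ) e
  have k2 := kge (Δ := Δ) e'
  rcases Nat.eq_zero_or_pos i with rfl | h0
  · have a := int_idx (Nat.succ_pos 0) (by omega) h'.le h2
    obtain ⟨rfl, rfl⟩ := a
    have := box_idx (by omega) (h1 ▸ box0 e : Δ.inBox _ (Δ.P e (0+1+1)))
    omega
  · have a := int_idx h0 h h' h1
    obtain ⟨rfl, rfl⟩ := a
    rcases Nat.eq_zero_or_pos i' with rfl | h0'
    · have := box_idx (by omega) (h2.symm ▸ box0 e : Δ.inBox _ (Δ.P e (0+1+1)))
      omega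
    · have := int_idx h0' (by omega) (by omega) h2.symm
      omega

lemma q_inj {e β i e' β' i'} (h : i < Δ.k e) (h' : i' < Δ.k e')
    (hh : Δ.q e β i = Δ.q e' β' i') : e = e' ∧ β = β' ∧ i = i' := by
  cases β <;> cases β' <;> simp only [q, if_true, Bool.false_eq_true, if_false] at hh
  · have := dt_eq_iff h h' (rev_inj hh); tauto
  · exact absurd hh.symm (dt_ne_rev h' h)
  · exact absurd hh (dt_ne_rev h h')
  · have := dt_eq_iff h h' hh; tauto

lemma q_not_box {e β i v} (h : i < Δ.k e) (h1 : Δ.inBox v (Δ.q e β i).1)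
    (h2 : Δ.inBox v (hd (Δ.q e β i))) : False := by
  rw [q_tail h] at h1
  rw [q_head h] at h2
  have k1 := kge (Δ := Δ) e
  have A : Δ.inBox v (Δ.P e i) ∧ Δ.inBox v (Δ.P e (i+1)) := by
    cases β <;> simp_all
  have a := box_idx h.le A.1
  have b := box_idx h A.2
  omega

lemma isInt_notBox {p v} (h : Δ.isInt p) : ¬ Δ.inBox v p := by
  obtain ⟨e, i, hi, hi', rfl⟩ := h
  exact notBox hi hi' v

lemma point_VG {e i} (h : i ≤ Δ.k e) : Δ.P e i ∈ Δ.VG := by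
  rw [mem_VG]
  rcases Nat.eq_zero_or_pos i with rfl | h0
  · exact Or.inl ⟨_, box0 e⟩
  · rcases h.eq_or_lt with rfl | h1
    · exact Or.inl ⟨_, box1 e⟩
    · exact Or.inr ⟨e, i, h0, h1, rfl⟩

lemma isG_tail {d} (h : Δ.isG d) : d.1 ∈ Δ.VG := by
  rcases h with ⟨v, h⟩ | ⟨e, β, i, hi, rfl⟩
  · exact Δ.mem_VG.2 (Or.inl ⟨v, h.1⟩)
  · rw [q_tail hi]; split_ifs
    · exact point_VG hi.le
    · exact point_VG hi

lemma mem_G {d} : d ∈ Δ.G ↔ Δ.isG d := by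
  classical
  simp only [G, Finset.mem_filter, Finset.mem_product, Finset.mem_univ, and_true]
  exact ⟨fun h => h.2, fun h => ⟨isG_tail h, h⟩⟩

lemma q_mem {e β i} (h : i < Δ.k e) : Δ.q e β i ∈ Δ.G := mem_G.2 (Or.inr ⟨e, β, i, h, rfl⟩)

lemma boxDart_rev {v d} (h : Δ.boxDart v d) : Δ.boxDart v (rev d) := by
  obtain ⟨h1, h2, h3⟩ := h
  refine ⟨h2, by rwa [hd_rev], ?_⟩
  obtain ⟨⟨x, y⟩, i⟩ := d
  fin_cases i <;> simp [rev, hd] at h3 ⊢ <;> tauto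

lemma sym_G : Sym Δ.G := by
  intro d h
  rw [mem_G] at h ⊢
  rcases h with ⟨v, h⟩ | ⟨e, β, i, hi, rfl⟩
  · exact Or.inl ⟨v, boxDart_rev h⟩
  · exact Or.inr ⟨e, !β, i, hi, rev_q e i β⟩

/-- darts of `G` at a box point -/
lemma G_at_box {d u} (h : d ∈ Δ.G) (hu : Δ.inBox u d.1) : Δ.boxDart u d ∨
    (∃ e, u = (Δ.ends e).1 ∧ d = Δ.q e true 0) ∨
    (∃ e, u = (Δ.ends e).2 ∧ d = Δ.q e false (Δ.k e - 1)) := by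
  rcases mem_G.1 h with ⟨v, h⟩ | ⟨e, β, i, hi, rfl⟩
  · have := inBox_unique hu h.1; subst this; exact Or.inl h
  · rw [q_tail hi] at hu
    have := kge (Δ := Δ) e
    cases β
    · have := box_idx hi (by simpa using hu)
      rcases this with h | h
      · omega
      · refine Or.inr (Or.inr ⟨e, h.2, ?_⟩)
        congr 1; omega
    · have := box_idx hi.le (by simpa using hu)
      rcases this with h | h
      · refine Or.inr (Or.inl ⟨e, h.2, ?_⟩)
        rw [h.1]
      · omega

/-- darts of `G` at an interior point -/
lemma G_at_int {d e i} (hi0 : i + 1 < Δ.k e) (h : d ∈ Δ.G) (hd : d.1 = Δ.P e (i+1)) :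
    d = Δ.q e true (i+1) ∨ d = Δ.q e false i := by
  rcases mem_G.1 h with ⟨v, h⟩ | ⟨e', β, j, hj, rfl⟩
  · exact absurd (hd ▸ h.1) (notBox (Nat.succ_pos i) hi0 v)
  · rw [q_tail hj] at hd
    cases β
    · have := int_idx (Nat.succ_pos i) hi0 hj (by simpa using hd.symm)
      obtain ⟨rfl, h⟩ := this
      have : i = j := by omega
      subst this; exact Or.inr rfl
    · have := int_idx (Nat.succ_pos i) hi0 hj.le (by simpa using hd.symm)
      obtain ⟨rfl, h2⟩ := this
      subst h2; exact Or.inl rfl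

end Draw

lemma nd_back : ∀ (h : Fin 4 → Bool) (i j : Fin 4), nd h i = i + 2 → h j = true → j = i + 2 := by
  decide

lemma nxt_ne_rev {H : Finset Dart} {d d' : Dart} (h' : d' ∈ H) (ht : d'.1 = hd d)
    (hne : d' ≠ rev d) : nxt H d ≠ rev d := by
  intro h
  have h2 := congrArg Prod.snd h
  simp only [nxt, rev] at h2
  have := nd_back _ _ d'.2 h2 (by rw [← ht]; simpa using h')
  exact hne (Prod.ext ht this)

namespace Draw
variable {n m : ℕ} {Δ : Draw n m}

lemma nxt_true {e i} (h : i + 1 < Δ.k e) : nxt Δ.G (Δ.q e true i) = Δ.q e true (i+1) := by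
  have hi : i < Δ.k e := by omega
  have h1 : nxt Δ.G (Δ.q e true i) ∈ Δ.G := nxt_mem sym_G (q_mem hi)
  have h2 : (nxt Δ.G (Δ.q e true i)).1 = Δ.P e (i+1) := by rw [nxt_fst, q_head hi]; rfl
  rcases G_at_int h h1 h2 with h3 | h3
  · exact h3
  · exfalso
    refine nxt_ne_rev (d := Δ.q e true i) (q_mem (β := true) h) ?_ ?_ (h3.trans (rev_q e i true).symm)
    · rw [q_tail h, q_head hi]; rfl
    · rw [rev_q]; intro h; have := q_inj (by assumption) hi h; simp at this

lemma nxt_false {e i} (h : i + 1 < Δ.k e) : nxt Δ.G (Δ.q e false (i+1)) = Δ.q e false i := by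
  have hi : i < Δ.k e := by omega
  have h1 : nxt Δ.G (Δ.q e false (i+1)) ∈ Δ.G := nxt_mem sym_G (q_mem h)
  have h2 : (nxt Δ.G (Δ.q e false (i+1))).1 = Δ.P e (i+1) := by rw [nxt_fst, q_head h]; rfl
  rcases G_at_int h h1 h2 with h3 | h3
  · exfalso
    refine nxt_ne_rev (d := Δ.q e false (i+1)) (q_mem (β := false) hi) ?_ ?_
      (h3.trans (rev_q e (i+1) false).symm)
    · rw [q_tail hi, q_head h]; rfl
    · rw [rev_q]; intro h'; have := q_inj hi h h'; simp at this
  · exact h3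

end Draw
end NH
end

section
open Set
namespace NH
namespace Draw
variable {n m : ℕ} {Δ : Draw n m}

variable (Δ) in
def root (v : Fin n) : Pt := (Δ.s v, Δ.b v)

lemma root_box (v) : Δ.inBox v (Δ.root v) := ⟨Δ.hls v, Δ.hsr v, le_rfl, Δ.hbt v⟩

variable (Δ) in
def dirB (v : Fin n) (p : Pt) : Fin 4 := if p.1 < Δ.s v then 0 else if Δ.s v < p.1 then 2 else 3

lemma dirB_box {v p} (h : Δ.inBox v p) (hr : p ≠ Δ.root v) : Δ.boxDart v (p, Δ.dirB v p) := by
  obtain ⟨x, y⟩ := p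
  have h1 := Δ.hls v
  have h2 := Δ.hsr v
  have : x ≠ Δ.s v ∨ y ≠ Δ.b v := by
    by_contra h'; push Not at h'; exact hr (by rw [h'.1, h'.2]; rfl)
  simp only [inBox] at h
  refine ⟨h, ?_, ?_⟩
  · simp only [inBox, hd, dirB]
    split_ifs <;> simp <;> omega
  · simp only [dirB]
    split_ifs <;> simp <;> omega

lemma dirB_ne {v p p'} : (p, Δ.dirB v p) ≠ rev (p', Δ.dirB v p') := by
  intro h
  obtain ⟨x, y⟩ := p
  obtain ⟨x', y'⟩ := p'
  have h1 := congrArg Prod.fst h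
  have h2 := congrArg Prod.snd h
  simp only [rev, hd, dirB] at h1 h2
  split_ifs at h1 h2 <;> simp at h1 h2 <;> omega

variable (Δ) in
open Classical in
noncomputable def pd (p : Pt) : Dart :=
  if h : ∃ v, Δ.inBox v p then (p, Δ.dirB h.choose p)
  else if h : ∃ ei : Fin m × ℕ, ei.2 + 1 < Δ.k ei.1 ∧ p = Δ.P ei.1 (ei.2+1) then
    Δ.q h.choose.1 false h.choose.2
  else (p, 0)

lemma pd_box {v p} (h : Δ.inBox v p) : Δ.pd p = (p, Δ.dirB v p) := by
  have h' : ∃ v, Δ.inBox v p := ⟨v, h⟩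
  simp only [pd, h', dif_pos]
  rw [inBox_unique h'.choose_spec h]

lemma pd_int {e i} (h : i + 1 < Δ.k e) : Δ.pd (Δ.P e (i+1)) = Δ.q e false i := by
  have h1 : ¬ ∃ v, Δ.inBox v (Δ.P e (i+1)) := by
    rintro ⟨v, hv⟩; exact notBox (Nat.succ_pos i) h v hv
  have h2 : ∃ ei : Fin m × ℕ, ei.2 + 1 < Δ.k ei.1 ∧ Δ.P e (i+1) = Δ.P ei.1 (ei.2+1) :=
    ⟨(e, i), h, rfl⟩
  simp only [pd, h1, h2, dif_pos, dif_neg, not_false_eq_true]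
  have := h2.choose_spec
  have h3 := int_idx (Nat.succ_pos i) h this.1.le this.2
  rw [← h3.1]
  congr 1
  omega

variable (Δ) in
def isRoot (p : Pt) : Prop := ∃ v, p = Δ.root v

lemma VG_cases {p} (h : p ∈ Δ.VG) (hr : ¬ Δ.isRoot p) :
    (∃ v, Δ.inBox v p ∧ p ≠ Δ.root v) ∨ ∃ e i, i + 1 < Δ.k e ∧ p = Δ.P e (i+1) := by
  rcases Δ.mem_VG.1 h with ⟨v, hv⟩ | ⟨e, i, hi, hi', rfl⟩
  · exact Or.inl ⟨v, hv, fun h => hr ⟨v, h⟩⟩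
  · refine Or.inr ⟨e, i-1, by omega, ?_⟩
    congr 1; omega

variable (Δ) in
open Classical in
noncomputable def NR : Finset Pt := Δ.VG.filter (fun p => ¬ Δ.isRoot p)

variable (Δ) in
noncomputable def up (x : Δ.NR ⊕ Fin m) : Dart := match x with
  | Sum.inl p => Δ.pd p.1
  | Sum.inr e => Δ.q e true (Δ.k e - 1)

lemma NR_cases (p : Δ.NR) :
    (∃ v, Δ.inBox v p.1 ∧ p.1 ≠ Δ.root v) ∨ ∃ e i, i + 1 < Δ.k e ∧ p.1 = Δ.P e (i+1) := by
  classical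
  have := p.2
  simp only [NR, Finset.mem_filter] at this
  exact VG_cases this.1 this.2

lemma pd_tail (p : Δ.NR) : (Δ.pd p.1).1 = p.1 := by
  rcases NR_cases p with ⟨v, hv, _⟩ | ⟨e, i, hi, h⟩
  · rw [pd_box hv]
  · rw [h, pd_int hi, q_tail (by omega)]; rfl

lemma up_mem (x) : Δ.up x ∈ Δ.G := by
  rcases x with p | e
  · simp only [up]
    rcases NR_cases p with ⟨v, hv, hr⟩ | ⟨e, i, hi, h⟩
    · rw [pd_box hv]; exact mem_G.2 (Or.inl ⟨v, dirB_box hv hr⟩)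
    · rw [h, pd_int hi]; exact q_mem (by omega)
  · exact q_mem (by have := kge (Δ := Δ) e; omega)

lemma pd_ne_last (p : Δ.NR) (e) (β) : Δ.pd p.1 ≠ Δ.q e β (Δ.k e - 1) := by
  have k1 := kge (Δ := Δ) e
  rcases NR_cases p with ⟨v, hv, hr⟩ | ⟨e', i, hi, h⟩
  · rw [pd_box hv]
    intro h
    have := dirB_box hv hr
    rw [h] at this
    exact q_not_box (by omega) this.1 this.2.1
  · rw [h, pd_int hi]
    intro h'
    obtain ⟨rfl, h1, h2⟩ := q_inj (by omega) (by omega) h'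
    omega

lemma up_inj {x y} (h : Δ.up x = Δ.up y) : x = y := by
  rcases x with p | e <;> rcases y with p' | e' <;> simp only [up] at h
  · congr 1
    have := congrArg Prod.fst h
    rw [pd_tail, pd_tail] at this
    exact Subtype.ext this
  · exact absurd h (pd_ne_last p e' true)
  · exact absurd h.symm (pd_ne_last p' e true)
  · have k1 := kge (Δ := Δ) e
    have k2 := kge (Δ := Δ) e'
    rw [(q_inj (by omega) (by omega) h).1]

lemma up_ne_rev {x y} : Δ.up x ≠ rev (Δ.up y) := by
  intro h
  rcases x with p | e <;> rcases y with p' | e' <;> simp only [up, rev_q] at h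
  · rcases NR_cases p with ⟨v, hv, hr⟩ | ⟨e, i, hi, hp⟩ <;>
    rcases NR_cases p' with ⟨v', hv', hr'⟩ | ⟨e', i', hi', hp'⟩
    · rw [pd_box hv, pd_box hv'] at h
      have a := (dirB_box hv hr).1
      have b := (boxDart_rev (dirB_box hv' hr')).1
      rw [← h] at b
      have := inBox_unique a b
      subst this
      exact dirB_ne h
    · rw [pd_box hv, hp', pd_int hi', rev_q] at h
      have a := dirB_box hv hr
      rw [h] at a
      exact q_not_box (by omega) a.1 a.2.1
    · rw [hp, pd_int hi, pd_box hv'] at h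
      have a := boxDart_rev (dirB_box hv' hr')
      rw [← h] at a
      exact q_not_box (by omega) a.1 a.2.1
    · rw [hp, hp', pd_int hi, pd_int hi', rev_q] at h
      have := q_inj (by omega) (by omega) h
      simp at this
  · exact pd_ne_last p e' _ h
  · have h' := congrArg rev h
    rw [rev_rev, rev_q] at h'
    exact pd_ne_last p' e _ h'.symm
  · have k1 := kge (Δ := Δ) e
    have k2 := kge (Δ := Δ) e'
    have := q_inj (by omega) (by omega) h
    simp at this

lemma card_NR : Δ.VG.card ≤ Δ.NR.card + n := by
  classical
  have h1 : Δ.VG.card = Δ.NR.card + (Δ.VG.filter (fun p => Δ.isRoot p)).card := by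
    rw [NR, add_comm, Finset.card_filter_add_card_filter_not]
  have h2 : (Δ.VG.filter (fun p => Δ.isRoot p)).card ≤ n := by
    have : Δ.VG.filter (fun p => Δ.isRoot p) ⊆ Finset.univ.image Δ.root := by
      intro p hp
      obtain ⟨v, hv⟩ := (Finset.mem_filter.1 hp).2
      exact Finset.mem_image.2 ⟨v, Finset.mem_univ _, hv.symm⟩
    refine (Finset.card_le_card this).trans (Finset.card_image_le.trans ?_)
    simp
  omega

lemma card_G : 2 * (Δ.VG.card + m) ≤ Δ.G.card + 2 * n := by
  classical
  let F : (Δ.NR ⊕ Fin m) × Bool → Dart := fun x => if x.2 then Δ.up x.1 else rev (Δ.up x.1)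
  have hF : Function.Injective F := by
    rintro ⟨x, β⟩ ⟨y, β'⟩ h
    cases β <;> cases β' <;> simp only [F, if_true, Bool.false_eq_true, if_false] at h
    · rw [up_inj (rev_inj h)]
    · exact absurd h.symm up_ne_rev
    · exact absurd h up_ne_rev
    · rw [up_inj h]
  have hsub : Finset.univ.image F ⊆ Δ.G := by
    intro d hd
    obtain ⟨⟨x, β⟩, _, rfl⟩ := Finset.mem_image.1 hd
    cases β
    · exact sym_G _ (up_mem x)
    · exact up_mem x
  have h1 := Finset.card_le_card hsub
  rw [Finset.card_image_of_injective _ hF] at h1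
  simp at h1
  have := card_NR (Δ := Δ)
  omega

/-! area -/
variable (Δ) in
open Classical in
noncomputable def pot (p : Pt) : ℤ := if h : ∃ v, Δ.inBox v p then Δ.s h.choose * p.2 else 0

variable (Δ) in
noncomputable def ar (d : Dart) : ℤ := d.1.1 * (step d.2).2 - (Δ.pot (hd d) - Δ.pot d.1)

lemma pot_box {v p} (h : Δ.inBox v p) : Δ.pot p = Δ.s v * p.2 := by
  have h' : ∃ v, Δ.inBox v p := ⟨v, h⟩
  simp only [pot, h', dif_pos]
  rw [inBox_unique h'.choose_spec h]

lemma ar_rev (d) : Δ.ar (rev d) = - Δ.ar d := by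
  obtain ⟨⟨x, y⟩, i⟩ := d
  simp only [ar, hd_rev, rev_fst]
  have : (rev ((x,y), i)).2 = i + 2 := rfl
  rw [this, step_add_two]
  fin_cases i <;> simp [hd] <;> ring

lemma ar_cell (p) : 0 < ((cell p).map Δ.ar).sum := by
  have e0 : (hd (p, 0) : Pt) = p + (1,0) := by simp [hd]
  have e1 : (hd (p + (1,0), 1) : Pt) = p + (1,1) := by simp [hd, add_assoc]
  have e2 : (hd (p + (1,1), 2) : Pt) = p + (0,1) := by simp [hd, add_assoc]
  have e3 : (hd (p + (0,1), 3) : Pt) = p := by simp [hd, add_assoc]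
  simp only [cell, List.map_cons, List.map_nil, List.sum_cons, List.sum_nil, ar, e0, e1, e2, e3]
  simp
  linarith

lemma ar_box {v d} (h : Δ.boxDart v d) : Δ.ar d = 0 := by
  obtain ⟨h1, h2, h3⟩ := h
  rw [ar, pot_box h1, pot_box h2]
  obtain ⟨⟨x, y⟩, i⟩ := d
  fin_cases i <;> simp [hd] at h3 ⊢ <;> rw [h3] <;> ring

end Draw
end NH
end

section
open Set
namespace NH

section
variable {ι : Type} {K : ι → Type} [∀ c, Group (K c)] {g : ∀ c, Dart → K c}
  {Bad : ι → Pt → Prop} {ar : Dart → ℤ}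

lemma GoodFace.rot_to {H f} (h : GoodFace g Bad ar H f) {x} (hx : x ∈ f) :
    ∃ u, GoodFace g Bad ar H (x :: u) ∧ (x :: u).Perm f := by
  obtain ⟨i, hi, rfl⟩ := List.getElem_of_mem hx
  have hr : ∃ u, f.rotate i = f[i] :: u := by
    rw [List.rotate_eq_drop_append_take hi.le, List.drop_eq_getElem_cons hi]
    exact ⟨_, rfl⟩
  obtain ⟨u, hu⟩ := hr
  refine ⟨u, ?_, ?_⟩
  · rw [← hu]; exact h.rotate i
  · rw [← hu]; exact List.rotate_perm f i

lemma chain_all {N : Dart → Dart} {R : Dart → Prop} : ∀ (u : List Dart) (x y : Dart),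
    (x :: u).map N = u ++ [y] → R x → (∀ d ∈ x :: u, R d → R (N d)) → ∀ d ∈ x :: u, R d := by
  intro u
  induction u with
  | nil => intro x y _ hx _ d hd; simp at hd; rwa [hd]
  | cons a u ih =>
    intro x y h hx hR d hd
    simp only [List.map_cons, List.cons_append, List.cons.injEq] at h
    rcases List.mem_cons.1 hd with rfl | hd
    · exact hx
    · refine ih a y ?_ ?_ (fun d hd => hR d (List.mem_cons_of_mem _ hd)) d hd
      · simpa using h.2
      · rw [← h.1]; exact hR x (by simp) hx

lemma GoodFace.closure {H f} (h : GoodFace g Bad ar H f) {x} (hx : x ∈ f) {R : Dart → Prop}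
    (hRx : R x) (hR : ∀ d ∈ f, R d → R (nxt H d)) : ∀ d ∈ f, R d := by
  obtain ⟨u, hu, hp⟩ := h.rot_to hx
  intro d hd
  refine chain_all u x x (by simpa using hu.nx) hRx ?_ d (hp.mem_iff.2 hd)
  intro d hd; exact hR d (hp.mem_iff.1 hd)
end

namespace Draw
variable {n m : ℕ} {Δ : Draw n m}

variable (Δ) in
def st (E : Fin m × Bool) : Fin n := if E.2 then (Δ.ends E.1).1 else (Δ.ends E.1).2
variable (Δ) in
def en (E : Fin m × Bool) : Fin n := if E.2 then (Δ.ends E.1).2 else (Δ.ends E.1).1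
variable (Δ) in
def mrk (E : Fin m × Bool) : Dart := Δ.q E.1 E.2 0
variable (Δ) in
def first (E : Fin m × Bool) : Dart := Δ.q E.1 E.2 (if E.2 then 0 else Δ.k E.1 - 1)
variable (Δ) in
def isEd (E : Fin m × Bool) (d : Dart) : Prop := ∃ i, i < Δ.k E.1 ∧ d = Δ.q E.1 E.2 i

lemma mrk_inj {E E'} (h : Δ.mrk E = Δ.mrk E') : E = E' := by
  have k1 := kge (Δ := Δ) E.1
  have k2 := kge (Δ := Δ) E'.1
  have := q_inj (by omega) (by omega) h
  exact Prod.ext this.1 this.2.1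

lemma first_idx (E : Fin m × Bool) : (if E.2 then 0 else Δ.k E.1 - 1) < Δ.k E.1 := by
  have k1 := kge (Δ := Δ) E.1
  split_ifs <;> omega

lemma isEd_first (E) : Δ.isEd E (Δ.first E) := ⟨_, first_idx E, rfl⟩

lemma isEd_mrk (E) : Δ.isEd E (Δ.mrk E) := ⟨0, by have k1 := kge (Δ := Δ) E.1; omega, rfl⟩

lemma first_tail (E) : Δ.inBox (Δ.st E) (Δ.first E).1 := by
  obtain ⟨e, β⟩ := E
  have k1 := kge (Δ := Δ) e
  rw [first, q_tail (first_idx (e, β))]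
  cases β
  · simp only [Bool.false_eq_true, if_false, st]
    rw [Nat.sub_add_cancel (by omega)]; exact box1 e
  · exact box0 e

lemma G_at_box' {d u} (h : d ∈ Δ.G) (hu : Δ.inBox u d.1) : Δ.boxDart u d ∨
    ∃ E, Δ.st E = u ∧ d = Δ.first E := by
  rcases G_at_box h hu with h | ⟨e, h, h'⟩ | ⟨e, h, h'⟩
  · exact Or.inl h
  · exact Or.inr ⟨(e, true), h.symm, h'⟩
  · exact Or.inr ⟨(e, false), h.symm, h'⟩

lemma isEd_nxt {E d} (h : Δ.isEd E d) : Δ.isEd E (nxt Δ.G d) ∨ Δ.inBox (Δ.en E) (hd d) := by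
  obtain ⟨e, β⟩ := E
  obtain ⟨i, hi, rfl⟩ := h
  simp only at hi
  cases β
  · rcases Nat.eq_zero_or_pos i with rfl | h0
    · right; rw [q_head hi]; exact box0 e
    · left
      obtain ⟨j, rfl⟩ : ∃ j, i = j + 1 := ⟨i-1, by omega⟩
      refine ⟨j, by simp only; omega, ?_⟩
      exact nxt_false hi
  · by_cases h : i + 1 < Δ.k e
    · left; exact ⟨i+1, h, nxt_true h⟩
    · right
      rw [q_head hi]
      have : i + 1 = Δ.k e := by omega
      simp only [if_true, this]
      exact box1 e

lemma isEd_head_box {E d u} (h : Δ.isEd E d) (hu : Δ.inBox u (hd d)) : u = Δ.en E := by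
  obtain ⟨e, β⟩ := E
  obtain ⟨i, hi, rfl⟩ := h
  simp only at hi
  rw [q_head hi] at hu
  cases β
  · have := box_idx hi.le (by simpa using hu)
    rcases this with h | h
    · exact h.2
    · omega
  · have := box_idx (i := i+1) hi (by simpa using hu)
    rcases this with h | h
    · omega
    · exact h.2

lemma isEd_tail_box {E d u} (h : Δ.isEd E d) (hu : Δ.inBox u d.1) : u = Δ.st E := by
  obtain ⟨e, β⟩ := E
  obtain ⟨i, hi, rfl⟩ := h
  simp only at hi
  rw [q_tail hi] at hu
  cases β
  · have := box_idx (i := i+1) hi (by simpa using hu)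
    rcases this with h | h
    · omega
    · exact h.2
  · have := box_idx hi.le (by simpa using hu)
    rcases this with h | h
    · exact h.2
    · omega

section
variable {ι : Type} {K : ι → Type} [∀ c, Group (K c)] {g : ∀ c, Dart → K c}
  {Bad : ι → Pt → Prop}

lemma face_q_succ {f} (hf : GoodFace g Bad Δ.ar Δ.G f) {e β i} (hi : i + 1 < Δ.k e) :
    Δ.q e β i ∈ f ↔ Δ.q e β (i+1) ∈ f := by
  cases β
  · constructor
    · intro h
      obtain ⟨d, hd, h'⟩ := hf.prev h
      rw [← nxt_false hi] at h'
      rwa [nxt_inj sym_G (hf.mem d hd) (q_mem hi) h'] at hd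
    · intro h; rw [← nxt_false hi]; exact hf.nx_mem h
  · constructor
    · intro h; rw [← nxt_true hi]; exact hf.nx_mem h
    · intro h
      obtain ⟨d, hd, h'⟩ := hf.prev h
      rw [← nxt_true hi] at h'
      rwa [nxt_inj sym_G (hf.mem d hd) (q_mem (by omega)) h'] at hd

lemma face_q {f} (hf : GoodFace g Bad Δ.ar Δ.G f) {e β i} (hi : i < Δ.k e) :
    Δ.q e β i ∈ f ↔ Δ.mrk (e, β) ∈ f := by
  induction i with
  | zero => rfl
  | succ i ih => rw [← face_q_succ hf hi]; exact ih (by omega)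

lemma face_isEd {f} (hf : GoodFace g Bad Δ.ar Δ.G f) {E d} (h : Δ.isEd E d) :
    d ∈ f ↔ Δ.mrk E ∈ f := by
  obtain ⟨i, hi, rfl⟩ := h
  exact face_q hf hi

/-- closure of a set of oriented edges and boxes along a face -/
lemma face_closure {f} (hf : GoodFace g Bad Δ.ar Δ.G f) (T : Fin m × Bool → Prop)
    (S : Fin n → Prop) {E} (hE : T E) (hEf : Δ.mrk E ∈ f)
    (h1 : ∀ E, T E → S (Δ.en E)) (h2 : ∀ E, Δ.mrk E ∈ f → S (Δ.st E) → T E) :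
    ∀ d ∈ f, (∃ E, T E ∧ Δ.isEd E d) ∨ ∃ u, S u ∧ Δ.boxDart u d := by
  have key : ∀ d ∈ f, ∀ u, S u → Δ.inBox u d.1 →
      (∃ E, T E ∧ Δ.isEd E d) ∨ ∃ u, S u ∧ Δ.boxDart u d := by
    intro d hd u hu hb
    rcases G_at_box' (hf.mem d hd) hb with h | ⟨E', h, rfl⟩
    · exact Or.inr ⟨u, hu, h⟩
    · refine Or.inl ⟨E', h2 E' ?_ (h ▸ hu), isEd_first E'⟩
      exact (face_isEd hf (isEd_first E')).1 hd
  refine hf.closure hEf (Or.inl ⟨E, hE, isEd_mrk E⟩) ?_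
  intro d hd hR
  rcases hR with ⟨E', hT, hE'⟩ | ⟨u, hu, hb⟩
  · rcases isEd_nxt hE' with h | h
    · exact Or.inl ⟨E', hT, h⟩
    · exact key _ (hf.nx_mem hd) _ (h1 E' hT) h
  · exact key _ (hf.nx_mem hd) u hu hb.2.1

/-- area of an edge-closed set of darts -/
lemma area_sum (F : Finset Dart) (hF : ∀ d ∈ F, d ∈ Δ.G)
    (hc : ∀ e β i, i < Δ.k e → (Δ.q e β i ∈ F ↔ Δ.mrk (e, β) ∈ F)) :
    ∑ d ∈ F, Δ.ar d = ∑ e, (∑ i ∈ Finset.range (Δ.k e), Δ.ar (Δ.q e true i)) *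
      ((if Δ.mrk (e, true) ∈ F then 1 else 0) - (if Δ.mrk (e, false) ∈ F then 1 else 0)) := by
  classical
  let I : Finset ((_ : Fin m × Bool) × ℕ) :=
    (Finset.univ.filter (fun E => Δ.mrk E ∈ F)).sigma (fun E => Finset.range (Δ.k E.1))
  have h1 : ∑ d ∈ F, Δ.ar d = ∑ x ∈ I, Δ.ar (Δ.q x.1.1 x.1.2 x.2) := by
    have hinj : Set.InjOn (fun x : (_ : Fin m × Bool) × ℕ => Δ.q x.1.1 x.1.2 x.2) I := by
      rintro ⟨⟨e, β⟩, i⟩ hx ⟨⟨e', β'⟩, i'⟩ hy h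
      simp only [I, Finset.coe_sigma, Set.mem_sigma_iff, Finset.mem_coe, Finset.mem_range] at hx hy
      obtain ⟨rfl, rfl, rfl⟩ := q_inj hx.2 hy.2 h
      rfl
    rw [← Finset.sum_image (f := Δ.ar) hinj]
    symm
    apply Finset.sum_subset
    · intro d hd
      obtain ⟨⟨⟨e, β⟩, i⟩, hx, rfl⟩ := Finset.mem_image.1 hd
      simp only [I, Finset.mem_sigma, Finset.mem_filter, Finset.mem_univ, true_and,
        Finset.mem_range] at hx
      exact (hc e β i hx.2).2 hx.1
    · intro d hd hn
      rcases mem_G.1 (hF d hd) with ⟨v, h⟩ | ⟨e, β, i, hi, rfl⟩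
      · exact ar_box h
      · exfalso; apply hn
        refine Finset.mem_image.2 ⟨⟨(e, β), i⟩, ?_, rfl⟩
        simp only [I, Finset.mem_sigma, Finset.mem_filter, Finset.mem_univ, true_and,
          Finset.mem_range]
        exact ⟨(hc e β i hi).1 hd, hi⟩
  have h2 : ∀ e i, Δ.ar (Δ.q e false i) = - Δ.ar (Δ.q e true i) := by
    intro e i
    rw [← ar_rev, rev_q]; rfl
  rw [h1, Finset.sum_sigma, Finset.sum_filter, Fintype.sum_prod_type]
  apply Finset.sum_congr rfl
  intro e _
  rw [Fintype.sum_bool]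
  simp only [h2, Finset.sum_neg_distrib]
  split_ifs <;> simp

end
end Draw
end NH
end

section
open Set
namespace NH
namespace Draw
variable {n m : ℕ} {Δ : Draw n m}

variable (Δ) in
def Bad (c : Fin n × Fin n) (p : Pt) : Prop := ∃ u, u ≠ c.1 ∧ u ≠ c.2 ∧ Δ.inBox u p

variable (Δ) in
structure Hol (K : Fin n × Fin n → Type) [∀ c, Group (K c)] (g : ∀ c, Dart → K c) : Prop where
  inv : ∀ c d, g c (rev d) = (g c d)⁻¹
  cell : ∀ c p, (∀ d ∈ cell p, ¬ Δ.Bad c d.1) → ((cell p).map (g c)).prod = 1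
  box : ∀ c v d, (v = c.1 ∨ v = c.2) → Δ.inBox v d.1 → Δ.inBox v (hd d) → g c d = 1
  edge : ∀ c e i, (c = Δ.ends e ∨ c = (Δ.ends e).swap) → 0 < i → i < Δ.k e →
    g c (Δ.dt e i) = 1
  n1 : ∀ e, (Δ.ends e).1 = (Δ.ends e).2 → g (Δ.ends e) (Δ.dt e 0) ≠ 1
  n2 : ∀ e f, e ≠ f → Δ.ends e = Δ.ends f →
    g (Δ.ends e) (Δ.dt e 0) ≠ g (Δ.ends e) (Δ.dt f 0)
  n3 : ∀ e f, e ≠ f → Δ.ends e = (Δ.ends f).swap →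
    g (Δ.ends e) (Δ.dt e 0) ≠ (g (Δ.ends e) (Δ.dt f 0))⁻¹

variable {K : Fin n × Fin n → Type} [∀ c, Group (K c)] {g : ∀ c, Dart → K c}

lemma area_face {f} (hf : GoodFace g Δ.Bad Δ.ar Δ.G f) (hn : f.Nodup) :
    (f.map Δ.ar).sum = ∑ e, (∑ i ∈ Finset.range (Δ.k e), Δ.ar (Δ.q e true i)) *
      ((if Δ.mrk (e, true) ∈ f then 1 else 0) - (if Δ.mrk (e, false) ∈ f then 1 else 0)) := by
  have h := area_sum (Δ := Δ) f.toFinset (by intro d hd; exact hf.mem d (by simpa using hd))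
    (by intro e β i hi; simpa using face_q hf hi)
  rw [List.sum_toFinset _ hn] at h
  simpa using h

lemma D_symm {f} (hf : GoodFace g Δ.Bad Δ.ar Δ.G f) (hn : f.Nodup)
    (h : ∀ e, Δ.mrk (e, true) ∈ f ↔ Δ.mrk (e, false) ∈ f) : False := by
  have h1 := hf.area
  rw [area_face hf hn, Finset.sum_eq_zero] at h1
  · exact lt_irrefl _ h1
  · intro e _
    simp [h e]

/-- value of a dart of the face that is not marked -/
lemma val_one (hh : Δ.Hol K g) {f : List Dart} (c : Fin n × Fin n)
    (T : Fin m × Bool → Prop) (hT : ∀ E, T E → c = Δ.ends E.1 ∨ c = (Δ.ends E.1).swap)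
    (S : Fin n → Prop) (hS : ∀ u, S u → u = c.1 ∨ u = c.2)
    (hall : ∀ d ∈ f, (∃ E, T E ∧ Δ.isEd E d) ∨ ∃ u, S u ∧ Δ.boxDart u d)
    {d} (hd : d ∈ f) (hm : ∀ E, T E → d ≠ Δ.mrk E) : g c d = 1 := by
  rcases hall d hd with ⟨⟨e, β⟩, hE, i, hi, rfl⟩ | ⟨u, hu, hb⟩
  · rcases Nat.eq_zero_or_pos i with rfl | h0
    · exact absurd rfl (hm _ hE)
    · have := hh.edge c e i (hT _ hE) h0 hi
      cases β
      · simp only [q]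
        rw [if_neg (by simp), hh.inv, this, inv_one]
      · exact this
  · exact hh.box c u d (hS u hu) hb.1 hb.2.1

lemma not_bad {f : List Dart} (c : Fin n × Fin n)
    (T : Fin m × Bool → Prop)
    (S : Fin n → Prop) (hS : ∀ u, S u → u = c.1 ∨ u = c.2)
    (hst : ∀ E, T E → S (Δ.st E))
    (hall : ∀ d ∈ f, (∃ E, T E ∧ Δ.isEd E d) ∨ ∃ u, S u ∧ Δ.boxDart u d) :
    ∀ d ∈ f, ¬ Δ.Bad c d.1 := by
  rintro d hd ⟨u, h1, h2, h3⟩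
  rcases hall d hd with ⟨E, hE, hd'⟩ | ⟨u', hu, hb⟩
  · have := isEd_tail_box hd' h3
    rw [this] at h1 h2
    rcases hS _ (hst E hE) <;> contradiction
  · have := inBox_unique h3 hb.1
    subst this
    rcases hS _ hu <;> contradiction

lemma start_in_S {f} (hf : GoodFace g Δ.Bad Δ.ar Δ.G f) (T : Fin m × Bool → Prop)
    (S : Fin n → Prop) (h1 : ∀ E, T E → S (Δ.en E))
    (hall : ∀ d ∈ f, (∃ E, T E ∧ Δ.isEd E d) ∨ ∃ u, S u ∧ Δ.boxDart u d)
    {E} (hE : Δ.mrk E ∈ f) : S (Δ.st E) := by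
  have h := (face_isEd hf (isEd_first E)).2 hE
  obtain ⟨d, hdf, h'⟩ := hf.prev h
  have hb : Δ.inBox (Δ.st E) (hd d) := by
    have := first_tail (Δ := Δ) E
    rw [← h'] at this; exact this
  rcases hall d hdf with ⟨E', hE', hd'⟩ | ⟨u, hu, hbd⟩
  · rw [isEd_head_box hd' hb]; exact h1 E' hE'
  · rw [inBox_unique hb hbd.2.1]; exact hu

lemma D_one (hh : Δ.Hol K g) {f} (hf : GoodFace g Δ.Bad Δ.ar Δ.G f) (hn : f.Nodup) (E)
    (h : ∀ E', Δ.mrk E' ∈ f ↔ E' = E) : False := by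
  have hEf := (h E).2 rfl
  have hall := face_closure hf (fun E' => E' = E) (fun u => u = Δ.en E) rfl hEf
    (by rintro _ rfl; rfl) (fun E' hE' _ => (h E').1 hE')
  have hs : Δ.st E = Δ.en E := start_in_S hf (fun E' => E' = E) (fun u => u = Δ.en E)
    (by rintro _ rfl; rfl) hall hEf
  obtain ⟨e, β⟩ := E
  have hl : (Δ.ends e).1 = (Δ.ends e).2 := by
    cases β
    · exact hs.symm
    · exact hs
  have hS : ∀ u, u = Δ.en (e, β) → u = (Δ.ends e).1 ∨ u = (Δ.ends e).2 := by
    rintro u rfl; cases β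
    · exact Or.inl rfl
    · exact Or.inr rfl
  have hb := not_bad (Δ.ends e) (fun E' => E' = (e, β)) (fun u => u = Δ.en (e, β)) hS
    (by rintro _ rfl; exact hs) hall
  obtain ⟨u, hu, hp⟩ := hf.rot_to hEf
  have h1 := hu.hol (Δ.ends e) (fun d hd => hb d (hp.mem_iff.1 hd))
  rw [List.map_cons, List.prod_cons, List.prod_eq_one (l := u.map _), mul_one] at h1
  · apply hh.n1 e hl
    cases β
    · simp only [mrk, q] at h1
      rw [if_neg (by simp), hh.inv, inv_eq_one] at h1
      exact h1
    · exact h1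
  · intro x hx
    obtain ⟨d, hd, rfl⟩ := List.mem_map.1 hx
    refine val_one hh (f := f) (Δ.ends e) (fun E' => E' = (e, β)) (by rintro _ rfl; exact Or.inl rfl)
      (fun u => u = Δ.en (e, β)) hS hall (hp.mem_iff.1 (List.mem_cons_of_mem _ hd)) ?_
    rintro _ rfl rfl
    have := hp.nodup_iff.2 hn
    exact (List.nodup_cons.1 this).1 hd

lemma D_two (hh : Δ.Hol K g) {f} (hf : GoodFace g Δ.Bad Δ.ar Δ.G f) (hn : f.Nodup) (E E')
    (hne : E.1 ≠ E'.1) (h : ∀ E'', Δ.mrk E'' ∈ f ↔ E'' = E ∨ E'' = E') : False := by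
  have hEf := (h E).2 (Or.inl rfl)
  have hEf' := (h E').2 (Or.inr rfl)
  have step : ∀ E E', E.1 ≠ E'.1 → (∀ E'', Δ.mrk E'' ∈ f ↔ E'' = E ∨ E'' = E') →
      Δ.st E' = Δ.en E := by
    intro E E' hne h
    by_contra hcon
    have hall := face_closure hf (fun E' => E' = E) (fun u => u = Δ.en E) rfl ((h E).2 (Or.inl rfl))
      (by rintro _ rfl; rfl) (by
        intro E'' h1 h2
        rcases (h E'').1 h1 with h3 | h3
        · exact h3
        · rw [h3] at h2; exact absurd h2 hcon)
    exact hcon (start_in_S hf (fun E' => E' = E) (fun u => u = Δ.en E)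
      (by rintro _ rfl; rfl) hall ((h E').2 (Or.inr rfl)))
  have s1 := step E E' hne h
  have s2 := step E' E hne.symm (fun E'' => (h E'').trans or_comm)
  let T : Fin m × Bool → Prop := fun E'' => E'' = E ∨ E'' = E'
  let S : Fin n → Prop := fun u => u = Δ.en E ∨ u = Δ.en E'
  have hall := face_closure hf T S (E := E) (Or.inl rfl) hEf
    (by rintro _ (rfl | rfl); exacts [Or.inl rfl, Or.inr rfl]) (fun E'' hE _ => (h E'').1 hE)
  obtain ⟨e, β⟩ := E
  obtain ⟨e', β'⟩ := E'
  simp only [st, en] at s1 s2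
  simp only at hne
  have hends : (β = β' → Δ.ends e = (Δ.ends e').swap) ∧ (β ≠ β' → Δ.ends e = Δ.ends e') := by
    cases β <;> cases β' <;> simp at s1 s2 ⊢ <;>
      exact Prod.ext (by simp [s1, s2]) (by simp [s1, s2])
  have hS : ∀ u, S u → u = (Δ.ends e).1 ∨ u = (Δ.ends e).2 := by
    rintro u (rfl | rfl)
    · cases β
      · exact Or.inl rfl
      · exact Or.inr rfl
    · simp only [en]
      rw [← s2]
      cases β
      · exact Or.inr rfl
      · exact Or.inl rfl
  have hT : ∀ E, T E → Δ.ends e = Δ.ends E.1 ∨ Δ.ends e = (Δ.ends E.1).swap := by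
    rintro _ (rfl | rfl)
    · exact Or.inl rfl
    · by_cases hb : β = β'
      · exact Or.inr (hends.1 hb)
      · exact Or.inl (hends.2 hb)
  have hb := not_bad (Δ.ends e) T S hS
    (by rintro _ (rfl | rfl); exacts [Or.inr s2, Or.inl s1]) hall
  obtain ⟨u, hu, hp⟩ := hf.rot_to hEf
  have h1 := hu.hol (Δ.ends e) (fun d hd => hb d (hp.mem_iff.1 hd))
  have hmem : Δ.mrk (e', β') ∈ u := by
    have := hp.mem_iff.2 hEf'
    rcases List.mem_cons.1 this with h | h
    · exact absurd (congrArg Prod.fst (mrk_inj h)) (Ne.symm hne)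
    · exact h
  obtain ⟨u1, u2, rfl⟩ := List.append_of_mem hmem
  have nod := hp.nodup_iff.2 hn
  rw [List.nodup_cons, List.nodup_append'] at nod
  obtain ⟨nod1, nod2, nod3, nod4⟩ := nod
  have one : ∀ d ∈ u1 ++ u2, g (Δ.ends e) d = 1 := by
    intro d hd
    refine val_one hh (f := f) (Δ.ends e) T hT S hS hall (hp.mem_iff.1 (by
      simp at hd ⊢; tauto)) ?_
    rintro _ (rfl | rfl) rfl
    · apply nod1; simp at hd ⊢; tauto
    · rcases List.mem_append.1 hd with h | h
      · exact nod4 h (by simp)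
      · exact (List.nodup_cons.1 nod3).1 h
  rw [List.map_cons, List.prod_cons, List.map_append, List.prod_append, List.map_cons,
    List.prod_cons, List.prod_eq_one (l := u1.map _), List.prod_eq_one (l := u2.map _), mul_one,
    one_mul] at h1
  rotate_left
  · intro x hx
    obtain ⟨d, hd, rfl⟩ := List.mem_map.1 hx
    exact one d (by simp [hd])
  · intro x hx
    obtain ⟨d, hd, rfl⟩ := List.mem_map.1 hx
    exact one d (by simp [hd])
  have v : ∀ e'' b, g (Δ.ends e) (Δ.mrk (e'', b)) =
      if b then g (Δ.ends e) (Δ.dt e'' 0) else (g (Δ.ends e) (Δ.dt e'' 0))⁻¹ := by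
    intro e'' b
    cases b
    · simp [mrk, q, hh.inv]
    · simp [mrk, q]
  rw [v, v] at h1
  cases β <;> cases β' <;> simp at h1 hends
  · refine hh.n3 e e' hne hends ?_
    rw [inv_mul_eq_one] at h1
    exact h1
  · refine hh.n2 e e' hne hends ?_
    rw [inv_mul_eq_one] at h1
    exact h1
  · refine hh.n2 e e' hne hends ?_
    exact eq_of_mul_inv_eq_one h1
  · refine hh.n3 e e' hne hends ?_
    exact eq_inv_of_mul_eq_one_left h1

open Classical in
lemma D_three (hh : Δ.Hol K g) {f} (hf : GoodFace g Δ.Bad Δ.ar Δ.G f) (hn : f.Nodup) :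
    3 ≤ (Finset.univ.filter (fun E => Δ.mrk E ∈ f)).card := by
  by_contra hlt
  have hmem : ∀ E, Δ.mrk E ∈ f ↔ E ∈ Finset.univ.filter (fun E => Δ.mrk E ∈ f) := by simp
  generalize Finset.univ.filter (fun E => Δ.mrk E ∈ f) = A at hlt hmem
  have : A.card = 0 ∨ A.card = 1 ∨ A.card = 2 := by omega
  rcases this with h | h | h
  · rw [Finset.card_eq_zero] at h
    subst h
    exact D_symm hf hn (by intro e; simp [hmem])
  · obtain ⟨E, rfl⟩ := Finset.card_eq_one.1 h
    exact D_one hh hf hn E (by simpa using hmem)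
  · obtain ⟨⟨e, β⟩, ⟨e', β'⟩, hne, rfl⟩ := Finset.card_eq_two.1 h
    by_cases he : e = e'
    · subst he
      apply D_symm hf hn
      intro e''
      rw [hmem, hmem]
      cases β <;> cases β' <;> simp at hne ⊢
    · exact D_two hh hf hn (e, β) (e', β') he (by simpa using hmem)

open Classical in
lemma D_total (hh : Δ.Hol K g) : ∀ (fs : List (List Dart)), Fam g Δ.Bad Δ.ar Δ.G fs →
    3 * fs.length ≤ (Finset.univ.filter (fun E => Δ.mrk E ∈ fs.flatten)).card := by
  intro fs
  induction fs with
  | nil => intro _; simp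
  | cons f fs ih =>
    intro h
    have nod := h.nodup
    rw [List.flatten_cons, List.nodup_append'] at nod
    have h1 := ih ⟨nod.2.1, fun f hf => h.good f (List.mem_cons_of_mem _ hf)⟩
    have h2 := D_three hh (h.good f (by simp)) nod.1
    have : (Finset.univ.filter (fun E => Δ.mrk E ∈ (f :: fs).flatten)) =
      (Finset.univ.filter (fun E => Δ.mrk E ∈ f)) ∪
      (Finset.univ.filter (fun E => Δ.mrk E ∈ fs.flatten)) := by
      ext E; simp only [List.flatten_cons, List.mem_append, Finset.mem_filter, Finset.mem_univ,
        true_and, Finset.mem_union]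
    rw [this, Finset.card_union_of_disjoint]
    · simp only [List.length_cons]; omega
    · rw [Finset.disjoint_left]
      intro E hE hE'
      exact nod.2.2 (Finset.mem_filter.1 hE).2 (Finset.mem_filter.1 hE').2

lemma area_total : ∀ (fs : List (List Dart)), Fam g Δ.Bad Δ.ar Δ.G fs → fs ≠ [] →
    0 < (fs.flatten.map Δ.ar).sum := by
  intro fs
  induction fs with
  | nil => intro _ h; exact absurd rfl h
  | cons f fs ih =>
    intro h _
    have nod := h.nodup
    rw [List.flatten_cons, List.nodup_append'] at nod
    have h1 := ih ⟨nod.2.1, fun f hf => h.good f (List.mem_cons_of_mem _ hf)⟩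
    have h2 := (h.good f (by simp)).area
    rw [List.flatten_cons, List.map_append, List.sum_append]
    by_cases he : fs = []
    · subst he; simpa using h2
    · have := h1 he
      omega

theorem CT (hn : 2 ≤ n) (hh : Δ.Hol K g) : m + 4 ≤ 3 * n := by
  classical
  have hne : Δ.VG.Nonempty := ⟨Δ.root ⟨0, by omega⟩, Δ.mem_VG.2 (Or.inl ⟨_, root_box _⟩)⟩
  have hI : Inv g Δ.Bad Δ.ar Δ.G Δ.VG.card :=
    euler_main hh.inv ar_rev ar_cell hh.cell sym_G (fun d hd => isG_tail (mem_G.1 hd)) hne (by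
      rintro c p hp ⟨u, _, _, hu⟩
      exact hp (Δ.mem_VG.2 (Or.inl ⟨u, hu⟩)))
  obtain ⟨fs, hfs, hcount⟩ := hI
  have hG := card_G (Δ := Δ)
  by_cases he : fs = []
  · subst he
    simp at hcount
    omega
  · have h3 := D_total hh fs hfs
    have hpos := area_total fs hfs he
    have hlt : (Finset.univ.filter (fun E => Δ.mrk E ∈ fs.flatten)).card < 2 * m := by
      by_contra hge
      have hcard : Fintype.card (Fin m × Bool) = 2 * m := by simp [mul_comm]
      have huniv : Finset.univ.filter (fun E => Δ.mrk E ∈ fs.flatten) = Finset.univ := by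
        apply Finset.eq_univ_of_card
        refine le_antisymm (Finset.card_le_univ _) ?_
        omega
      have hall : ∀ E, Δ.mrk E ∈ fs.flatten := by
        intro E
        have : E ∈ Finset.univ.filter (fun E => Δ.mrk E ∈ fs.flatten) := by
          rw [huniv]; exact Finset.mem_univ _
        exact (Finset.mem_filter.1 this).2
      have h := area_sum (Δ := Δ) fs.flatten.toFinset (by
        intro d hd
        obtain ⟨f, hf, hdf⟩ := List.mem_flatten.1 (List.mem_toFinset.1 hd)
        exact (hfs.good f hf).mem d hdf) (by
        intro e β i hi
        rw [List.mem_toFinset, List.mem_toFinset, List.mem_flatten, List.mem_flatten]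
        constructor
        · rintro ⟨f, hf, h⟩; exact ⟨f, hf, (face_q (hfs.good f hf) hi).1 h⟩
        · rintro ⟨f, hf, h⟩; exact ⟨f, hf, (face_q (hfs.good f hf) hi).2 h⟩)
      rw [List.sum_toFinset _ hfs.nodup] at h
      simp only [List.mem_toFinset, hall, if_true, sub_self, mul_zero, Finset.sum_const_zero] at h
      exact absurd h hpos.ne'
    omega

end Draw
end NH
end

section
open Set
namespace NH

section hol
variable {X : Type} [TopologicalSpace X] [PathConnectedSpace X]

abbrev HG (X : Type) [TopologicalSpace X] [PathConnectedSpace X] : Type :=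
  (FundamentalGroup X (Classical.arbitrary X))ᵐᵒᵖ

noncomputable def chq (a : X) :
    FundamentalGroupoid.mk (Classical.arbitrary X) ⟶ FundamentalGroupoid.mk a :=
  Path.Homotopic.Quotient.mk (PathConnectedSpace.somePath _ _)

def toHom {a b : X} (p : Path a b) : FundamentalGroupoid.mk a ⟶ FundamentalGroupoid.mk b :=
  Path.Homotopic.Quotient.mk p

open CategoryTheory in
noncomputable def hol {a b : X} (p : Path a b) : HG X :=
  MulOpposite.op (chq a ≫ toHom p ≫ inv (chq b) : End _)

open CategoryTheory in
lemma hol_trans {a b c : X} (p : Path a b) (q : Path b c) : hol (p.trans q) = hol p * hol q := by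
  unfold hol
  rw [← MulOpposite.op_mul, End.mul_def]
  have : toHom (p.trans q) = toHom p ≫ toHom q := rfl
  rw [this]
  simp

open CategoryTheory in
lemma hol_inj {a b : X} {p q : Path a b} : hol p = hol q ↔ p.Homotopic q := by
  unfold hol
  rw [MulOpposite.op_inj]
  constructor
  · intro h
    have h : toHom p = toHom q :=
      (cancel_mono (inv (chq b))).1 ((cancel_epi (chq a)).1 h)
    exact Path.Homotopic.Quotient.eq.1 h
  · intro h
    have : toHom p = toHom q := Path.Homotopic.Quotient.eq.2 h
    rw [this]

lemma hol_refl (a : X) : hol (Path.refl a) = 1 := by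
  have h := hol_trans (Path.refl a) (Path.refl a)
  rw [Path.refl_trans_refl] at h
  exact (left_eq_mul.1 h)

/-- Two homotopic paths in a simply connected space have the same image. -/
lemma hol_map {Y : Type} [TopologicalSpace Y] [SimplyConnectedSpace Y] (F : C(Y, X)) {a b : Y}
    (p q : Path a b) : hol (p.map F.continuous) = hol (q.map F.continuous) :=
  hol_inj.2 ((SimplyConnectedSpace.paths_homotopic p q).map F)

noncomputable def Gam (F : C(ℝ, X)) (s t : ℝ) : HG X :=
  hol ((Path.segment s t).map F.continuous)

lemma Gam_trans (F : C(ℝ, X)) (s t u : ℝ) : Gam F s t * Gam F t u = Gam F s u := by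
  unfold Gam
  rw [← hol_trans, ← Path.map_trans]
  exact hol_map F _ _

lemma Gam_self (F : C(ℝ, X)) (s : ℝ) : Gam F s s = 1 := by
  have := Gam_trans F s s s
  simpa using this

lemma Gam_symm (F : C(ℝ, X)) (s t : ℝ) : Gam F s t = (Gam F t s)⁻¹ := by
  rw [eq_inv_iff_mul_eq_one, Gam_trans, Gam_self]

end hol

lemma compl_pc {S : Set ℂ} (hS : S.Finite) : PathConnectedSpace ↥(Sᶜ) :=
  isPathConnected_iff_pathConnectedSpace.1
    (hS.countable.isPathConnected_compl_of_one_lt_rank (by rw [Complex.rank_real_complex]; norm_num))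

section plane
variable {S : Set ℂ} [PathConnectedSpace ↥(Sᶜ)]

lemma hol_convex {C : Set ℂ} (hC : Convex ℝ C) (hCS : C ⊆ Sᶜ) {a b : ↥(Sᶜ)} (p q : Path a b)
    (hp : ∀ t, (p t : ℂ) ∈ C) (hq : ∀ t, (q t : ℂ) ∈ C) : hol p = hol q := by
  have ha : (a : ℂ) ∈ C := by simpa using hp 0
  have hb : (b : ℂ) ∈ C := by simpa using hp 1
  have : ContractibleSpace C := hC.contractibleSpace ⟨a, ha⟩
  let F : C(C, ↥(Sᶜ)) := ⟨fun x => ⟨x, hCS x.2⟩, by fun_prop⟩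
  let p' : Path (⟨a, ha⟩ : C) ⟨b, hb⟩ :=
    { toFun := fun t => ⟨p t, hp t⟩, continuous_toFun := by fun_prop, source' := by simp, target' := by simp }
  let q' : Path (⟨a, ha⟩ : C) ⟨b, hb⟩ :=
    { toFun := fun t => ⟨q t, hq t⟩, continuous_toFun := by fun_prop, source' := by simp, target' := by simp }
  exact hol_map F p' q'

lemma seg_mem (a b : ℂ) (t : unitInterval) : Path.segment a b t ∈ segment ℝ a b := by
  rw [← Path.range_segment]; exact mem_range_self t

noncomputable def sgp (a b : ℂ) (h : segment ℝ a b ⊆ Sᶜ) :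
    Path (⟨a, h (left_mem_segment ℝ a b)⟩ : ↥(Sᶜ)) ⟨b, h (right_mem_segment ℝ a b)⟩ where
  toFun := fun t => ⟨Path.segment a b t, h (seg_mem a b t)⟩
  continuous_toFun := by fun_prop
  source' := by simp
  target' := by simp

open Classical in
variable (S) in
noncomputable def sg (a b : ℂ) : HG ↥(Sᶜ) :=
  if h : segment ℝ a b ⊆ Sᶜ then hol (sgp a b h) else 1

lemma sg_self (a : ℂ) : sg S a a = 1 := by
  unfold sg
  split_ifs with h
  · have : sgp a a h = Path.refl _ := by
      ext t; simp [sgp]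
    rw [this, hol_refl]
  · rfl

lemma sg_eq {C : Set ℂ} (hC : Convex ℝ C) (hCS : C ⊆ Sᶜ) {a b : ↥(Sᶜ)} (p : Path a b)
    (hp : ∀ t, (p t : ℂ) ∈ C) : hol p = sg S a b := by
  have ha : (a : ℂ) ∈ C := by simpa using hp 0
  have hb : (b : ℂ) ∈ C := by simpa using hp 1
  have h : segment ℝ (a:ℂ) b ⊆ C := hC.segment_subset ha hb
  unfold sg
  rw [dif_pos (h.trans hCS)]
  refine hol_convex hC hCS _ _ hp ?_
  intro t
  exact h (seg_mem _ _ t)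

lemma sg_trans {C : Set ℂ} (hC : Convex ℝ C) (hCS : C ⊆ Sᶜ) {a b c : ℂ} (ha : a ∈ C) (hb : b ∈ C)
    (hc : c ∈ C) : sg S a b * sg S b c = sg S a c := by
  have h1 : segment ℝ a b ⊆ C := hC.segment_subset ha hb
  have h2 : segment ℝ b c ⊆ C := hC.segment_subset hb hc
  have := sg_eq hC hCS ((sgp a b (h1.trans hCS)).trans (sgp b c (h2.trans hCS))) (by
    intro t
    rw [Path.trans_apply]
    split_ifs
    · exact h1 (seg_mem a b _)
    · exact h2 (seg_mem b c _))
  rw [hol_trans] at this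
  rw [← this]
  unfold sg
  rw [dif_pos (h1.trans hCS), dif_pos (h2.trans hCS)]

lemma sg_symm (a b : ℂ) : sg S b a = (sg S a b)⁻¹ := by
  by_cases h : segment ℝ a b ⊆ Sᶜ
  · rw [eq_inv_iff_mul_eq_one, sg_trans (convex_segment a b) h (right_mem_segment ℝ a b)
      (left_mem_segment ℝ a b) (right_mem_segment ℝ a b), sg_self]
  · have h' : ¬ segment ℝ b a ⊆ Sᶜ := by rwa [segment_symm]
    unfold sg
    rw [dif_neg h, dif_neg h', inv_one]

lemma Gam_eq_sg {C : Set ℂ} (hC : Convex ℝ C) (hCS : C ⊆ Sᶜ) (F : C(ℝ, ↥(Sᶜ))) {s t : ℝ}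
    (h : ∀ u ∈ uIcc s t, (F u : ℂ) ∈ C) : Gam F s t = sg S (F s) (F t) := by
  apply sg_eq hC hCS
  intro u
  apply h
  rw [← segment_eq_uIcc, ← Path.range_segment]
  exact mem_range_self u

end plane
end NH
end

section
open Set
namespace NH

lemma hol_cast {X : Type} [TopologicalSpace X] [PathConnectedSpace X] {a b a' b' : X}
    (p : Path a b) (h : a' = a) (h' : b' = b) : hol (p.cast h h') = hol p := by
  subst h; subst h'; rfl

def Sv {n : ℕ} (φ : Fin n → ℂ) (c : Fin n × Fin n) : Set ℂ := {z | ∃ u, u ≠ c.1 ∧ u ≠ c.2 ∧ φ u = z}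

lemma Sv_finite {n : ℕ} (φ : Fin n → ℂ) (c : Fin n × Fin n) : (Sv φ c).Finite :=
  (Set.finite_range φ).subset (by rintro _ ⟨u, _, _, rfl⟩; exact mem_range_self u)

instance {n : ℕ} (φ : Fin n → ℂ) (c : Fin n × Fin n) : PathConnectedSpace ↥((Sv φ c)ᶜ) :=
  compl_pc (Sv_finite φ c)

lemma edgeHom {n : ℕ} {φ : Fin n → ℂ} {c : Fin n × Fin n} {c₀ c₁ : ℝ → ℂ}
    (F F' : C(ℝ, ↥((Sv φ c)ᶜ)))
    (h0 : ∀ x ∈ Icc (0:ℝ) 1, (F x : ℂ) = c₀ x) (h1 : ∀ x ∈ Icc (0:ℝ) 1, (F' x : ℂ) = c₁ x)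
    (hs : c₀ 0 = φ c.1) (hs' : c₁ 0 = φ c.1) (he : c₀ 1 = φ c.2) (he' : c₁ 1 = φ c.2)
    (h : Gam F 0 1 = Gam F' 0 1) : EdgeHomotopic φ c c₀ c₁ := by
  have m0 : (0:ℝ) ∈ Icc (0:ℝ) 1 := by simp
  have m1 : (1:ℝ) ∈ Icc (0:ℝ) 1 := by simp
  have e0 : F 0 = F' 0 := Subtype.ext (by rw [h0 0 m0, h1 0 m0, hs, hs'])
  have e1 : F 1 = F' 1 := Subtype.ext (by rw [h0 1 m1, h1 1 m1, he, he'])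
  unfold Gam at h
  rw [← hol_cast ((Path.segment (0:ℝ) 1).map F'.continuous) e0 e1, hol_inj] at h
  obtain ⟨H⟩ := h
  have pr : ∀ x (hx : x ∈ Icc (0:ℝ) 1), projIcc 0 1 zero_le_one x = ⟨x, hx⟩ :=
    fun x hx => projIcc_of_mem _ hx
  have p0 : projIcc (0:ℝ) 1 zero_le_one 0 = 0 := pr 0 m0
  have p1 : projIcc (0:ℝ) 1 zero_le_one 1 = 1 := pr 1 m1
  refine ⟨fun x t => H (projIcc 0 1 zero_le_one t, projIcc 0 1 zero_le_one x), ?_, ?_, ?_, ?_, ?_⟩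
  · apply Continuous.continuousOn
    have : Continuous (fun p : ℝ × ℝ => (projIcc (0:ℝ) 1 zero_le_one p.2, projIcc (0:ℝ) 1 zero_le_one p.1)) :=
      (continuous_projIcc.comp continuous_snd).prodMk (continuous_projIcc.comp continuous_fst)
    exact continuous_subtype_val.comp (H.continuous.comp this)
  · intro x hx
    simp only [p0]
    rw [H.apply_zero, pr x hx]
    rw [← h0 x hx]
    simp [AffineMap.lineMap_apply]
  · intro x hx
    simp only [p1]
    rw [H.apply_one, pr x hx]
    rw [← h1 x hx]
    simp [AffineMap.lineMap_apply]
  · intro t ht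
    simp only [p0, p1]
    rw [H.source, H.target, h0 0 m0, h0 1 m1]
    exact ⟨hs, he⟩
  · intro x hx t ht v hv hv' hc
    exact (H (projIcc 0 1 zero_le_one t, projIcc 0 1 zero_le_one x)).2 ⟨v, hv, hv', hc.symm⟩

lemma Gam_rev {X : Type} [TopologicalSpace X] [PathConnectedSpace X] (F F' : C(ℝ, X))
    (h : ∀ t, F' t = F (1 - t)) : Gam F' 0 1 = Gam F 1 0 := by
  have e0 : F' 0 = F 1 := by rw [h]; simp
  have e1 : F' 1 = F 0 := by rw [h]; simp
  unfold Gam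
  rw [← hol_cast ((Path.segment (1:ℝ) 0).map F.continuous) e0 e1]
  congr 1
  ext t
  simp [h, AffineMap.lineMap_apply]
  congr 1; ring

end NH
end

section
open Set Filter Topology
namespace NH

def Q (a : ℂ) (ρ : ℝ) : Set ℂ := {z | |z.re - a.re| ≤ ρ ∧ |z.im - a.im| ≤ ρ}

lemma Q_self {a : ℂ} {ρ : ℝ} (h : 0 ≤ ρ) : a ∈ Q a ρ := by simp [Q, h]

lemma Q_symm {a b : ℂ} {ρ : ℝ} (h : a ∈ Q b ρ) : b ∈ Q a ρ := by
  simp only [Q, mem_ofPred_eq] at *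
  rw [abs_sub_comm, abs_sub_comm b.im]; exact h

lemma Q_trans {a b c : ℂ} {ρ σ τ : ℝ} (h : a ∈ Q b ρ) (h' : b ∈ Q c σ) (hs : ρ + σ ≤ τ) :
    a ∈ Q c τ := by
  simp only [Q, mem_ofPred_eq] at *
  constructor
  · have := abs_sub_le a.re b.re c.re; linarith [h.1, h'.1]
  · have := abs_sub_le a.im b.im c.im; linarith [h.2, h'.2]

lemma Q_mono {a b : ℂ} {ρ σ : ℝ} (h : a ∈ Q b ρ) (hs : ρ ≤ σ) : a ∈ Q b σ :=
  ⟨h.1.trans hs, h.2.trans hs⟩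

lemma Q_of_dist {a b : ℂ} {ρ : ℝ} (h : dist a b ≤ ρ) : a ∈ Q b ρ := by
  rw [Complex.dist_eq] at h
  exact ⟨(Complex.abs_re_le_norm (a - b)).trans h, (Complex.abs_im_le_norm (a - b)).trans h⟩

lemma dist_of_Q {a b : ℂ} {ρ : ℝ} (h : a ∈ Q b ρ) : dist a b ≤ 2 * ρ := by
  rw [Complex.dist_eq]
  have := Complex.norm_le_abs_re_add_abs_im (a - b)
  have h1 := h.1
  have h2 := h.2
  simp only [Complex.sub_re, Complex.sub_im] at this
  linarith

lemma Q_eq (a : ℂ) (ρ : ℝ) : Q a ρ = Icc (a.re - ρ) (a.re + ρ) ×ℂ Icc (a.im - ρ) (a.im + ρ) := by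
  ext z
  simp only [Q, mem_ofPred_eq, Complex.mem_reProdIm, mem_Icc, abs_le]
  constructor
  · rintro ⟨⟨_, _⟩, _, _⟩; refine ⟨⟨?_, ?_⟩, ?_, ?_⟩ <;> linarith
  · rintro ⟨⟨_, _⟩, _, _⟩; refine ⟨⟨?_, ?_⟩, ?_, ?_⟩ <;> linarith

lemma rect_convex (a b c d : ℝ) : Convex ℝ (Icc a b ×ℂ Icc c d) :=
  ((convex_Icc a b).linear_preimage Complex.reLm).inter
    ((convex_Icc c d).linear_preimage Complex.imLm)

lemma Q_convex (a : ℂ) (ρ : ℝ) : Convex ℝ (Q a ρ) := by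
  rw [Q_eq]; exact rect_convex _ _ _ _

lemma Q_nhds (a : ℂ) {ρ : ℝ} (h : 0 < ρ) : Q a ρ ∈ 𝓝 a :=
  Filter.mem_of_superset (Metric.closedBall_mem_nhds a h) (fun _ hz => Q_of_dist hz)

lemma sep {A B : Set ℂ} (hA : IsCompact A) (hB : IsCompact B) (hd : Disjoint A B) {c : ℝ} (hc : 0 < c) :
    ∀ᶠ ρ in 𝓝[>] (0:ℝ), ∀ a ∈ A, ∀ b ∈ B, a ∉ Q b (c * ρ) := by
  obtain ⟨ε, hε, h⟩ := hd.exists_thickenings hA hB.isClosed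
  have : ∀ᶠ ρ in 𝓝[>] (0:ℝ), ρ < ε / (2 * c) :=
    nhdsWithin_le_nhds (gt_mem_nhds (by positivity))
  filter_upwards [this, self_mem_nhdsWithin] with ρ hρ hρ0 a ha b hb hab
  have h1 := dist_of_Q hab
  rw [lt_div_iff₀ (by positivity)] at hρ
  refine Set.disjoint_left.1 h (Metric.mem_thickening_iff.2 ⟨a, ha, ?_⟩)
    (Metric.self_subset_thickening hε B hb)
  rw [dist_comm]
  linarith

structure PG (n m : ℕ) where
  φ : Fin n → ℂ
  hφ : Function.Injective φ
  ends : Fin m → Fin n × Fin n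
  γ : Fin m → ℝ → ℂ
  hc : ∀ e, Continuous (γ e)
  h0 : ∀ e, γ e 0 = φ (ends e).1
  h1 : ∀ e, γ e 1 = φ (ends e).2
  hv : ∀ e, ∀ t ∈ Ioo (0:ℝ) 1, ∀ v, γ e t ≠ φ v
  hs : ∀ e, ∀ s ∈ Ioo (0:ℝ) 1, ∀ t ∈ Ioo (0:ℝ) 1, γ e s = γ e t → s = t
  hp : ∀ e f, e ≠ f → ∀ s ∈ Ioo (0:ℝ) 1, ∀ t ∈ Ioo (0:ℝ) 1, γ e s ≠ γ f t
  hav : ∀ e t u, γ e t = φ u → u = (ends e).1 ∨ u = (ends e).2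

variable {n m : ℕ}

structure Fine (A : PG n m) where
  (R η r t0 t1 r2 ω δ : ℝ)
  R0 : 0 < R
  hR : ∀ u v z, z ∈ Q (A.φ u) R → z ∈ Q (A.φ v) R → u = v
  η0 : 0 < η
  η1 : η ≤ 1 / 8
  hη0 : ∀ e, ∀ t ∈ Icc 0 (2 * η), A.γ e t ∈ Q (A.φ (A.ends e).1) R
  hη1 : ∀ e, ∀ t ∈ Icc (1 - 2 * η) 1, A.γ e t ∈ Q (A.φ (A.ends e).2) R
  r0 : 0 < r
  rR : 2 * r ≤ R
  hr : ∀ e u, ∀ t ∈ Icc η (1 - η), A.γ e t ∉ Q (A.φ u) (2 * r)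
  t00 : 0 < t0
  t0η : t0 < η
  ht0 : ∀ e, A.γ e t0 ∈ Q (A.φ (A.ends e).1) r
  t11 : t1 < 1
  t1η : 1 - η < t1
  ht1 : ∀ e, A.γ e t1 ∈ Q (A.φ (A.ends e).2) r
  r20 : 0 < r2
  r2r : r2 ≤ r
  hr2 : ∀ e u, ∀ t ∈ Icc t0 t1, A.γ e t ∉ Q (A.φ u) r2
  ω0 : 0 < ω
  ωη : ω ≤ η
  hω : ∀ e, ∀ s ∈ Icc (0:ℝ) 1, ∀ t ∈ Icc (0:ℝ) 1, |s - t| ≤ ω → A.γ e s ∈ Q (A.γ e t) (r2 / 4)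
  δ0 : 0 < δ
  δr : 20 * δ ≤ r2
  hδ : ∀ e, ∀ s ∈ Icc t0 t1, ∀ t ∈ Icc t0 t1, A.γ e s ∈ Q (A.γ e t) (5 * δ) → |s - t| < ω
  hδ' : ∀ e f, e ≠ f → ∀ s ∈ Icc t0 t1, ∀ t ∈ Icc t0 t1, A.γ e s ∉ Q (A.γ f t) (5 * δ)

lemma ev_le {c : ℝ} (hc : 0 < c) : ∀ᶠ ρ in 𝓝[>] (0:ℝ), ρ ≤ c :=
  nhdsWithin_le_nhds (ge_mem_nhds hc)
lemma ev_pos : ∀ᶠ ρ in 𝓝[>] (0:ℝ), 0 < ρ := self_mem_nhdsWithin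

lemma near {f : ℝ → ℂ} (hf : Continuous f) (x : ℝ) {ρ : ℝ} (hρ : 0 < ρ) :
    ∀ᶠ η in 𝓝[>] (0:ℝ), ∀ t, |t - x| ≤ 2 * η → f t ∈ Q (f x) ρ := by
  have := hf.continuousAt (x := x) (Q_nhds (f x) hρ)
  obtain ⟨ε, hε, h⟩ := Metric.mem_nhds_iff.1 this
  filter_upwards [ev_le (c := ε / 4) (by positivity), ev_pos] with η h1 h2 t ht
  apply h
  rw [Metric.mem_ball, Real.dist_eq]
  linarith

theorem exists_fine (A : PG n m) : Nonempty (Fine A) := by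
  have eR : ∀ᶠ R in 𝓝[>] (0:ℝ), ∀ u v z, z ∈ Q (A.φ u) R → z ∈ Q (A.φ v) R → u = v := by
    simp only [eventually_all]
    intro u v
    by_cases huv : u = v
    · exact Eventually.of_forall (fun _ _ _ _ => huv)
    · have := sep (isCompact_singleton (x := A.φ u)) (isCompact_singleton (x := A.φ v))
        (by simpa using fun h => huv (A.hφ h)) (c := 2) (by norm_num)
      filter_upwards [this] with R hR z hz hz'
      exact absurd (Q_trans (Q_symm hz) hz' (by linarith)) (hR _ rfl _ rfl)
  obtain ⟨R, hR, R0⟩ := (eR.and ev_pos).exists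
  have e1 : ∀ᶠ η in 𝓝[>] (0:ℝ), ∀ e, (∀ t, |t - 0| ≤ 2 * η → A.γ e t ∈ Q (A.γ e 0) R) ∧
      (∀ t, |t - 1| ≤ 2 * η → A.γ e t ∈ Q (A.γ e 1) R) :=
    eventually_all.2 (fun e => (near (A.hc e) 0 R0).and (near (A.hc e) 1 R0))
  obtain ⟨η, hη, η0, η1⟩ := (e1.and (ev_pos.and (ev_le (c := 1 / 8) (by norm_num)))).exists
  have cpt : ∀ e a b, IsCompact (A.γ e '' Icc a b) := fun e a b => isCompact_Icc.image (A.hc e)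
  have dj : ∀ e u a b, 0 < a → b < 1 → Disjoint (A.γ e '' Icc a b) {A.φ u} := by
    intro e u a b ha hb
    rw [Set.disjoint_singleton_right]
    rintro ⟨t, ht, h⟩
    exact A.hv e t ⟨by linarith [ht.1], by linarith [ht.2]⟩ u h
  have e2 : ∀ᶠ r in 𝓝[>] (0:ℝ), ∀ e u, ∀ t ∈ Icc η (1 - η), A.γ e t ∉ Q (A.φ u) (2 * r) := by
    refine eventually_all.2 fun e => eventually_all.2 fun u => ?_
    filter_upwards [sep (cpt e η (1 - η)) isCompact_singleton (dj e u η (1-η) η0 (by linarith))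
      (c := 2) (by norm_num)] with r h t ht
    exact h _ (mem_image_of_mem _ ht) _ rfl
  obtain ⟨r, hr, r0, rR⟩ := (e2.and (ev_pos.and (ev_le (c := R / 2) (by positivity)))).exists
  have e3 : ∀ᶠ η in 𝓝[>] (0:ℝ), ∀ e, (∀ t, |t - 0| ≤ 2 * η → A.γ e t ∈ Q (A.γ e 0) r) ∧
      (∀ t, |t - 1| ≤ 2 * η → A.γ e t ∈ Q (A.γ e 1) r) :=
    eventually_all.2 (fun e => (near (A.hc e) 0 r0).and (near (A.hc e) 1 r0))
  obtain ⟨t0, ht0, t00, t0η⟩ := (e3.and (ev_pos.and (ev_le (c := η / 2) (by positivity)))).exists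
  have e4 : ∀ᶠ r2 in 𝓝[>] (0:ℝ), ∀ e u, ∀ t ∈ Icc t0 (1 - t0), A.γ e t ∉ Q (A.φ u) (1 * r2) := by
    refine eventually_all.2 fun e => eventually_all.2 fun u => ?_
    filter_upwards [sep (cpt e t0 (1 - t0)) isCompact_singleton (dj e u t0 (1-t0) t00 (by linarith))
      (c := 1) (by norm_num)] with r h t ht
    exact h _ (mem_image_of_mem _ ht) _ rfl
  obtain ⟨r2, hr2, r20, r2r⟩ := (e4.and (ev_pos.and (ev_le r0))).exists
  have e5 : ∀ᶠ ω in 𝓝[>] (0:ℝ), ∀ e, ∀ s ∈ Icc (0:ℝ) 1, ∀ t ∈ Icc (0:ℝ) 1, |s - t| ≤ ω →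
      A.γ e s ∈ Q (A.γ e t) (r2 / 4) := by
    refine eventually_all.2 fun e => ?_
    have := isCompact_Icc.uniformContinuousOn_of_continuous (A.hc e).continuousOn
      (s := Icc (0:ℝ) 1)
    obtain ⟨ε, hε, h⟩ := Metric.uniformContinuousOn_iff.1 this (r2 / 4) (by positivity)
    filter_upwards [ev_le (c := ε / 2) (by positivity)] with ω hω s hs t ht hst
    exact Q_of_dist (h s hs t ht (by rw [Real.dist_eq]; linarith)).le
  obtain ⟨ω, hω, ω0, ωη⟩ := (e5.and (ev_pos.and (ev_le η0))).exists
  have e6 : ∀ᶠ δ in 𝓝[>] (0:ℝ), ∀ e, ∀ s ∈ Icc t0 (1 - t0), ∀ t ∈ Icc t0 (1 - t0),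
      A.γ e s ∈ Q (A.γ e t) (5 * δ) → |s - t| < ω := by
    refine eventually_all.2 fun e => ?_
    let K : Set (ℝ × ℝ) := (Icc t0 (1 - t0) ×ˢ Icc t0 (1 - t0)) ∩ {p | ω ≤ |p.1 - p.2|}
    have hK : IsCompact K := (isCompact_Icc.prod isCompact_Icc).inter_right
      (isClosed_le continuous_const (by fun_prop))
    have hcd : Continuous (fun p : ℝ × ℝ => dist (A.γ e p.1) (A.γ e p.2)) :=
      ((A.hc e).comp continuous_fst).dist ((A.hc e).comp continuous_snd)
    obtain ⟨ε, hε, h⟩ : ∃ ε > 0, ∀ p ∈ K, ε ≤ dist (A.γ e p.1) (A.γ e p.2) := by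
      rcases K.eq_empty_or_nonempty with hE | hE
      · exact ⟨1, one_pos, by simp [hE]⟩
      · obtain ⟨p, hp, hmin⟩ := hK.exists_isMinOn hE hcd.continuousOn
        refine ⟨_, ?_, fun q hq => hmin hq⟩
        rw [gt_iff_lt, dist_pos]
        intro heq
        have := A.hs e p.1 ⟨by linarith [hp.1.1.1], by linarith [hp.1.1.2]⟩ p.2
          ⟨by linarith [hp.1.2.1], by linarith [hp.1.2.2]⟩ heq
        have h2 := hp.2
        simp [this] at h2
        linarith
    filter_upwards [ev_le (c := ε / 20) (by positivity)] with δ hδ s hs t ht hst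
    by_contra hcon
    have h1 := h (s, t) ⟨⟨hs, ht⟩, by simpa using hcon⟩
    have h2 := dist_of_Q hst
    simp only at h1
    linarith
  have e7 : ∀ᶠ δ in 𝓝[>] (0:ℝ), ∀ e f, e ≠ f → ∀ s ∈ Icc t0 (1 - t0), ∀ t ∈ Icc t0 (1 - t0),
      A.γ e s ∉ Q (A.γ f t) (5 * δ) := by
    refine eventually_all.2 fun e => eventually_all.2 fun f => ?_
    by_cases hef : e = f
    · exact Eventually.of_forall (fun _ h => absurd hef h)
    · have hd : Disjoint (A.γ e '' Icc t0 (1 - t0)) (A.γ f '' Icc t0 (1 - t0)) := by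
        rw [Set.disjoint_left]
        rintro _ ⟨s, hs, rfl⟩ ⟨t, ht, h⟩
        exact A.hp e f hef s ⟨by linarith [hs.1], by linarith [hs.2]⟩ t
          ⟨by linarith [ht.1], by linarith [ht.2]⟩ h.symm
      filter_upwards [sep (cpt e t0 (1 - t0)) (cpt f t0 (1 - t0)) hd (c := 5) (by norm_num)]
        with δ h _ s hs t ht
      exact h _ (mem_image_of_mem _ hs) _ (mem_image_of_mem _ ht)
  obtain ⟨δ, hδ, hδ', δ0, δr⟩ :=
    (e6.and (e7.and (ev_pos.and (ev_le (c := r2 / 20) (by positivity))))).exists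
  refine ⟨⟨R, η, r, t0, 1 - t0, r2, ω, δ, R0, hR, η0, η1, ?_, ?_, r0, by linarith, hr, t00,
    by linarith, ?_, by linarith, by linarith, ?_, r20, r2r, by simpa using hr2, ω0, ωη, hω, δ0,
    by linarith, hδ, hδ'⟩⟩
  · intro e t ht
    rw [← A.h0]
    exact (hη e).1 t (by rw [abs_le]; constructor <;> linarith [ht.1, ht.2])
  · intro e t ht
    rw [← A.h1]
    exact (hη e).2 t (by rw [abs_le]; constructor <;> linarith [ht.1, ht.2])
  · intro e
    rw [← A.h0]
    exact (ht0 e).1 t0 (by rw [abs_le]; constructor <;> linarith)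
  · intro e
    rw [← A.h1]
    exact (ht0 e).2 (1 - t0) (by rw [abs_le]; constructor <;> linarith)

end NH
end

section
open Set Filter Topology
namespace NH

lemma step_cases (d : Fin 4) : step d = (1,0) ∨ step d = (0,1) ∨ step d = (-1,0) ∨ step d = (0,-1) := by
  fin_cases d <;> simp [step]

variable {n m : ℕ} {A : PG n m}

namespace Fine
variable (F : Fine A)

noncomputable def io (p : Pt) : ℂ := ⟨F.δ * p.1, F.δ * p.2⟩

def inS (e : Fin m) (p : Pt) : Prop := ∃ t ∈ Icc F.t0 F.t1, F.io p ∈ Q (A.γ e t) (2 * F.δ)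

open Classical in
noncomputable def tau (e : Fin m) (p : Pt) : ℝ := if h : F.inS e p then h.choose else 0

def bx (u : Fin n) (p : Pt) : Prop := F.io p ∈ Q (A.φ u) (F.r + F.δ)

noncomputable def rnd (z : ℂ) : Pt := (⌊z.re / F.δ⌋, ⌊z.im / F.δ⌋)

variable {F}

lemma tau_mem {e p} (h : F.inS e p) : F.tau e p ∈ Icc F.t0 F.t1 := by
  rw [tau, dif_pos h]; exact h.choose_spec.1

lemma tau_spec {e p} (h : F.inS e p) : F.io p ∈ Q (A.γ e (F.tau e p)) (2 * F.δ) := by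
  rw [tau, dif_pos h]; exact h.choose_spec.2

lemma io_step (p : Pt) (d : Fin 4) : F.io (p + step d) ∈ Q (F.io p) F.δ := by
  have := F.δ0
  rcases step_cases d with h | h | h | h <;> rw [h] <;> simp [Q, io, mul_add, abs_of_pos, this, this.le]

lemma inS_unique {e f p} (h : F.inS e p) (h' : F.inS f p) : e = f := by
  by_contra hne
  obtain ⟨s, hs, h1⟩ := h
  obtain ⟨t, ht, h2⟩ := h'
  exact F.hδ' e f hne s hs t ht (Q_trans (Q_symm h1) h2 (by linarith [F.δ0]))

lemma tau_close {e p} (h : F.inS e p) {t : ℝ} (ht : t ∈ Icc F.t0 F.t1) {q} {σ : ℝ} (hq : F.io q ∈ Q (A.γ e t) σ)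
    {ρ : ℝ} (hpq : F.io p ∈ Q (F.io q) ρ) (hs : ρ + σ ≤ 3 * F.δ) : |F.tau e p - t| < F.ω := by
  apply F.hδ e _ (tau_mem h) _ ht
  refine Q_trans (Q_symm (tau_spec h)) (Q_trans hpq hq le_rfl) (by linarith)

lemma tau_adj {e p q} (h : F.inS e p) (h' : F.inS e q) {d} (hd : q = p + step d) :
    |F.tau e p - F.tau e q| < F.ω :=
  tau_close h (tau_mem h') (tau_spec h') (by rw [hd]; exact Q_symm (io_step p d)) (by linarith)

lemma tau_box {e p u} (h : F.inS e p) (hb : F.bx u p) :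
    (F.tau e p < F.η ∧ u = (A.ends e).1) ∨ (1 - F.η < F.tau e p ∧ u = (A.ends e).2) := by
  have h1 : A.γ e (F.tau e p) ∈ Q (A.φ u) (2 * F.r) :=
    Q_trans (Q_symm (tau_spec h)) hb (by linarith [F.δr, F.r2r, F.δ0])
  have h2 : A.γ e (F.tau e p) ∈ Q (A.φ u) F.R := Q_mono h1 F.rR
  have h3 := tau_mem h
  have := F.η0
  have h5 := F.t00
  have h6 := F.t11
  have h4 : ¬ F.tau e p ∈ Icc F.η (1 - F.η) := fun hh => F.hr e u _ hh h1
  rw [mem_Icc, not_and_or, not_le, not_le] at h4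
  rcases h4 with h4 | h4
  · exact Or.inl ⟨h4, F.hR _ _ _ h2 (F.hη0 e _ ⟨by linarith [h3.1], by linarith⟩)⟩
  · exact Or.inr ⟨h4, F.hR _ _ _ h2 (F.hη1 e _ ⟨by linarith, by linarith [h3.2]⟩)⟩

lemma io_rnd (z : ℂ) : F.io (F.rnd z) ∈ Q z F.δ := by
  have h := F.δ0
  have key : ∀ x : ℝ, |F.δ * (⌊x / F.δ⌋ : ℤ) - x| ≤ F.δ := by
    intro x
    have h1 := Int.floor_le (x / F.δ)
    have h2 := Int.lt_floor_add_one (x / F.δ)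
    rw [le_div_iff₀ h] at h1
    rw [div_lt_iff₀ h] at h2
    rw [abs_le]; constructor <;> nlinarith
  exact ⟨key z.re, key z.im⟩

lemma rnd_close {z w : ℂ} (h : z ∈ Q w (F.δ / 2)) :
    |(F.rnd z).1 - (F.rnd w).1| ≤ 1 ∧ |(F.rnd z).2 - (F.rnd w).2| ≤ 1 := by
  have h0 := F.δ0
  have key : ∀ x y : ℝ, |x - y| ≤ F.δ / 2 → |⌊x / F.δ⌋ - ⌊y / F.δ⌋| ≤ 1 := by
    intro x y hxy
    have h1 := Int.floor_le (x / F.δ)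
    have h2 := Int.lt_floor_add_one (x / F.δ)
    have h3 := Int.floor_le (y / F.δ)
    have h4 := Int.lt_floor_add_one (y / F.δ)
    rw [abs_le] at hxy
    have h5 : x / F.δ - y / F.δ ≤ 1 := by
      rw [← sub_div, div_le_iff₀ h0]; linarith
    have h6 : y / F.δ - x / F.δ ≤ 1 := by
      rw [← sub_div, div_le_iff₀ h0]; linarith
    have h7 : ⌊x / F.δ⌋ - ⌊y / F.δ⌋ < 2 := by
      have : ((⌊x / F.δ⌋ - ⌊y / F.δ⌋ : ℤ) : ℝ) < 2 := by push_cast; linarith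
      exact_mod_cast this
    have h8 : ⌊y / F.δ⌋ - ⌊x / F.δ⌋ < 2 := by
      have : ((⌊y / F.δ⌋ - ⌊x / F.δ⌋ : ℤ) : ℝ) < 2 := by push_cast; linarith
      exact_mod_cast this
    rw [abs_le]; omega
  exact ⟨key _ _ h.1, key _ _ h.2⟩

variable (F) in
def gr (e : Fin m) : SimpleGraph Pt where
  Adj p q := F.inS e p ∧ F.inS e q ∧ ∃ d, q = p + step d
  symm := ⟨by
    rintro p q ⟨h1, h2, d, rfl⟩
    exact ⟨h2, h1, d + 2, by rw [step_add_two]; simp⟩⟩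
  loopless := ⟨by
    rintro p ⟨_, _, d, h⟩
    exact step_ne d (by simpa using h)⟩

lemma reach_x {e} {x x' y : ℤ} (h : F.inS e (x, y)) (h' : F.inS e (x', y)) (hx : |x' - x| ≤ 1) :
    (F.gr e).Reachable (x, y) (x', y) := by
  rw [abs_le] at hx
  have : x' = x ∨ x' = x + 1 ∨ x' = x - 1 := by omega
  rcases this with rfl | rfl | rfl
  · exact SimpleGraph.Reachable.refl _
  · exact SimpleGraph.Adj.reachable ⟨h, h', 0, by simp [step]⟩
  · exact SimpleGraph.Adj.reachable ⟨h, h', 2, by simp [step]; omega⟩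

lemma reach_y {e} {x y y' : ℤ} (h : F.inS e (x, y)) (h' : F.inS e (x, y')) (hx : |y' - y| ≤ 1) :
    (F.gr e).Reachable (x, y) (x, y') := by
  rw [abs_le] at hx
  have : y' = y ∨ y' = y + 1 ∨ y' = y - 1 := by omega
  rcases this with rfl | rfl | rfl
  · exact SimpleGraph.Reachable.refl _
  · exact SimpleGraph.Adj.reachable ⟨h, h', 1, by simp [step]⟩
  · exact SimpleGraph.Adj.reachable ⟨h, h', 3, by simp [step]; omega⟩

lemma t01 : F.t0 ≤ F.t1 := by linarith [F.t0η, F.t1η, F.η1]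

lemma reach_main (e) : (F.gr e).Reachable (F.rnd (A.γ e F.t0)) (F.rnd (A.γ e F.t1)) := by
  have hδ := F.δ0
  refine (isPreconnected_Icc (a := F.t0) (b := F.t1)).induction₂
    (fun s t => (F.gr e).Reachable (F.rnd (A.γ e s)) (F.rnd (A.γ e t))) ?_
    (fun _ _ _ _ _ _ h h' => h.trans h') (fun _ _ _ _ h => h.symm)
    (left_mem_Icc.2 t01) (right_mem_Icc.2 t01)
  intro s hs
  have h1 : ∀ᶠ t in 𝓝 s, A.γ e t ∈ Q (A.γ e s) (F.δ / 2) :=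
    (A.hc e).continuousAt (Q_nhds _ (by linarith))
  filter_upwards [nhdsWithin_le_nhds h1, self_mem_nhdsWithin] with t ht htI
  have hc := rnd_close ht
  have ia : F.inS e (F.rnd (A.γ e s)) := ⟨s, hs, Q_mono (io_rnd _) (by linarith)⟩
  have ib : F.inS e (F.rnd (A.γ e t)) := ⟨t, htI, Q_mono (io_rnd _) (by linarith)⟩
  have hb : F.io (F.rnd (A.γ e t)) ∈ Q (A.γ e s) (2 * F.δ) := Q_trans (io_rnd _) ht (by linarith)
  have ha : F.io (F.rnd (A.γ e s)) ∈ Q (A.γ e s) (2 * F.δ) := Q_mono (io_rnd _) (by linarith)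
  have ic : F.inS e ((F.rnd (A.γ e t)).1, (F.rnd (A.γ e s)).2) := ⟨s, hs, hb.1, ha.2⟩
  exact (reach_x (x := (F.rnd (A.γ e s)).1) ia ic hc.1).trans (reach_y ic ib hc.2)

theorem path_exists (e : Fin m) : ∃ (k : ℕ) (P : ℕ → Pt) (D : ℕ → Fin 4), 3 ≤ k ∧
    (∀ i < k, P (i+1) = P i + step (D i)) ∧ (∀ i ≤ k, F.inS e (P i)) ∧
    F.bx (A.ends e).1 (P 0) ∧ F.tau e (P 0) < F.η ∧
    F.bx (A.ends e).2 (P k) ∧ 1 - F.η < F.tau e (P k) ∧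
    (∀ i u, 0 < i → i < k → ¬ F.bx u (P i)) ∧
    (∀ i j, i ≤ k → j ≤ k → P i = P j → i = j) := by
  classical
  have hδ := F.δ0
  have hη := F.η1
  have hωη := F.ωη
  obtain ⟨w, hw⟩ := (reach_main (F := F) e).exists_isPath
  set N := w.length with hN
  have b0 : F.bx (A.ends e).1 (w.getVert 0) := by
    rw [w.getVert_zero]; exact Q_trans (io_rnd _) (F.ht0 e) (by linarith)
  have bN : F.bx (A.ends e).2 (w.getVert N) := by
    rw [hN, w.getVert_length]; exact Q_trans (io_rnd _) (F.ht1 e) (by linarith)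
  have adj : ∀ i < N, (F.gr e).Adj (w.getVert i) (w.getVert (i+1)) := fun i hi =>
    w.adj_getVert_succ hi
  have s0 : F.inS e (w.getVert 0) := by
    rw [w.getVert_zero]; exact ⟨F.t0, left_mem_Icc.2 t01, Q_mono (io_rnd _) (by linarith)⟩
  have ins : ∀ i ≤ N, F.inS e (w.getVert i) := by
    intro i hi
    rcases Nat.eq_zero_or_pos i with rfl | h
    · exact s0
    · obtain ⟨j, rfl⟩ : ∃ j, i = j + 1 := ⟨i - 1, by omega⟩
      exact (adj j (by omega)).2.1
  have tau0 : F.tau e (w.getVert 0) < 1 / 2 := by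
    have := tau_close s0 (left_mem_Icc.2 t01) (q := w.getVert 0) (σ := F.δ)
      (by rw [w.getVert_zero]; exact io_rnd _) (Q_self hδ.le) (by linarith)
    rw [abs_lt] at this
    linarith [F.t0η]
  have tauN : 1 / 2 < F.tau e (w.getVert N) := by
    have := tau_close (ins N le_rfl) (right_mem_Icc.2 t01) (q := w.getVert N) (σ := F.δ)
      (by rw [hN, w.getVert_length]; exact io_rnd _) (Q_self hδ.le) (by linarith)
    rw [abs_lt] at this
    linarith [F.t1η]
  let I : ℕ → Prop := fun i => (∃ u, F.bx u (w.getVert i)) ∧ F.tau e (w.getVert i) < 1 / 2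
  have hI0 : I 0 := ⟨⟨_, b0⟩, tau0⟩
  set a := Nat.findGreatest I N with ha
  have hIa : I a := Nat.findGreatest_spec (Nat.zero_le N) hI0
  have haN : a ≤ N := Nat.findGreatest_le N
  have haN' : a ≠ N := by
    intro h; rw [h] at hIa; exact absurd hIa.2 (by linarith)
  have hex : ∃ b, a < b ∧ ∃ u, F.bx u (w.getVert b) := ⟨N, by omega, _, bN⟩
  set b := Nat.find hex with hb
  obtain ⟨hab, u, hub⟩ : a < b ∧ ∃ u, F.bx u (w.getVert b) := Nat.find_spec hex
  have hbN : b ≤ N := Nat.find_min' hex ⟨by omega, _, bN⟩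
  have hIb : ¬ I b := Nat.findGreatest_is_greatest hab hbN
  obtain ⟨⟨v, hva⟩, hta⟩ := hIa
  have htb : ¬ F.tau e (w.getVert b) < 1 / 2 := fun h => hIb ⟨⟨u, hub⟩, h⟩
  have ea := tau_box (ins a haN) hva
  have eb := tau_box (ins b hbN) hub
  have ea' : F.tau e (w.getVert a) < F.η ∧ v = (A.ends e).1 := by
    rcases ea with h | h
    · exact h
    · exfalso; linarith [h.1]
  have eb' : 1 - F.η < F.tau e (w.getVert b) ∧ u = (A.ends e).2 := by
    rcases eb with h | h
    · exfalso; linarith [h.1]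
    · exact h
  have cl : ∀ i < N, |F.tau e (w.getVert i) - F.tau e (w.getVert (i+1))| < 1 / 8 := by
    intro i hi
    obtain ⟨h1, h2, d, hd⟩ := adj i hi
    exact (tau_adj h1 h2 hd).trans_le (by linarith)
  refine ⟨b - a, fun i => w.getVert (a + i), fun i => if h : ∃ d, w.getVert (a + i + 1) =
    w.getVert (a + i) + step d then h.choose else 0, ?_, ?_, ?_, ?_, ?_, ?_, ?_, ?_, ?_⟩
  · by_contra hlt
    have hk : b = a + 1 ∨ b = a + 1 + 1 := by omega
    have c1 := cl a (by omega)
    rw [abs_lt] at c1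
    rcases hk with hk | hk
    · rw [hk] at eb'; linarith [ea'.1, eb'.1]
    · have c2 := cl (a+1) (by omega)
      rw [abs_lt] at c2
      rw [hk] at eb'
      linarith [ea'.1, eb'.1]
  · intro i hi
    have h := (adj (a + i) (by omega)).2.2
    simp only [← add_assoc]
    rw [dif_pos h]
    exact h.choose_spec
  · intro i hi; exact ins _ (by omega)
  · rw [← ea'.2]; exact hva
  · exact ea'.1
  · rw [← eb'.2]
    simp only [show a + (b - a) = b by omega]; exact hub
  · simp only [show a + (b - a) = b by omega]; exact eb'.1
  · intro i u' h0 hi hbx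
    exact Nat.find_min hex (m := a + i) (by omega) ⟨by omega, u', hbx⟩
  · intro i j hi hj hij
    have := hw.getVert_injOn (show a + i ∈ {i | i ≤ w.length} by simp; omega)
      (show a + j ∈ {i | i ≤ w.length} by simp; omega) hij
    omega

end Fine
end NH
end

section
open Set Filter Topology
namespace NH

section
variable {S : Set ℂ} [PathConnectedSpace ↥(Sᶜ)]

open Classical in
variable (S) in
noncomputable def Gm (f : ℝ → ℂ) (s t : ℝ) : HG ↥(Sᶜ) :=
  if h : Continuous f ∧ ∀ t, f t ∈ Sᶜ then Gam ⟨fun t => ⟨f t, h.2 t⟩, h.1.subtype_mk _⟩ s t else 1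

lemma Gm_trans (f : ℝ → ℂ) (s t u : ℝ) : Gm S f s t * Gm S f t u = Gm S f s u := by
  unfold Gm
  split_ifs
  · exact Gam_trans _ _ _ _
  · simp

lemma Gm_self (f : ℝ → ℂ) (s : ℝ) : Gm S f s s = 1 := by
  have := Gm_trans (S := S) f s s s
  simpa using this

lemma Gm_symm (f : ℝ → ℂ) (s t : ℝ) : (Gm S f t s)⁻¹ = Gm S f s t := by
  rw [eq_comm, eq_inv_iff_mul_eq_one, Gm_trans, Gm_self]

lemma Gm_eq_sg {C : Set ℂ} (hC : Convex ℝ C) (hCS : C ⊆ Sᶜ) {f : ℝ → ℂ} (hf : Continuous f)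
    (hf' : ∀ t, f t ∈ Sᶜ) {s t : ℝ} (h : ∀ u ∈ uIcc s t, f u ∈ C) : Gm S f s t = sg S (f s) (f t) := by
  unfold Gm
  rw [dif_pos ⟨hf, hf'⟩]
  exact Gam_eq_sg hC hCS _ h

end

variable {n m : ℕ} {A : PG n m}

namespace Fine
variable (F : Fine A)

lemma bx_iff (u : Fin n) (p : Pt) :
    (⌈((A.φ u).re - (F.r + F.δ)) / F.δ⌉ ≤ p.1 ∧ p.1 ≤ ⌊((A.φ u).re + (F.r + F.δ)) / F.δ⌋ ∧
    ⌈((A.φ u).im - (F.r + F.δ)) / F.δ⌉ ≤ p.2 ∧ p.2 ≤ ⌊((A.φ u).im + (F.r + F.δ)) / F.δ⌋) ↔ F.bx u p := by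
  have h := F.δ0
  simp only [Int.ceil_le, Int.le_floor, div_le_iff₀ h, le_div_iff₀ h, bx, Q, mem_ofPred_eq, io, abs_le]
  constructor
  · rintro ⟨_, _, _, _⟩; refine ⟨⟨?_, ?_⟩, ?_, ?_⟩ <;> linarith
  · rintro ⟨⟨_, _⟩, _, _⟩; refine ⟨?_, ?_, ?_, ?_⟩ <;> linarith

lemma bx_R {u p} (h : F.bx u p) : F.io p ∈ Q (A.φ u) F.R :=
  Q_mono h (by linarith [F.δr, F.r2r, F.rR, F.r0, F.δ0])

lemma bx_unique {u v p} (h : F.bx u p) (h' : F.bx v p) : u = v :=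
  F.hR u v _ (F.bx_R h) (F.bx_R h')

noncomputable def kk (e : Fin m) : ℕ := (F.path_exists e).choose
noncomputable def PP (e : Fin m) : ℕ → Pt := (F.path_exists e).choose_spec.choose
noncomputable def DD (e : Fin m) : ℕ → Fin 4 := (F.path_exists e).choose_spec.choose_spec.choose
lemma PP_spec (e : Fin m) : 3 ≤ F.kk e ∧
    (∀ i < F.kk e, F.PP e (i+1) = F.PP e i + step (F.DD e i)) ∧ (∀ i ≤ F.kk e, F.inS e (F.PP e i)) ∧
    F.bx (A.ends e).1 (F.PP e 0) ∧ F.tau e (F.PP e 0) < F.η ∧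
    F.bx (A.ends e).2 (F.PP e (F.kk e)) ∧ 1 - F.η < F.tau e (F.PP e (F.kk e)) ∧
    (∀ i u, 0 < i → i < F.kk e → ¬ F.bx u (F.PP e i)) ∧
    (∀ i j, i ≤ F.kk e → j ≤ F.kk e → F.PP e i = F.PP e j → i = j) :=
  (F.path_exists e).choose_spec.choose_spec.choose_spec

lemma rnd_box (u : Fin n) : F.bx u (F.rnd (A.φ u)) :=
  Q_mono (io_rnd _) (by linarith [F.r0])

noncomputable def draw : Draw n m where
  l u := ⌈((A.φ u).re - (F.r + F.δ)) / F.δ⌉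
  r u := ⌊((A.φ u).re + (F.r + F.δ)) / F.δ⌋
  b u := ⌈((A.φ u).im - (F.r + F.δ)) / F.δ⌉
  t u := ⌊((A.φ u).im + (F.r + F.δ)) / F.δ⌋
  s u := (F.rnd (A.φ u)).1
  ends := A.ends
  k := F.kk
  P := F.PP
  D := F.DD
  hls u := ((F.bx_iff u _).2 (F.rnd_box u)).1
  hsr u := ((F.bx_iff u _).2 (F.rnd_box u)).2.1
  hbt u := ((F.bx_iff u _).2 (F.rnd_box u)).2.2.1.trans ((F.bx_iff u _).2 (F.rnd_box u)).2.2.2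
  disj u v p h h' := F.bx_unique ((F.bx_iff u p).1 h) ((F.bx_iff v p).1 h')
  hk e := (F.PP_spec e).1
  hP e := (F.PP_spec e).2.1
  h0 e := (F.bx_iff _ _).2 (F.PP_spec e).2.2.2.1
  h1 e := (F.bx_iff _ _).2 (F.PP_spec e).2.2.2.2.2.1
  hinter e i v h h' hh := (F.PP_spec e).2.2.2.2.2.2.2.1 i v h h' ((F.bx_iff _ _).1 hh)
  hinj e i e' i' h0 hk h0' hk' hP := by
    have h1 := (F.PP_spec e).2.2.1 i hk.le
    have h2 := (F.PP_spec e').2.2.1 i' hk'.le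
    rw [← hP] at h2
    have := inS_unique h1 h2
    subst this
    exact ⟨rfl, (F.PP_spec e).2.2.2.2.2.2.2.2 i i' hk.le hk'.le hP⟩

lemma inBox_iff {u p} : F.draw.inBox u p ↔ F.bx u p := F.bx_iff u p

section hol
variable (c : Fin n × Fin n)

open Classical in
noncomputable def bet (p : Pt) : HG ↥((Sv A.φ c)ᶜ) :=
  if F.bx c.1 p then sg (Sv A.φ c) (A.φ c.1) (F.io p) else
  if F.bx c.2 p then sg (Sv A.φ c) (A.φ c.2) (F.io p) else
  if h : ∃ e, (c = A.ends e ∨ c = (A.ends e).swap) ∧ F.inS e p then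
    Gm (Sv A.φ c) (A.γ h.choose) 1 (F.tau h.choose p) *
      sg (Sv A.φ c) (A.γ h.choose (F.tau h.choose p)) (F.io p)
  else 1

lemma bet_box {p u} (hu : u = c.1 ∨ u = c.2) (h : F.bx u p) :
    F.bet c p = sg (Sv A.φ c) (A.φ u) (F.io p) := by
  unfold bet
  rcases hu with hu | hu
  · rw [if_pos (hu ▸ h), hu]
  · split_ifs with h1 h2
    · rw [F.bx_unique h h1]
    · rw [hu]
    · exact absurd (hu ▸ h) h2
    · exact absurd (hu ▸ h) h2

lemma bet_edge {p e} (he : c = A.ends e ∨ c = (A.ends e).swap) (h : F.inS e p)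
    (hb : ∀ u, ¬ F.bx u p) :
    F.bet c p = Gm (Sv A.φ c) (A.γ e) 1 (F.tau e p) *
      sg (Sv A.φ c) (A.γ e (F.tau e p)) (F.io p) := by
  have hex : ∃ e, (c = A.ends e ∨ c = (A.ends e).swap) ∧ F.inS e p := ⟨e, he, h⟩
  unfold bet
  rw [if_neg (hb _), if_neg (hb _), dif_pos hex]
  rw [inS_unique hex.choose_spec.2 h]

noncomputable def gg (d : Dart) : HG ↥((Sv A.φ c)ᶜ) :=
  F.bet c d.1 * sg (Sv A.φ c) (F.io d.1) (F.io (hd d)) * (F.bet c (hd d))⁻¹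

lemma QR_sub {u} (hu : u = c.1 ∨ u = c.2) : Q (A.φ u) F.R ⊆ (Sv A.φ c)ᶜ := by
  rintro _ hz ⟨v, h1, h2, rfl⟩
  have := F.hR v u _ (Q_self F.R0.le) hz
  subst this
  rcases hu with h | h <;> contradiction

lemma Qarc_sub {e t} (ht : t ∈ Icc F.t0 F.t1) {ρ : ℝ} (hρ : ρ ≤ F.r2) :
    Q (A.γ e t) ρ ⊆ (Sv A.φ c)ᶜ := by
  rintro _ hz ⟨v, h1, h2, rfl⟩
  exact F.hr2 e v t ht (Q_mono (Q_symm hz) hρ)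

lemma arc_sub {e} (he : c = A.ends e ∨ c = (A.ends e).swap) (t : ℝ) : A.γ e t ∈ (Sv A.φ c)ᶜ := by
  rintro ⟨v, h1, h2, h⟩
  have := A.hav e t v h.symm
  rcases he with rfl | rfl <;> simp at h1 h2 <;> tauto

lemma gg_inv (d : Dart) : F.gg c (rev d) = (F.gg c d)⁻¹ := by
  simp only [gg, rev_fst, hd_rev]
  rw [sg_symm (F.io d.1)]
  group

lemma gg_box {v d} (hv : v = c.1 ∨ v = c.2) (h1 : F.bx v d.1) (h2 : F.bx v (hd d)) : F.gg c d = 1 := by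
  unfold gg
  rw [F.bet_box c hv h1, F.bet_box c hv h2, sg_trans (Q_convex (A.φ v) F.R) (F.QR_sub c hv)
    (Q_self F.R0.le) (F.bx_R h1) (F.bx_R h2), mul_inv_cancel]

lemma io_re (p : Pt) : (F.io p).re = F.δ * p.1 := rfl
lemma io_im (p : Pt) : (F.io p).im = F.δ * p.2 := rfl

lemma gg_cell (p : Pt) (h : ∀ d ∈ cell p, ¬ F.draw.Bad c d.1) : ((cell p).map (F.gg c)).prod = 1 := by
  have hδ := F.δ0
  let C : Set ℂ := Icc (F.δ * p.1) (F.δ * (p.1 + 1)) ×ℂ Icc (F.δ * p.2) (F.δ * (p.2 + 1))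
  have hC : Convex ℝ C := rect_convex _ _ _ _
  have hCS : C ⊆ (Sv A.φ c)ᶜ := by
    rintro _ ⟨⟨hz1, hz2⟩, hz3, hz4⟩ ⟨u, h1, h2, rfl⟩
    refine h (p, 0) (by simp [cell]) ⟨u, h1, h2, F.inBox_iff.2 ?_⟩
    refine ⟨?_, ?_⟩
    · simp only [io_re]; rw [abs_le]; constructor <;> nlinarith [F.r0]
    · simp only [io_im]; rw [abs_le]; constructor <;> nlinarith [F.r0]
  have m0 : F.io p ∈ C := by
    refine ⟨⟨?_, ?_⟩, ?_, ?_⟩ <;> simp only [io_re, io_im] <;> nlinarith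
  have m1 : F.io (p + (1,0)) ∈ C := by
    refine ⟨⟨?_, ?_⟩, ?_, ?_⟩ <;> simp [io_re, io_im] <;> nlinarith
  have m2 : F.io (p + (1,1)) ∈ C := by
    refine ⟨⟨?_, ?_⟩, ?_, ?_⟩ <;> simp [io_re, io_im] <;> nlinarith
  have m3 : F.io (p + (0,1)) ∈ C := by
    refine ⟨⟨?_, ?_⟩, ?_, ?_⟩ <;> simp [io_re, io_im] <;> nlinarith
  have d0 : hd (p, 0) = p + (1,0) := rfl
  have d1 : hd (p + (1,0), 1) = p + (1,1) := by simp [hd, step, add_assoc]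
  have d2 : hd (p + (1,1), 2) = p + (0,1) := by simp [hd, step, add_assoc]
  have d3 : hd (p + (0,1), 3) = p := by simp [hd, step, add_assoc]
  simp only [cell, List.map_cons, List.map_nil, List.prod_cons, List.prod_nil, gg, d0, d1, d2, d3]
  have key : sg (Sv A.φ c) (F.io p) (F.io (p + (1,0))) * sg (Sv A.φ c) (F.io (p + (1,0))) (F.io (p + (1,1))) *
      sg (Sv A.φ c) (F.io (p + (1,1))) (F.io (p + (0,1))) * sg (Sv A.φ c) (F.io (p + (0,1))) (F.io p) = 1 := by
    rw [sg_trans hC hCS m0 m1 m2, sg_trans hC hCS m0 m2 m3, sg_trans hC hCS m0 m3 m0, sg_self]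
  generalize F.bet c p = b0 at *
  generalize F.bet c (p + (1,0)) = b1 at *
  generalize F.bet c (p + (1,1)) = b2 at *
  generalize F.bet c (p + (0,1)) = b3 at *
  calc _ = b0 * (sg (Sv A.φ c) (F.io p) (F.io (p + (1,0))) * sg (Sv A.φ c) (F.io (p + (1,0))) (F.io (p + (1,1))) *
      sg (Sv A.φ c) (F.io (p + (1,1))) (F.io (p + (0,1))) * sg (Sv A.φ c) (F.io (p + (0,1))) (F.io p)) * b0⁻¹ := by
        group
    _ = 1 := by rw [key]; group

lemma hd_dt' {e i} (h : i < F.kk e) : hd (F.draw.dt e i) = F.PP e (i+1) :=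
  Draw.hd_dt (Δ := F.draw) h

lemma hop {e i} (h : i < F.kk e) : F.io (F.PP e (i+1)) ∈ Q (F.io (F.PP e i)) F.δ := by
  rw [(F.PP_spec e).2.1 i h]; exact io_step _ _

lemma tau_hop {e i} (h : i < F.kk e) : |F.tau e (F.PP e i) - F.tau e (F.PP e (i+1))| < F.ω :=
  tau_adj ((F.PP_spec e).2.2.1 i h.le) ((F.PP_spec e).2.2.1 (i+1) h) ((F.PP_spec e).2.1 i h)

lemma tau01 {e p} (h : F.inS e p) : F.tau e p ∈ Ioo (0:ℝ) 1 := by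
  have := tau_mem h
  exact ⟨by linarith [F.t00, this.1], by linarith [F.t11, this.2]⟩

/-- interior darts -/
lemma gg_mid {e i} (he : c = A.ends e ∨ c = (A.ends e).swap) (h0 : 0 < i) (hi : i + 1 < F.kk e) :
    F.gg c (F.draw.dt e i) = 1 := by
  have hi' : i < F.kk e := by omega
  have hδ := F.δ0
  have hδr := F.δr
  have sp := F.PP_spec e
  have i1 := sp.2.2.1 i hi'.le
  have i2 := sp.2.2.1 (i+1) hi.le
  have hop := F.hop hi'
  have th := F.tau_hop hi'
  have q1 := tau01 F i1
  have q2 := tau01 F i2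
  unfold gg
  rw [F.hd_dt' hi']
  change F.bet c (F.PP e i) * sg _ (F.io (F.PP e i)) _ * _ = 1
  rw [F.bet_edge c he i1 (fun u => sp.2.2.2.2.2.2.2.1 i u h0 hi'),
    F.bet_edge c he i2 (fun u => sp.2.2.2.2.2.2.2.1 (i+1) u (Nat.succ_pos i) hi)]
  generalize hT : F.tau e (F.PP e i) = T at *
  generalize hT' : F.tau e (F.PP e (i+1)) = T' at *
  have hTm : T ∈ Icc F.t0 F.t1 := hT ▸ tau_mem i1
  have hC := Q_convex (A.γ e T) F.r2
  have hCS := F.Qarc_sub c (e := e) hTm le_rfl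
  have arc : ∀ u ∈ uIcc T T', A.γ e u ∈ Q (A.γ e T) (F.r2 / 4) := by
    intro u hu
    have hu1 : |u - T| ≤ |T' - T| := abs_sub_left_of_mem_uIcc hu
    rw [abs_sub_comm T'] at hu1
    refine F.hω e u ?_ T ⟨q1.1.le, q1.2.le⟩ (by linarith)
    have : uIcc T T' ⊆ Icc 0 1 :=
      uIcc_subset_Icc ⟨q1.1.le, q1.2.le⟩ ⟨q2.1.le, q2.2.le⟩
    exact this hu
  have arc' : ∀ u ∈ uIcc T T', A.γ e u ∈ Q (A.γ e T) F.r2 := fun u hu =>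
    Q_mono (arc u hu) (by linarith)
  have mT : A.γ e T ∈ Q (A.γ e T) F.r2 := Q_self (by linarith)
  have mT' : A.γ e T' ∈ Q (A.γ e T) F.r2 := arc' T' right_mem_uIcc
  have s1 := tau_spec i1
  rw [hT] at s1
  have mp : F.io (F.PP e i) ∈ Q (A.γ e T) F.r2 := Q_mono s1 (by linarith)
  have mp' : F.io (F.PP e (i+1)) ∈ Q (A.γ e T) F.r2 := Q_trans hop s1 (by linarith)
  have G := Gm_eq_sg hC hCS (A.hc e) (arc_sub c he) arc'
  have k1 : sg (Sv A.φ c) (A.γ e T) (F.io (F.PP e i)) * sg (Sv A.φ c) (F.io (F.PP e i)) (F.io (F.PP e (i+1)))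
    = sg (Sv A.φ c) (A.γ e T) (A.γ e T') * sg (Sv A.φ c) (A.γ e T') (F.io (F.PP e (i+1))) := by
    rw [sg_trans hC hCS mT mp mp', sg_trans hC hCS mT mT' mp']
  rw [mul_assoc (Gm _ _ _ _), k1, ← G, ← mul_assoc, Gm_trans, mul_inv_cancel]

/-- last dart -/
lemma gg_last {e i} (he : c = A.ends e ∨ c = (A.ends e).swap) (hi : i + 1 = F.kk e) :
    F.gg c (F.draw.dt e i) = 1 := by
  have hi' : i < F.kk e := by omega
  have hδ := F.δ0
  have hδr := F.δr
  have sp := F.PP_spec e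
  have h0 : 0 < i := by have := sp.1; omega
  have i1 := sp.2.2.1 i hi'.le
  have i2 := sp.2.2.1 (i+1) hi.le
  have hop := F.hop hi'
  have th := F.tau_hop hi'
  have q1 := tau01 F i1
  have b2 := sp.2.2.2.2.2.1
  have t2 := sp.2.2.2.2.2.2.1
  rw [← hi] at b2 t2
  have hw : (A.ends e).2 = c.1 ∨ (A.ends e).2 = c.2 := by
    rcases he with rfl | rfl <;> simp
  unfold gg
  rw [F.hd_dt' hi']
  change F.bet c (F.PP e i) * sg _ (F.io (F.PP e i)) _ * _ = 1
  rw [F.bet_edge c he i1 (fun u => sp.2.2.2.2.2.2.2.1 i u h0 hi'), F.bet_box c hw b2]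
  have s1 := tau_spec i1
  generalize hT : F.tau e (F.PP e i) = T at *
  have hC := Q_convex (A.φ (A.ends e).2) F.R
  have hCS := F.QR_sub c hw
  have arc : ∀ u ∈ uIcc 1 T, A.γ e u ∈ Q (A.φ (A.ends e).2) F.R := by
    intro u hu
    rw [uIcc_of_ge q1.2.le] at hu
    rw [abs_lt] at th
    exact F.hη1 e u ⟨by linarith [hu.1, F.ωη], hu.2⟩
  have mT := arc T right_mem_uIcc
  have mw : A.φ (A.ends e).2 ∈ Q (A.φ (A.ends e).2) F.R := Q_self F.R0.le
  have mp' := F.bx_R b2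
  have mp : F.io (F.PP e i) ∈ Q (A.φ (A.ends e).2) F.R :=
    Q_trans (Q_symm hop) b2 (by linarith [F.r2r, F.rR, F.r0])
  rw [Gm_eq_sg hC hCS (A.hc e) (arc_sub c he) arc, A.h1, sg_trans hC hCS mw mT mp,
    sg_trans hC hCS mw mp mp', mul_inv_cancel]

/-- first dart -/
lemma gg_first {e} (he : c = A.ends e ∨ c = (A.ends e).swap) :
    F.gg c (F.draw.dt e 0) = Gm (Sv A.φ c) (A.γ e) 0 1 := by
  have hδ := F.δ0
  have hδr := F.δr
  have sp := F.PP_spec e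
  have hk := sp.1
  have hi' : 0 < F.kk e := by omega
  have i1 := sp.2.2.1 0 hi'.le
  have i2 := sp.2.2.1 (0+1) (by omega)
  have hop := F.hop hi'
  have th := F.tau_hop hi'
  have q2 := tau01 F i2
  have b1 := sp.2.2.2.1
  have t1 := sp.2.2.2.2.1
  have hw : (A.ends e).1 = c.1 ∨ (A.ends e).1 = c.2 := by
    rcases he with rfl | rfl <;> simp
  unfold gg
  rw [F.hd_dt' hi']
  change F.bet c (F.PP e 0) * sg _ (F.io (F.PP e 0)) _ * _ = _
  rw [F.bet_edge c he i2 (fun u => sp.2.2.2.2.2.2.2.1 (0+1) u (Nat.succ_pos 0) (by omega)),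
    F.bet_box c hw b1]
  generalize hT : F.tau e (F.PP e (0+1)) = T at *
  have hC := Q_convex (A.φ (A.ends e).1) F.R
  have hCS := F.QR_sub c hw
  have arc : ∀ u ∈ uIcc 0 T, A.γ e u ∈ Q (A.φ (A.ends e).1) F.R := by
    intro u hu
    rw [uIcc_of_le q2.1.le] at hu
    rw [abs_lt] at th
    exact F.hη0 e u ⟨hu.1, by linarith [hu.2, F.ωη]⟩
  have mT := arc T right_mem_uIcc
  have mw : A.φ (A.ends e).1 ∈ Q (A.φ (A.ends e).1) F.R := Q_self F.R0.le
  have mp := F.bx_R b1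
  have mp' : F.io (F.PP e (0+1)) ∈ Q (A.φ (A.ends e).1) F.R :=
    Q_trans hop b1 (by linarith [F.r2r, F.rR, F.r0])
  rw [mul_inv_rev, Gm_symm, ← sg_symm, sg_trans hC hCS mw mp mp', ← mul_assoc,
    sg_trans hC hCS mw mp' mT, ← A.h0, ← Gm_eq_sg hC hCS (A.hc e) (arc_sub c he) arc, Gm_trans]

end hol

theorem hol_draw (n1 : ∀ e, (A.ends e).1 = (A.ends e).2 → Gm (Sv A.φ (A.ends e)) (A.γ e) 0 1 ≠ 1)
    (n2 : ∀ e f, e ≠ f → A.ends e = A.ends f →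
      Gm (Sv A.φ (A.ends e)) (A.γ e) 0 1 ≠ Gm (Sv A.φ (A.ends e)) (A.γ f) 0 1)
    (n3 : ∀ e f, e ≠ f → A.ends e = (A.ends f).swap →
      Gm (Sv A.φ (A.ends e)) (A.γ e) 0 1 ≠ (Gm (Sv A.φ (A.ends e)) (A.γ f) 0 1)⁻¹) :
    F.draw.Hol (fun c => HG ↥((Sv A.φ c)ᶜ)) F.gg where
  inv := F.gg_inv
  cell := F.gg_cell
  box c v d hv h1 h2 := F.gg_box c hv (F.inBox_iff.1 h1) (F.inBox_iff.1 h2)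
  edge c e i hc h0 hi := by
    have hi : i < F.kk e := hi
    rcases (show i + 1 ≤ F.kk e from hi).eq_or_lt with h | h
    · exact F.gg_last c hc h
    · exact F.gg_mid c hc h0 h
  n1 e he := by
    change F.gg (A.ends e) (F.draw.dt e 0) ≠ 1
    rw [F.gg_first (A.ends e) (Or.inl rfl)]
    exact n1 e he
  n2 e f hef he := by
    change F.gg (A.ends e) (F.draw.dt e 0) ≠ F.gg (A.ends e) (F.draw.dt f 0)
    rw [F.gg_first (A.ends e) (e := e) (Or.inl rfl), F.gg_first (A.ends e) (e := f) (Or.inl he)]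
    exact n2 e f hef he
  n3 e f hef he := by
    change F.gg (A.ends e) (F.draw.dt e 0) ≠ (F.gg (A.ends e) (F.draw.dt f 0))⁻¹
    rw [F.gg_first (A.ends e) (e := e) (Or.inl rfl), F.gg_first (A.ends e) (e := f) (Or.inr he)]
    exact n3 e f hef he

end Fine
end NH
end

section
open Set
namespace NH

/-- restriction of a plane multigraph to a subset of its edges -/
def PG.sub {n m k : ℕ} (A : PG n m) (ι : Fin k ↪ Fin m) : PG n k where
  φ := A.φ
  hφ := A.hφ
  ends e := A.ends (ι e)
  γ e := A.γ (ι e)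
  hc e := A.hc _
  h0 e := A.h0 _
  h1 e := A.h1 _
  hv e := A.hv _
  hs e := A.hs _
  hp e f hef := A.hp _ _ (ι.injective.ne hef)
  hav e := A.hav _

lemma PG.par {n m : ℕ} (A : PG n m) {e f : Fin m} (he : A.ends e = A.ends f)
    (h : Gm (Sv A.φ (A.ends e)) (A.γ e) 0 1 = Gm (Sv A.φ (A.ends e)) (A.γ f) 0 1) :
    EdgeHomotopic A.φ (A.ends e) (A.γ e) (A.γ f) := by
  have c1 : Continuous (A.γ e) ∧ ∀ t, A.γ e t ∈ (Sv A.φ (A.ends e))ᶜ :=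
    ⟨A.hc e, Fine.arc_sub _ (Or.inl rfl)⟩
  have c2 : Continuous (A.γ f) ∧ ∀ t, A.γ f t ∈ (Sv A.φ (A.ends e))ᶜ :=
    ⟨A.hc f, Fine.arc_sub _ (Or.inl he)⟩
  unfold Gm at h
  rw [dif_pos c1, dif_pos c2] at h
  refine edgeHom _ _ (fun x _ => rfl) (fun x _ => rfl) (A.h0 e) ?_ (A.h1 e) ?_ h
  · rw [A.h0, he]
  · rw [A.h1, he]

lemma PG.anti {n m : ℕ} (A : PG n m) {e f : Fin m} (he : A.ends e = (A.ends f).swap)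
    (h : Gm (Sv A.φ (A.ends e)) (A.γ e) 0 1 = (Gm (Sv A.φ (A.ends e)) (A.γ f) 0 1)⁻¹) :
    EdgeHomotopic A.φ (A.ends e) (A.γ e) (fun x => A.γ f (1 - x)) := by
  have c1 : Continuous (A.γ e) ∧ ∀ t, A.γ e t ∈ (Sv A.φ (A.ends e))ᶜ :=
    ⟨A.hc e, Fine.arc_sub _ (Or.inl rfl)⟩
  have c2 : Continuous (A.γ f) ∧ ∀ t, A.γ f t ∈ (Sv A.φ (A.ends e))ᶜ :=
    ⟨A.hc f, Fine.arc_sub _ (Or.inr he)⟩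
  rw [Gm_symm] at h
  unfold Gm at h
  rw [dif_pos c1, dif_pos c2] at h
  have hc2 := c2.1
  let F' : C(ℝ, ↥((Sv A.φ (A.ends e))ᶜ)) := ⟨fun t => ⟨A.γ f (1 - t), c2.2 _⟩, by fun_prop⟩
  rw [← Gam_rev _ F' (fun t => rfl)] at h
  refine edgeHom _ F' (fun x _ => rfl) (fun x _ => rfl) (A.h0 e) ?_ (A.h1 e) ?_ h
  · simp [A.h1, he]
  · simp [A.h0, he]

theorem PG.bound {n m : ℕ} (hn : 2 ≤ n) (A : PG n m)
    (hp : ∀ e f, e ≠ f → A.ends e = A.ends f → ¬ EdgeHomotopic A.φ (A.ends e) (A.γ e) (A.γ f))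
    (ha : ∀ e f, e ≠ f → A.ends e = (A.ends f).swap →
      ¬ EdgeHomotopic A.φ (A.ends e) (A.γ e) (fun x => A.γ f (1 - x))) : m ≤ 4 * n - 4 := by
  classical
  let T : Finset (Fin m) := Finset.univ.filter fun e =>
    (A.ends e).1 = (A.ends e).2 ∧ Gm (Sv A.φ (A.ends e)) (A.γ e) 0 1 = 1
  have hT : T.card ≤ n := by
    have : T.card ≤ (Finset.univ : Finset (Fin n)).card := by
      refine Finset.card_le_card_of_injOn (fun e => (A.ends e).1) (fun _ _ => Finset.mem_coe.2 (Finset.mem_univ _)) ?_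
      intro e he f hf hef
      simp only [T, Finset.coe_filter, Finset.mem_univ, true_and, mem_setOf_eq] at he hf hef
      by_contra hne
      have hE : A.ends e = A.ends f := Prod.ext hef (by rw [← he.1, ← hf.1, hef])
      refine hp e f hne hE (A.par hE ?_)
      have h2 := hf.2
      rw [← hE] at h2
      rw [he.2, h2]
    simpa using this
  have hC : T.card + Tᶜ.card = m := by simpa using T.card_add_card_compl
  let ι : Fin Tᶜ.card ↪ Fin m := (Tᶜ.orderEmbOfFin rfl).toEmbedding
  have hι : ∀ i, ι i ∉ T := fun i => Finset.mem_compl.1 (Tᶜ.orderEmbOfFin_mem rfl i)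
  obtain ⟨F⟩ := exists_fine (A.sub ι)
  have key := Draw.CT hn (F.hol_draw
    (fun e he h => hι e (Finset.mem_filter.2 ⟨Finset.mem_univ _, he, h⟩))
    (fun e f hef he h => hp _ _ (ι.injective.ne hef) he (A.par he h))
    (fun e f hef he h => ha _ _ (ι.injective.ne hef) he (A.anti he h)))
  omega

lemma EdgeHomotopic_congr {n : ℕ} {φ : Fin n → ℂ} {c : Fin n × Fin n} {c₀ c₁ d₀ d₁ : ℝ → ℂ}
    (h0 : ∀ x ∈ Icc (0:ℝ) 1, c₀ x = d₀ x) (h1 : ∀ x ∈ Icc (0:ℝ) 1, c₁ x = d₁ x)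
    (h : EdgeHomotopic φ c c₀ c₁) : EdgeHomotopic φ c d₀ d₁ := by
  obtain ⟨H, a, b, d, e⟩ := h
  exact ⟨H, a, fun x hx => (b x hx).trans (h0 x hx), fun x hx => (d x hx).trans (h1 x hx), e⟩

end NH
end

/-- Every non-homotopic plane multigraph on `n ≥ 2` vertices has at most
`4n - 4` edges.

The plane multigraph has vertices `φ 0, …, φ (n-1)` (distinct points) and `m` edges, edge
`e` being drawn as a continuous curve `γ e` on `[0,1]` joining its endpoints
`φ (ends e).1` and `φ (ends e).2`. No edge passes through a vertex in its interior, each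
edge is a simple curve, and distinct edges have disjoint interiors (no crossings). The
drawing is non-homotopic: no two distinct parallel edges (or loops at the same vertex) are
homotopic. -/
theorem nonhomotopic_plane_multigraph_edge_bound
    (n m : ℕ) (hn : 2 ≤ n)
    (φ : Fin n → ℂ) (hφ : Function.Injective φ)
    (ends : Fin m → Fin n × Fin n) (γ : Fin m → ℝ → ℂ)
    (hcont : ∀ e, ContinuousOn (γ e) (Icc 0 1))
    (hstart : ∀ e, γ e 0 = φ (ends e).1)
    (hend : ∀ e, γ e 1 = φ (ends e).2)
    (hvertex : ∀ e, ∀ t ∈ Ioo (0:ℝ) 1, ∀ v : Fin n, γ e t ≠ φ v)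
    (hsimple : ∀ e, ∀ s ∈ Icc (0:ℝ) 1, ∀ t ∈ Icc (0:ℝ) 1, s < t →
      (s, t) ≠ ((0:ℝ), (1:ℝ)) → γ e s ≠ γ e t)
    (hplane : ∀ e f, e ≠ f → ∀ s ∈ Ioo (0:ℝ) 1, ∀ t ∈ Ioo (0:ℝ) 1, γ e s ≠ γ f t)
    (hnonhom : ∀ e f, e ≠ f →
      (ends e = ends f → ¬ EdgeHomotopic φ (ends e) (γ e) (γ f)) ∧
      (ends e = (ends f).swap →
        ¬ EdgeHomotopic φ (ends e) (γ e) (fun x => γ f (1 - x)))) :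
    m ≤ 4 * n - 4 := by
  let γ' : Fin m → ℝ → ℂ := fun e t => γ e (projIcc (0:ℝ) 1 zero_le_one t)
  have ag : ∀ e, ∀ t ∈ Icc (0:ℝ) 1, γ' e t = γ e t := by
    intro e t ht
    simp only [γ', projIcc_of_mem zero_le_one ht]
  have sub : ∀ t ∈ Ioo (0:ℝ) 1, t ∈ Icc (0:ℝ) 1 := fun t ht => Ioo_subset_Icc_self ht
  let A : NH.PG n m :=
    { φ := φ
      hφ := hφ
      ends := ends
      γ := γ'
      hc := fun e => (hcont e).comp_continuous
        (continuous_subtype_val.comp continuous_projIcc) (fun t => (projIcc (0:ℝ) 1 zero_le_one t).2)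
      h0 := fun e => by rw [ag e 0 (by simp), hstart]
      h1 := fun e => by rw [ag e 1 (by simp), hend]
      hv := fun e t ht v => by rw [ag e t (sub t ht)]; exact hvertex e t ht v
      hs := by
        intro e s hs t ht h
        rw [ag e s (sub s hs), ag e t (sub t ht)] at h
        rcases lt_trichotomy s t with hl | hl | hl
        · refine absurd h (hsimple e s (sub s hs) t (sub t ht) hl ?_)
          intro hh
          exact hs.1.ne' (congrArg Prod.fst hh)
        · exact hl
        · refine absurd h.symm (hsimple e t (sub t ht) s (sub s hs) hl ?_)
          intro hh
          exact ht.1.ne' (congrArg Prod.fst hh)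
      hp := by
        intro e f hef s hs t ht
        rw [ag e s (sub s hs), ag f t (sub t ht)]
        exact hplane e f hef s hs t ht
      hav := by
        intro e t u h
        have hx := (projIcc (0:ℝ) 1 zero_le_one t).2
        simp only [γ'] at h
        generalize ((projIcc (0:ℝ) 1 zero_le_one t : Icc (0:ℝ) 1) : ℝ) = x at h hx
        rcases hx.1.eq_or_lt with h0 | h0
        · subst h0
          rw [hstart] at h
          exact Or.inl (hφ h.symm)
        · rcases hx.2.eq_or_lt with h1 | h1
          · subst h1
            rw [hend] at h
            exact Or.inr (hφ h.symm)
          · exact absurd h (hvertex e x ⟨h0, h1⟩ u) }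
  refine A.bound hn (fun e f hef he h => (hnonhom e f hef).1 he ?_)
    (fun e f hef he h => (hnonhom e f hef).2 he ?_)
  · exact NH.EdgeHomotopic_congr (ag e) (ag f) h
  · refine NH.EdgeHomotopic_congr (ag e) (fun x hx => ag f (1 - x) ?_) h
    constructor <;> linarith [hx.1, hx.2]
end
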